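/- arXiv:1401.0041 — 3 statements merged into one kernel-verified Lean document; each statement's English description precedes it below -/
import Mathlib

section
/- Let X be a locally connected continuum contained in the Euclidean plane ℝ². If X has the periodic point property, then X does not separate the plane, i.e., ℝ² ∖ X is connected. -/
/-- A space has the fixed point property: every continuous self-map has a fixed point. -/
def HasFPP (Y : Type*) [TopologicalSpace Y] : Prop :=
  ∀ f : Y → Y, Continuous f → ∃ x, f x = x

/-- A space has the periodic point property: every continuous self-map has a periodic point. -/
def HasPPP (Y : Type*) [TopologicalSpace Y] : Prop :=
  ∀ f : Y → Y, Continuous f → ∃ x, ∃ n : ℕ, 1 ≤ n ∧ f^[n] x = x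

/-- Local fixed point property: there is an open basis whose members have closures with FPP. -/
def HasLFPP (Y : Type*) [TopologicalSpace Y] : Prop :=
  ∃ 𝓑 : Set (Set Y), TopologicalSpace.IsTopologicalBasis 𝓑 ∧
    ∀ B ∈ 𝓑, HasFPP ↥(closure B)

/-- Weak local fixed point property. -/
def HasWLFPP (Y : Type*) [TopologicalSpace Y] : Prop :=
  ∃ 𝓑 : Set (Set Y), TopologicalSpace.IsTopologicalBasis 𝓑 ∧
    ∀ B ∈ 𝓑, ∀ f : Y → Y, Continuous f → f '' closure B ⊆ B → ∃ x ∈ B, f x = x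

/-- Local periodic point property. -/
def HasLPPP (Y : Type*) [TopologicalSpace Y] : Prop :=
  ∃ 𝓑 : Set (Set Y), TopologicalSpace.IsTopologicalBasis 𝓑 ∧
    ∀ B ∈ 𝓑, HasPPP ↥(closure B)

/-- Weak local periodic point property. -/
def HasWLPPP (Y : Type*) [TopologicalSpace Y] : Prop :=
  ∃ 𝓑 : Set (Set Y), TopologicalSpace.IsTopologicalBasis 𝓑 ∧
    ∀ B ∈ 𝓑, ∀ f : Y → Y, Continuous f → f '' closure B ⊆ B →
      ∃ x ∈ B, ∃ n : ℕ, 1 ≤ n ∧ f^[n] x = x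

/-- A subset is a simple closed curve if it is homeomorphic to the unit circle. -/
def IsSimpleClosedCurve {α : Type*} [TopologicalSpace α] (S : Set α) : Prop :=
  Nonempty (↥S ≃ₜ ↥(Metric.sphere (0 : EuclideanSpace ℝ (Fin 2)) 1))

/-- Covering dimension at most `n`: every finite open cover admits an open shrinking
of order at most `n + 1`. -/
def CoveringDimLE (Y : Type*) [TopologicalSpace Y] (n : ℕ) : Prop :=
  ∀ (ι : Type) [Finite ι] (U : ι → Set Y), (∀ i, IsOpen (U i)) → (⋃ i, U i) = Set.univ →
    ∃ V : ι → Set Y, (∀ i, IsOpen (V i)) ∧ (∀ i, V i ⊆ U i) ∧ (⋃ i, V i) = Set.univ ∧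
      ∀ y : Y, {i | y ∈ V i}.ncard ≤ n + 1

/-- A dendrite: a locally connected (metric) continuum containing no simple closed curve. -/
def IsDendrite {α : Type*} [TopologicalSpace α] (D : Set α) : Prop :=
  IsCompact D ∧ IsConnected D ∧ LocallyConnectedSpace ↥D ∧ ∀ S ⊆ D, ¬ IsSimpleClosedCurve S

/-- A local dendrite: every point has a closed neighborhood which is a dendrite. -/
def IsLocalDendrite (Y : Type*) [TopologicalSpace Y] : Prop :=
  ∀ y : Y, ∃ N : Set Y, N ∈ nhds y ∧ IsClosed N ∧ IsDendrite N

open Set Filter Topology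

/-- Dependent choice. -/
lemma aux_seq {α : Type*} (P : ℕ → α → Prop) (R : ℕ → α → α → Prop) (h0 : ∃ a, P 0 a)
    (hs : ∀ n a, P n a → ∃ b, P (n + 1) b ∧ R n a b) :
    ∃ s : ℕ → α, ∀ n, P n (s n) ∧ R n (s n) (s (n + 1)) := by
  obtain ⟨a, ha⟩ := h0
  choose! g hg using hs
  let s : ℕ → α := fun n => Nat.rec a (fun n x => g n x) n
  have hP : ∀ n, P n (s n) := by
    intro n
    induction n with
    | zero => exact ha
    | succ n ih => exact (hg n _ ih).1
  exact ⟨s, fun n => ⟨hP n, (hg n _ (hP n)).2⟩⟩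

/-- Chains of small connected open sets inside a connected open set. -/
lemma aux_chain {Y : Type*} [MetricSpace Y] [LocallyConnectedSpace Y] {V : Set Y}
    (hVo : IsOpen V) (hV : IsPreconnected V) {x y : Y} (hx : x ∈ V) (hy : y ∈ V)
    {ε : ℝ} (hε : 0 < ε) :
    ∃ (n : ℕ) (p : ℕ → Y) (W : ℕ → Set Y), p 0 = x ∧ (∀ i, n ≤ i → p i = y) ∧
      ∀ i, IsOpen (W i) ∧ IsPreconnected (W i) ∧ W i ⊆ V ∧ p i ∈ W i ∧ p (i + 1) ∈ W i ∧
        ∀ u ∈ W i, ∀ v ∈ W i, dist u v ≤ ε := by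
  let R : Y → Y → Prop := fun u v => ∃ W : Set Y, IsOpen W ∧ IsPreconnected W ∧ W ⊆ V ∧ u ∈ W ∧
    v ∈ W ∧ ∀ u ∈ W, ∀ v ∈ W, dist u v ≤ ε
  have hloc : ∀ u ∈ V, ∃ W : Set Y, IsOpen W ∧ IsPreconnected W ∧ W ⊆ V ∧ u ∈ W ∧
      ∀ u ∈ W, ∀ v ∈ W, dist u v ≤ ε := by
    intro u hu
    obtain ⟨W, hW, hWo, huW, hWc⟩ := locallyConnectedSpace_iff_subsets_isOpen_isConnected.1
      inferInstance u (V ∩ Metric.ball u (ε / 2))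
      (Filter.inter_mem (hVo.mem_nhds hu) (Metric.ball_mem_nhds _ (by positivity)))
    refine ⟨W, hWo, hWc.isPreconnected, fun z hz => (hW hz).1, huW, fun a ha b hb => ?_⟩
    have h1 := (hW ha).2
    have h2 := (hW hb).2
    rw [Metric.mem_ball] at h1 h2
    linarith [dist_triangle_right a b u]
  have hR : Relation.ReflTransGen R x y := by
    refine IsPreconnected.induction₂' hV (fun u v => Relation.ReflTransGen R u v) ?_ ?_ hx hy
    · intro u hu
      obtain ⟨W, h1, h2, h3, h4, h5⟩ := hloc u hu
      filter_upwards [mem_nhdsWithin_of_mem_nhds (h1.mem_nhds h4)] with v hv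
      exact ⟨.single ⟨W, h1, h2, h3, h4, hv, h5⟩, .single ⟨W, h1, h2, h3, hv, h4, h5⟩⟩
    · intro u v w _ _ _ huv hvw
      exact huv.trans hvw
  induction hR using Relation.ReflTransGen.head_induction_on with
  | refl =>
    obtain ⟨W, h1, h2, h3, h4, h5⟩ := hloc y hy
    exact ⟨0, fun _ => y, fun _ => W, rfl, fun _ _ => rfl, fun _ => ⟨h1, h2, h3, h4, h4, h5⟩⟩
  | head h _ ih =>
    obtain ⟨W, h1, h2, h3, h4, h5, h6⟩ := h
    obtain ⟨n, p, W', p0, pn, hp⟩ := ih (h3 h5)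
    rename_i a c _
    refine ⟨n + 1, fun i => Nat.casesOn i a p, fun i => Nat.casesOn i W W', rfl, ?_, ?_⟩
    · intro i hi
      obtain ⟨j, rfl⟩ : ∃ j, i = j + 1 := ⟨i - 1, by omega⟩
      exact pn j (by omega)
    · intro i
      cases i with
      | zero => exact ⟨h1, h2, h3, h4, by simpa [p0] using h5, h6⟩
      | succ j => exact hp j

/-- Refinement step: `L = (M, p, W)`. -/
def AuxGood {Y : Type*} [MetricSpace Y] (a b : Y) (ε : ℝ) (L : ℕ × (ℕ → Y) × (ℕ → Set Y)) : Prop :=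
  0 < L.1 ∧ L.2.1 0 = a ∧ L.2.1 L.1 = b ∧ ∀ i < L.1, IsOpen (L.2.2 i) ∧ IsPreconnected (L.2.2 i) ∧
    L.2.1 i ∈ L.2.2 i ∧ L.2.1 (i + 1) ∈ L.2.2 i ∧ ∀ u ∈ L.2.2 i, ∀ v ∈ L.2.2 i, dist u v ≤ ε

lemma aux_refine {Y : Type*} [MetricSpace Y] [LocallyConnectedSpace Y] {a b : Y} {ε δ : ℝ}
    (hδ : 0 < δ) (L : ℕ × (ℕ → Y) × (ℕ → Set Y)) (hL : AuxGood a b ε L) :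
    ∃ L' : ℕ × (ℕ → Y) × (ℕ → Set Y), AuxGood a b δ L' ∧
      ∃ N : ℕ, 0 < N ∧ L'.1 = L.1 * N ∧ ∀ j < L'.1, L'.2.1 j ∈ L.2.2 (j / N) := by
  obtain ⟨M, p, W⟩ := L
  obtain ⟨hM, hp0, hpM, hW⟩ := hL
  simp only at hM hp0 hpM hW
  have h : ∀ i, ∃ (n : ℕ) (q : ℕ → Y) (Z : ℕ → Set Y), q 0 = p i ∧ (i < M →
      (∀ r, n ≤ r → q r = p (i + 1)) ∧ ∀ r, IsOpen (Z r) ∧ IsPreconnected (Z r) ∧ Z r ⊆ W i ∧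
        q r ∈ Z r ∧ q (r + 1) ∈ Z r ∧ ∀ u ∈ Z r, ∀ v ∈ Z r, dist u v ≤ δ) := by
    intro i
    by_cases hi : i < M
    · obtain ⟨h1, h2, h3, h4, h5⟩ := hW i hi
      obtain ⟨n, q, Z, hq0, hqn, hZ⟩ := aux_chain h1 h2 h3 h4 hδ
      exact ⟨n, q, Z, hq0, fun _ => ⟨hqn, hZ⟩⟩
    · exact ⟨0, fun _ => p i, fun _ => ∅, rfl, fun h => absurd h hi⟩
  choose n q Z hq0 hZ using h
  obtain ⟨N, hN0, hN⟩ : ∃ N, 0 < N ∧ ∀ i < M, n i ≤ N := by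
    refine ⟨(Finset.range M).sup n + 1, by omega, fun i hi => ?_⟩
    have := Finset.le_sup (f := n) (Finset.mem_range.2 hi)
    omega
  have hdiv : ∀ j < M * N, j / N < M := fun j hj => Nat.div_lt_of_lt_mul (by rwa [mul_comm])
  refine ⟨⟨M * N, fun j => q (j / N) (j % N), fun j => Z (j / N) (j % N)⟩,
    ⟨by positivity, ?_, ?_, ?_⟩, N, hN0, rfl, ?_⟩
  · simp [hq0, hp0]
  · simp [hN0, hq0, hpM]
  · intro j hj
    simp only at hj ⊢
    obtain ⟨h1, h2⟩ := hZ (j / N) (hdiv j hj)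
    obtain ⟨h3, h4, h5, h6, h7, h8⟩ := h2 (j % N)
    refine ⟨h3, h4, h6, ?_, h8⟩
    have hlt := Nat.mod_lt j hN0
    have hdm := Nat.div_add_mod j N
    by_cases hr : j % N + 1 < N
    · have e1 : (j + 1) / N = j / N := by
        rw [Nat.div_eq_iff hN0]
        constructor <;> [skip; skip] <;> rw [mul_comm] <;> omega
      have e2 : (j + 1) % N = j % N + 1 := by
        have := Nat.div_add_mod (j + 1) N
        rw [e1] at this
        omega
      rw [e1, e2]; exact h7
    · have e : j + 1 = N * (j / N + 1) := by rw [mul_add]; omega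
      have e1 : (j + 1) / N = j / N + 1 := by rw [e, Nat.mul_div_cancel_left _ hN0]
      have e2 : (j + 1) % N = 0 := by rw [e, Nat.mul_mod_right]
      rw [e1, e2, hq0, ← h1 (j % N + 1) (by have := hN _ (hdiv j hj); omega)]
      exact h7
  · intro j hj
    exact ((hZ (j / N) (hdiv j hj)).2 (j % N)).2.2.1 ((hZ (j / N) (hdiv j hj)).2 (j % N)).2.2.2.1

/-- Connected, locally connected, complete metric spaces are path connected. -/
lemma aux_path {Y : Type*} [MetricSpace Y] [CompleteSpace Y] [LocallyConnectedSpace Y]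
    [PreconnectedSpace Y] (a b : Y) : ∃ A : ℝ → Y, Continuous A ∧ A 0 = a ∧ A 1 = b := by
  obtain ⟨s, hs⟩ := aux_seq (fun n L => AuxGood a b ((1 / 2 : ℝ) ^ n) L)
    (fun n L L' => ∃ N : ℕ, 0 < N ∧ L'.1 = L.1 * N ∧ ∀ j < L'.1, L'.2.1 j ∈ L.2.2 (j / N))
    (by
      obtain ⟨n, p, W, h0, hn, hW⟩ := aux_chain (ε := 1) isOpen_univ isPreconnected_univ
        (mem_univ a) (mem_univ b) one_pos
      refine ⟨⟨n + 1, p, W⟩, by simp, h0, hn _ (by simp), fun i _ => ?_⟩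
      obtain ⟨h1, h2, h3, h4, h5, h6⟩ := hW i
      exact ⟨h1, h2, h4, h5, by simpa using h6⟩)
    (fun n L hL => aux_refine (by positivity) L hL)
  let f : ℕ → ℝ → Y := fun n t => (s n).2.1 ⌊t * (s n).1⌋₊
  have hMpos : ∀ n, (0 : ℝ) < (s n).1 := fun n => by exact_mod_cast (hs n).1.1
  have hlt : ∀ n, ∀ t : ℝ, 0 ≤ t → t < 1 → ⌊t * (s n).1⌋₊ < (s n).1 := by
    intro n t h0 h1
    rw [Nat.floor_lt (by have := hMpos n; positivity)]
    nlinarith [hMpos n]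
  have hstep : ∀ t ∈ Icc (0 : ℝ) 1, ∀ n, dist (f n t) (f (n + 1) t) ≤ 1 * (1 / 2 : ℝ) ^ n := by
    intro t ht n
    rw [one_mul]
    obtain ⟨hg, N, hN0, hN, hj⟩ := hs n
    rcases lt_or_eq_of_le ht.2 with h1 | rfl
    · have h2 := hlt n t ht.1 h1
      obtain ⟨_, _, h5, _, h7⟩ := hg.2.2.2 _ h2
      refine h7 _ h5 _ ?_
      have := hj _ (hlt (n + 1) t ht.1 h1)
      have e : ⌊t * (s (n + 1)).1⌋₊ / N = ⌊t * (s n).1⌋₊ := by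
        rw [← Nat.floor_div_natCast, hN]
        push_cast
        rw [← mul_assoc, mul_div_cancel_right₀ _ (by positivity)]
      rw [e] at this
      exact this
    · simp only [f, one_mul, Nat.floor_natCast]
      rw [hg.2.2.1, (hs (n + 1)).1.2.2.1]
      simp
  have hlim : ∀ t ∈ Icc (0 : ℝ) 1, ∃ y, Tendsto (fun n => f n t) atTop (𝓝 y) := fun t ht =>
    cauchySeq_tendsto_of_complete
      (cauchySeq_of_le_geometric (1 / 2 : ℝ) 1 (by norm_num) (hstep t ht))
  have : Nonempty Y := ⟨a⟩
  choose! g hg using hlim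
  have hgd : ∀ t ∈ Icc (0 : ℝ) 1, ∀ n, dist (f n t) (g t) ≤ 2 * (1 / 2 : ℝ) ^ n := by
    intro t ht n
    have := dist_le_of_le_geometric_of_tendsto (1 / 2 : ℝ) 1 (by norm_num) (hstep t ht) (hg t ht) n
    refine this.trans (le_of_eq ?_)
    ring
  have hclose : ∀ n, ∀ t ∈ Icc (0 : ℝ) 1, ∀ u ∈ Icc (0 : ℝ) 1, t ≤ u → u - t < 1 / (s n).1 →
      dist (f n t) (f n u) ≤ (1 / 2 : ℝ) ^ n := by
    intro n t ht u hu htu hd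
    have hM := hMpos n
    rcases lt_or_eq_of_le ht.2 with h1 | rfl
    · have h2 := hlt n t ht.1 h1
      obtain ⟨_, _, h5, h6, h7⟩ := (hs n).1.2.2.2 _ h2
      refine h7 _ h5 _ ?_
      have hle : ⌊t * (s n).1⌋₊ ≤ ⌊u * (s n).1⌋₊ := Nat.floor_mono (by gcongr)
      have hle2 : ⌊u * (s n).1⌋₊ < ⌊t * (s n).1⌋₊ + 2 := by
        rw [Nat.floor_lt (by have := hu.1; positivity)]
        have := Nat.lt_floor_add_one (t * (s n).1)
        rw [lt_div_iff₀ hM] at hd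
        push_cast
        nlinarith
      have : ⌊u * (s n).1⌋₊ = ⌊t * (s n).1⌋₊ ∨ ⌊u * (s n).1⌋₊ = ⌊t * (s n).1⌋₊ + 1 := by omega
      simp only [f]
      rcases this with h | h <;> rw [h] <;> assumption
    · have : u = 1 := le_antisymm hu.2 htu
      subst this
      simp
  have hgc : ContinuousOn g (Icc 0 1) := by
    rw [Metric.continuousOn_iff]
    intro t ht ε hε
    obtain ⟨n, hn⟩ := exists_pow_lt_of_lt_one (show 0 < ε / 5 by positivity)
      (show (1 / 2 : ℝ) < 1 by norm_num)
    refine ⟨1 / (s n).1, by have := hMpos n; positivity, fun u hu hd => ?_⟩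
    have h1 := hgd t ht n
    have h2 := hgd u hu n
    have h3 : dist (f n u) (f n t) ≤ (1 / 2 : ℝ) ^ n := by
      rw [Real.dist_eq] at hd
      rcases le_total t u with h | h
      · rw [dist_comm]
        exact hclose n t ht u hu h (lt_of_le_of_lt (le_abs_self _) hd)
      · refine hclose n u hu t ht h (lt_of_le_of_lt ?_ hd)
        rw [abs_sub_comm]; exact le_abs_self _
    have h4 := dist_triangle4 (g u) (f n u) (f n t) (g t)
    rw [dist_comm (g u) (f n u)] at h4
    linarith
  refine ⟨fun t => g (projIcc 0 1 zero_le_one t), ?_, ?_, ?_⟩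
  · exact hgc.comp_continuous (by fun_prop) (fun t => (projIcc (0 : ℝ) 1 zero_le_one t).2)
  · simp only [projIcc_left]
    refine tendsto_nhds_unique (hg 0 (by simp)) ?_
    have : ∀ n, f n 0 = a := fun n => by simpa [f] using (hs n).1.2.1
    simp [this]
  · simp only [projIcc_right]
    refine tendsto_nhds_unique (hg 1 (by simp)) ?_
    have : ∀ n, f n 1 = b := fun n => by simpa [f] using (hs n).1.2.2.1
    simp [this]

/-- All gaps of `F` are collapsed by `A`. -/
def AuxGap {Y : Type*} (A : ℝ → Y) (F : Set ℝ) : Prop :=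
  F ⊆ Icc 0 1 ∧ IsClosed F ∧ (0 : ℝ) ∈ F ∧ (1 : ℝ) ∈ F ∧
    ∀ s ∈ F, ∀ t ∈ F, s < t → (∀ r ∈ F, s < r → r < t → False) → A s = A t

lemma aux_gap_chain {Y : Type*} [MetricSpace Y] {A : ℝ → Y} (hA : Continuous A)
    {c : Set (Set ℝ)} (hc : ∀ F ∈ c, AuxGap A F) (hch : IsChain (· ⊆ ·) c) (hne : c.Nonempty) :
    AuxGap A (⋂₀ c) := by
  obtain ⟨F0, hF0⟩ := hne
  refine ⟨(sInter_subset_of_mem hF0).trans (hc _ hF0).1, isClosed_sInter fun F hF => (hc F hF).2.1,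
    fun F hF => (hc F hF).2.2.1, fun F hF => (hc F hF).2.2.2.1, ?_⟩
  intro s hs t ht hst hgap
  refine eq_of_forall_dist_le fun ε hε => ?_
  obtain ⟨δ1, hδ1, h1⟩ := Metric.continuous_iff.1 hA s (ε / 2) (by positivity)
  obtain ⟨δ2, hδ2, h2⟩ := Metric.continuous_iff.1 hA t (ε / 2) (by positivity)
  obtain ⟨δ, hδ, hd1, hd2, hd3⟩ : ∃ δ, 0 < δ ∧ δ < δ1 ∧ δ < δ2 ∧ δ < (t - s) / 2 := by
    have : 0 < min δ1 (min δ2 ((t - s) / 2)) := by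
      refine lt_min hδ1 (lt_min hδ2 (by linarith))
    refine ⟨min δ1 (min δ2 ((t - s) / 2)) / 2, by positivity, ?_, ?_, ?_⟩
    · have := min_le_left δ1 (min δ2 ((t - s) / 2)); linarith
    · have := (min_le_right δ1 (min δ2 ((t - s) / 2))).trans (min_le_left _ _); linarith
    · have := (min_le_right δ1 (min δ2 ((t - s) / 2))).trans (min_le_right _ _); linarith
  obtain ⟨F, hF, hFK⟩ : ∃ F ∈ c, Icc (s + δ) (t - δ) ∩ F = ∅ := by
    have : Nonempty c := ⟨⟨F0, hF0⟩⟩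
    obtain ⟨F, hF⟩ := (isCompact_Icc (a := s + δ) (b := t - δ)).elim_directed_family_closed
      (fun F : c => (F : Set ℝ)) (fun F => (hc F F.2).2.1) (by
        ext r
        simp only [mem_inter_iff, mem_iInter, mem_empty_iff_false, iff_false, not_and]
        intro hr hr2
        exact hgap r (fun G hG => hr2 ⟨G, hG⟩) (by linarith [hr.1]) (by linarith [hr.2]))
      (by
        intro F G
        rcases hch.total F.2 G.2 with h | h
        · exact ⟨F, subset_rfl, h⟩
        · exact ⟨G, h, subset_rfl⟩)
    exact ⟨F, F.2, hF⟩
  obtain ⟨_, hFc, _, _, hFg⟩ := hc F hF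
  obtain ⟨s', ⟨hs'F, hs'1⟩, hs'2⟩ := ((isCompact_Icc (a := s) (b := s + δ)).inter_left
    hFc).exists_isGreatest ⟨s, hs F hF, by constructor <;> linarith⟩
  obtain ⟨t', ⟨ht'F, ht'1⟩, ht'2⟩ := ((isCompact_Icc (a := t - δ) (b := t)).inter_left
    hFc).exists_isLeast ⟨t, ht F hF, by constructor <;> linarith⟩
  have hAe : A s' = A t' := by
    refine hFg s' hs'F t' ht'F (by linarith [hs'1.2, ht'1.1]) fun r hr hsr hrt => ?_
    by_cases c1 : r ≤ s + δ
    · have := hs'2 ⟨hr, by linarith [hs'1.1], c1⟩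
      linarith
    by_cases c2 : t - δ ≤ r
    · have := ht'2 ⟨hr, c2, by linarith [ht'1.2]⟩
      linarith
    have : r ∈ Icc (s + δ) (t - δ) ∩ F := ⟨⟨by linarith, by linarith⟩, hr⟩
    rw [hFK] at this
    exact this
  have e1 := h1 s' (by rw [Real.dist_eq, abs_lt]; constructor <;> linarith [hs'1.1, hs'1.2])
  have e2 := h2 t' (by rw [Real.dist_eq, abs_lt]; constructor <;> linarith [ht'1.1, ht'1.2])
  rw [hAe] at e1
  linarith [dist_triangle_left (A s) (A t) (A t')]

lemma aux_minimal {Y : Type*} [MetricSpace Y] {A : ℝ → Y} (hA : Continuous A) :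
    ∃ F, AuxGap A F ∧ ∀ s ∈ F, ∀ t ∈ F, s < t → A s = A t →
      ∀ r ∈ F, s < r → r < t → False := by
  obtain ⟨F, hF⟩ := zorn_superset {F | AuxGap A F} (by
    intro c hc hch
    rcases c.eq_empty_or_nonempty with rfl | hne
    · refine ⟨Icc 0 1, ⟨subset_rfl, isClosed_Icc, by simp, by simp, ?_⟩, by simp⟩
      intro s hs t ht hst hgap
      exact (hgap ((s + t) / 2) ⟨by linarith [hs.1], by linarith [ht.2]⟩ (by linarith)
        (by linarith)).elim
    · exact ⟨⋂₀ c, aux_gap_chain hA hc hch hne, fun s hs => sInter_subset_of_mem hs⟩)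
  obtain ⟨h1, h2, h3, h4, h5⟩ := hF.prop
  refine ⟨F, hF.prop, fun s hs t ht hst hAe r hr hsr hrt => ?_⟩
  have hG : AuxGap A (F \ Ioo s t) := by
    refine ⟨sdiff_subset.trans h1, h2.sdiff isOpen_Ioo, ⟨h3, ?_⟩, ⟨h4, ?_⟩, ?_⟩
    · intro h; linarith [h.1, (h1 hs).1]
    · intro h; linarith [h.2, (h1 ht).2]
    · intro c hc d hd hcd hgap
      by_cases hgap' : ∀ r ∈ F, c < r → r < d → False
      · exact h5 c hc.1 d hd.1 hcd hgap'
      · push Not at hgap'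
        obtain ⟨e, heF, hce, hed, -⟩ := hgap'
        have he : e ∈ Ioo s t := by
          by_contra hne
          exact hgap e ⟨heF, hne⟩ hce hed
        have hs' : s ∈ F \ Ioo s t := ⟨hs, fun h => lt_irrefl _ h.1⟩
        have ht' : t ∈ F \ Ioo s t := ⟨ht, fun h => lt_irrefl _ h.2⟩
        have hcs : c ≤ s := by
          by_contra h
          exact hc.2 ⟨by linarith, by linarith [he.2]⟩
        have htd : t ≤ d := by
          by_contra h
          exact hd.2 ⟨by linarith [he.1], by linarith⟩
        have e1 : c = s := by
          by_contra h
          exact hgap s hs' (lt_of_le_of_ne hcs h) (by linarith)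
        have e2 : t = d := by
          by_contra h
          exact hgap t ht' (by linarith) (lt_of_le_of_ne htd h)
        rw [e1, ← e2, hAe]
  exact (hF.le_of_le hG sdiff_subset hr).2 ⟨hsr, hrt⟩

/-- Every path can be replaced by a monotone path. -/
lemma aux_monotone_path {Y : Type*} [MetricSpace Y] {A : ℝ → Y} (hA : Continuous A) :
    ∃ B : ℝ → Y, Continuous B ∧ B 0 = A 0 ∧ B 1 = A 1 ∧
      ∀ s r t, s ≤ r → r ≤ t → B s = B t → B r = B s := by
  obtain ⟨F, ⟨hF1, hFc, h0, h1, hgap⟩, hmin⟩ := aux_minimal hA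
  have hρ : ∀ t ∈ Icc (0 : ℝ) 1, ∃ x, IsGreatest (F ∩ Icc 0 t) x := fun t ht =>
    (isCompact_Icc.inter_left hFc).exists_isGreatest ⟨0, h0, le_rfl, ht.1⟩
  have hl : ∀ t ∈ Icc (0 : ℝ) 1, ∃ x, IsLeast (F ∩ Icc t 1) x := fun t ht =>
    (isCompact_Icc.inter_left hFc).exists_isLeast ⟨1, h1, ht.2, le_rfl⟩
  choose! ρ hρ using hρ
  choose! l hl using hl
  have hAeq : ∀ t ∈ Icc (0 : ℝ) 1, A (ρ t) = A (l t) := by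
    intro t ht
    obtain ⟨⟨a1, a2⟩, a3⟩ := hρ t ht
    obtain ⟨⟨b1, b2⟩, b3⟩ := hl t ht
    rcases eq_or_lt_of_le (a2.2.trans b2.1) with h | h
    · rw [h]
    · refine hgap _ a1 _ b1 h fun r hr hr1 hr2 => ?_
      rcases le_total r t with c | c
      · linarith [a3 ⟨hr, (hF1 hr).1, c⟩]
      · linarith [b3 ⟨hr, c, (hF1 hr).2⟩]
  have hρmono : ∀ s ∈ Icc (0 : ℝ) 1, ∀ t ∈ Icc (0 : ℝ) 1, s ≤ t → ρ s ≤ ρ t := by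
    intro s hs t ht hst
    obtain ⟨⟨a1, a2⟩, a3⟩ := hρ s hs
    exact (hρ t ht).2 ⟨a1, a2.1, a2.2.trans hst⟩
  have hkey : ∀ s ∈ Icc (0 : ℝ) 1, ∀ t ∈ Icc (0 : ℝ) 1, s ≤ t →
      ρ s = ρ t ∨ ∃ x ∈ Icc s t, ∃ y ∈ Icc s t, A (ρ s) = A x ∧ A (ρ t) = A y := by
    intro s hs t ht hst
    obtain ⟨⟨a1, a2⟩, a3⟩ := hρ t ht
    by_cases c : ρ t ≤ s
    · exact Or.inl (le_antisymm (hρmono s hs t ht hst) ((hρ s hs).2 ⟨a1, a2.1, c⟩))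
    · push Not at c
      have h := (hl s hs).2 ⟨a1, c.le, (hF1 a1).2⟩
      exact Or.inr ⟨l s, ⟨(hl s hs).1.2.1, h.trans a2.2⟩, ρ t, ⟨c.le, a2.2⟩, hAeq s hs, rfl⟩
  have hcont : ContinuousOn (fun t => A (ρ t)) (Icc 0 1) := by
    have hu : UniformContinuousOn A (Icc 0 1) :=
      isCompact_Icc.uniformContinuousOn_of_continuous hA.continuousOn
    rw [Metric.uniformContinuousOn_iff] at hu
    rw [Metric.continuousOn_iff]
    have main : ∀ ε > 0, ∃ δ > 0, ∀ s ∈ Icc (0 : ℝ) 1, ∀ t ∈ Icc (0 : ℝ) 1, s ≤ t →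
        dist s t < δ → dist (A (ρ s)) (A (ρ t)) < ε := by
      intro ε hε
      obtain ⟨δ, hδ, h⟩ := hu ε hε
      refine ⟨δ, hδ, fun s hs t ht hst hd => ?_⟩
      rcases hkey s hs t ht hst with h' | ⟨x, hx, y, hy, e1, e2⟩
      · rw [h']; simpa using hε
      · rw [e1, e2]
        refine h x (Icc_subset_Icc hs.1 ht.2 hx) y (Icc_subset_Icc hs.1 ht.2 hy) ?_
        rw [Real.dist_eq, abs_lt] at *
        constructor <;> linarith [hx.1, hx.2, hy.1, hy.2]
    intro t ht ε hε
    obtain ⟨δ, hδ, h⟩ := main ε hε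
    refine ⟨δ, hδ, fun s hs hd => ?_⟩
    rcases le_total s t with c | c
    · exact h s hs t ht c hd
    · rw [dist_comm] at hd ⊢
      exact h t ht s hs c hd
  refine ⟨fun t => A (ρ (projIcc 0 1 zero_le_one t)), ?_, ?_, ?_, ?_⟩
  · exact hcont.comp_continuous (by fun_prop) (fun t => (projIcc (0 : ℝ) 1 zero_le_one t).2)
  · have := (hρ 0 (by simp)).1.2
    simp only [Icc_self, mem_singleton_iff] at this
    simp [this]
  · have : ρ 1 = 1 := le_antisymm (hρ 1 (by simp)).1.2.2 ((hρ 1 (by simp)).2 ⟨h1, by simp⟩)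
    simp [this]
  · intro s r t hsr hrt hB
    have p1 : (projIcc (0 : ℝ) 1 zero_le_one s : ℝ) ≤ projIcc 0 1 zero_le_one r :=
      monotone_projIcc _ hsr
    have p2 : (projIcc (0 : ℝ) 1 zero_le_one r : ℝ) ≤ projIcc 0 1 zero_le_one t :=
      monotone_projIcc _ hrt
    simp only at hB ⊢
    have q1 := (projIcc (0 : ℝ) 1 zero_le_one s).2
    have q2 := (projIcc (0 : ℝ) 1 zero_le_one r).2
    have q3 := (projIcc (0 : ℝ) 1 zero_le_one t).2
    generalize (projIcc (0 : ℝ) 1 zero_le_one s : ℝ) = s' at *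
    generalize (projIcc (0 : ℝ) 1 zero_le_one r : ℝ) = r' at *
    generalize (projIcc (0 : ℝ) 1 zero_le_one t : ℝ) = t' at *
    have m1 := hρmono s' q1 r' q2 p1
    have m2 := hρmono r' q2 t' q3 p2
    rcases eq_or_lt_of_le m1 with c | c
    · rw [c]
    rcases eq_or_lt_of_le m2 with d | d
    · rw [d, hB]
    exact (hmin _ (hρ s' q1).1.1 _ (hρ t' q3).1.1 (c.trans d) hB _ (hρ r' q2).1.1 c d).elim

/-- A strictly detecting monotone function for a monotone path. -/
lemma aux_detect {Y : Type*} [MetricSpace Y] {B : ℝ → Y} (hB : Continuous B)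
    (hmono : ∀ s r t, s ≤ r → r ≤ t → B s = B t → B r = B s) :
    ∃ m : ℝ → ℝ, Continuous m ∧ Monotone m ∧ ∀ s t, s ≤ t → (m s = m t ↔ B s = B t) := by
  let φ : ℝ → ℝ → ℝ := fun q r => min (dist (B r) (B q)) 1
  have hφ0 : ∀ q r, 0 ≤ φ q r := fun q r => le_min dist_nonneg zero_le_one
  have hφ1 : ∀ q r, φ q r ≤ 1 := fun q r => min_le_right _ _
  let w : ℝ → ℝ → ℝ := fun q t => sSup ((fun θ => φ q (q + θ * max (t - q) 0)) '' Icc (0 : ℝ) 1)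
  have hwc : ∀ q, Continuous (w q) := by
    intro q
    refine isCompact_Icc.continuous_sSup (f := fun t θ => φ q (q + θ * max (t - q) 0)) ?_
    simp only [φ, Function.HasUncurry.uncurry, id]
    fun_prop
  have hbdd : ∀ q t, BddAbove ((fun θ => φ q (q + θ * max (t - q) 0)) '' Icc (0 : ℝ) 1) := by
    intro q t
    refine ⟨1, ?_⟩
    rintro _ ⟨θ, _, rfl⟩
    exact hφ1 _ _
  have hle : ∀ q t r, q ≤ r → r ≤ max q t → φ q r ≤ w q t := by
    intro q t r h1 h2
    refine le_csSup (hbdd q t) ?_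
    rcases le_or_gt t q with c | c
    · rw [max_eq_left c] at h2
      refine ⟨0, by simp, ?_⟩
      have : r = q := le_antisymm h2 h1
      simp [this]
    · rw [max_eq_right c.le] at h2
      have hp : 0 < t - q := by linarith
      refine ⟨(r - q) / (t - q), ⟨by apply div_nonneg <;> linarith, ?_⟩, ?_⟩
      · rw [div_le_one hp]; linarith
      · simp only
        rw [max_eq_left hp.le, div_mul_cancel₀ _ hp.ne']
        congr 1; ring
  have hub : ∀ q t c, (∀ r, q ≤ r → r ≤ max q t → φ q r ≤ c) → w q t ≤ c := by
    intro q t c h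
    refine csSup_le ⟨_, 0, by simp, rfl⟩ ?_
    rintro _ ⟨θ, hθ, rfl⟩
    have h0 : 0 ≤ max (t - q) 0 := le_max_right _ _
    have h1 : max q t = q + max (t - q) 0 := by
      rw [← max_add_add_left]; simp [max_comm]
    apply h
    · nlinarith [hθ.1]
    · rw [h1]; nlinarith [hθ.2]
  have hw0 : ∀ q t, 0 ≤ w q t := fun q t =>
    (hφ0 q q).trans (hle q t q le_rfl (le_max_left _ _))
  have hw1 : ∀ q t, w q t ≤ 1 := fun q t => hub q t 1 fun r _ _ => hφ1 q r
  have hwm : ∀ q, Monotone (w q) := fun q s t hst =>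
    hub q s _ fun r h1 h2 => hle q t r h1 (h2.trans (max_le_max le_rfl hst))
  let x : ℕ → ℝ := TopologicalSpace.denseSeq ℝ
  have hx : DenseRange x := TopologicalSpace.denseRange_denseSeq ℝ
  have hgeo : Summable (fun n : ℕ => (1 / 2 : ℝ) ^ n) :=
    summable_geometric_of_lt_one (by norm_num) (by norm_num)
  have hterm : ∀ (n : ℕ) t, ‖(1 / 2 : ℝ) ^ n * w (x n) t‖ ≤ (1 / 2 : ℝ) ^ n := by
    intro n t
    rw [norm_mul, norm_pow, Real.norm_of_nonneg (hw0 _ _)]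
    have := hw1 (x n) t
    have h2 : ‖(1 / 2 : ℝ)‖ = 1 / 2 := by norm_num
    rw [h2]
    exact mul_le_of_le_one_right (by positivity) this
  have hsum : ∀ t, Summable (fun n : ℕ => (1 / 2 : ℝ) ^ n * w (x n) t) := fun t =>
    Summable.of_norm_bounded hgeo (fun n => hterm n t)
  refine ⟨fun t => ∑' n : ℕ, (1 / 2 : ℝ) ^ n * w (x n) t, ?_, ?_, ?_⟩
  · exact continuous_tsum (fun n => by have := hwc (x n); fun_prop) hgeo hterm
  · intro s t hst
    refine (hsum s).tsum_le_tsum (fun n => ?_) (hsum t)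
    have := hwm (x n) hst
    gcongr
  · intro s t hst
    constructor
    · intro h
      by_contra hne
      have hlt : s < t := lt_of_le_of_ne hst (fun e => hne (by rw [e]))
      have hopen : IsOpen {q | B q ≠ B t} := isOpen_ne_fun hB continuous_const
      have hev : ∀ᶠ q in 𝓝[>] s, q ∈ {q | B q ≠ B t} ∩ Iio t :=
        mem_nhdsWithin_of_mem_nhds ((hopen.inter isOpen_Iio).mem_nhds ⟨hne, hlt⟩)
      obtain ⟨q0, hq0, hq0s⟩ := (hev.and self_mem_nhdsWithin).exists
      obtain ⟨n, hn⟩ := hx.exists_mem_open ((hopen.inter isOpen_Iio).inter isOpen_Ioi)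
        ⟨q0, hq0, hq0s⟩
      obtain ⟨⟨hn1, hn2⟩, hn3⟩ := hn
      simp only [mem_ofPred_eq, mem_Iio, mem_Ioi] at hn1 hn2 hn3
      refine absurd h (ne_of_lt ((hsum s).tsum_lt_tsum (i := n) (fun k => ?_) ?_ (hsum t)))
      · have := hwm (x k) hst
        simp only
        gcongr
      · have e1 : w (x n) s ≤ 0 := by
          refine hub _ _ _ fun r h1 h2 => ?_
          rw [max_eq_left hn3.le] at h2
          have : r = x n := le_antisymm h2 h1
          simp [φ, this]
        have e2 : 0 < w (x n) t := by
          refine lt_of_lt_of_le ?_ (hle (x n) t t hn2.le (le_max_right _ _))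
          exact lt_min (dist_pos.2 (Ne.symm hn1)) one_pos
        have : w (x n) s < w (x n) t := by linarith
        gcongr
    · intro h
      refine tsum_congr fun n => ?_
      congr 1
      refine le_antisymm (hwm _ hst) (hub _ _ _ fun r h1 h2 => ?_)
      rcases le_or_gt r (max (x n) s) with c | c
      · exact hle _ _ _ h1 c
      · have hrs : s < r := lt_of_le_of_lt (le_max_right _ _) c
        have hrx : x n < r := lt_of_le_of_lt (le_max_left _ _) c
        have hrt : r ≤ t := by
          rcases le_max_iff.1 h2 with h | h
          · linarith
          · exact h
        have er := hmono s r t hrs.le hrt h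
        rcases le_total (x n) s with d | d
        · have := hle (x n) s s d (le_max_right _ _)
          simpa only [φ, er] using this
        · have ex := hmono s (x n) t d (hrx.le.trans hrt) h
          have : φ (x n) r = 0 := by simp [φ, er, ex]
          rw [this]; exact hw0 _ _

/-- Arcs in connected, locally connected, complete metric spaces. -/
lemma aux_arc {Y : Type*} [MetricSpace Y] [CompleteSpace Y] [LocallyConnectedSpace Y]
    [PreconnectedSpace Y] (a b : Y) (hab : a ≠ b) :
    ∃ Γ : ℝ → Y, Continuous Γ ∧ InjOn Γ (Icc 0 1) ∧ Γ 0 = a ∧ Γ 1 = b := by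
  obtain ⟨A, hA, hA0, hA1⟩ := aux_path a b
  obtain ⟨B, hB, hB0, hB1, hBm⟩ := aux_monotone_path hA
  obtain ⟨m, hm, hmm, hmB⟩ := aux_detect hB hBm
  have hm01 : m 0 < m 1 := by
    refine lt_of_le_of_ne (hmm zero_le_one) fun h => hab ?_
    rw [← hA0, ← hA1, ← hB0, ← hB1]
    exact (hmB 0 1 zero_le_one).1 h
  have hpos : 0 < m 1 - m 0 := by linarith
  let μ : Icc (0 : ℝ) 1 → Icc (0 : ℝ) 1 := fun t => ⟨(m t - m 0) / (m 1 - m 0), by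
    have h1 := hmm t.2.1
    have h2 := hmm t.2.2
    constructor
    · apply div_nonneg <;> linarith
    · rw [div_le_one hpos]; linarith⟩
  have hμ : Continuous μ := by
    refine Continuous.subtype_mk ?_ _
    fun_prop
  have hμs : Function.Surjective μ := by
    rintro ⟨u, hu⟩
    have := intermediate_value_Icc (zero_le_one (α := ℝ)) hm.continuousOn
    obtain ⟨t, ht, hmt⟩ := this (show m 0 + u * (m 1 - m 0) ∈ Icc (m 0) (m 1) by
      constructor <;> nlinarith [hu.1, hu.2])
    refine ⟨⟨t, ht⟩, Subtype.ext ?_⟩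
    simp only [μ, hmt]
    field_simp
    ring
  have hμB : ∀ s t, μ s = μ t ↔ B s = B t := by
    intro s t
    have h1 : μ s = μ t ↔ m s = m t := by
      rw [Subtype.ext_iff]
      simp only [μ]
      rw [div_left_inj' hpos.ne']
      constructor <;> intro h <;> linarith
    rw [h1]
    rcases le_total s t with c | c
    · exact hmB s t c
    · rw [eq_comm, hmB t s c, eq_comm]
  have hq : IsQuotientMap μ := hμ.isClosedMap.isQuotientMap hμ hμs
  let G : Icc (0 : ℝ) 1 → Y := fun u => B ((Function.surjInv (f := μ) hμs u : Icc (0 : ℝ) 1) : ℝ)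
  have hGμ : ∀ t, G (μ t) = B t := fun t =>
    (hμB _ _).1 (Function.surjInv_eq hμs (μ t))
  have hG : Continuous G := by
    rw [hq.continuous_iff]
    have : G ∘ μ = fun t : Icc (0 : ℝ) 1 => B t := funext hGμ
    rw [this]
    fun_prop
  have hGi : Function.Injective G := by
    intro u v huv
    obtain ⟨s, rfl⟩ := hμs u
    obtain ⟨t, rfl⟩ := hμs v
    rw [hGμ, hGμ] at huv
    exact (hμB s t).2 huv
  refine ⟨fun t => G (projIcc 0 1 zero_le_one t), by fun_prop, ?_, ?_, ?_⟩
  · intro s hs t ht hst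
    have := hGi hst
    rw [projIcc_of_mem _ hs, projIcc_of_mem _ ht] at this
    simpa using this
  · have : (projIcc (0 : ℝ) 1 zero_le_one 0) = μ ⟨0, by simp⟩ := by
      rw [projIcc_left]
      ext
      simp [μ]
    simp only [this, hGμ, hB0, hA0]
  · have : (projIcc (0 : ℝ) 1 zero_le_one 1) = μ ⟨1, by simp⟩ := by
      rw [projIcc_right]
      ext
      simp [μ, hpos.ne']
    simp only [this, hGμ, hB1, hA1]

lemma aux_log {E : Type*} [TopologicalSpace E] [ContractibleSpace E] [LocallyPathConnectedSpace E]
    {g : E → ℂ} (hg : Continuous g) (h0 : ∀ x, g x ≠ 0) :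
    ∃ f : E → ℂ, Continuous f ∧ ∀ x, Complex.exp (f x) = g x := by
  obtain ⟨x₀⟩ : Nonempty E := inferInstance
  obtain ⟨F, ⟨-, hF⟩, -⟩ := Complex.isCoveringMap_exp.existsUnique_continuousMap_lifts
    (⟨fun x => ⟨g x, h0 x⟩, by fun_prop⟩ : C(E, {z : ℂ // z ≠ 0})) x₀ (Complex.log (g x₀))
    (Subtype.ext (Complex.exp_log (h0 x₀)))
  refine ⟨F, F.continuous, fun x => ?_⟩
  have := congrFun hF x
  simpa using congrArg Subtype.val this

lemma aux_floor {β : ℝ → ℝ} {a b : ℝ} (hab : a ≤ b) (hβ : ContinuousOn β (Icc a b))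
    (hk : ∀ u ∈ Icc a b, ∀ k : ℤ, β u ≠ k) : ⌊β a⌋ = ⌊β b⌋ := by
  rcases lt_trichotomy ⌊β a⌋ ⌊β b⌋ with h | h | h
  · obtain ⟨u, hu, hu2⟩ := intermediate_value_Icc hab hβ
      (show ((⌊β b⌋ : ℤ) : ℝ) ∈ Icc (β a) (β b) from ⟨(Int.floor_lt.1 h).le, Int.floor_le _⟩)
    exact (hk u hu _ hu2).elim
  · exact h
  · obtain ⟨u, hu, hu2⟩ := intermediate_value_Icc' hab hβ
      (show ((⌊β a⌋ : ℤ) : ℝ) ∈ Icc (β b) (β a) from ⟨(Int.floor_lt.1 h).le, Int.floor_le _⟩)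
    exact (hk u hu _ hu2).elim

lemma aux_floor_half {x : ℝ} : ⌊x + 1 / 2⌋ = ⌊x⌋ ∨ ⌊x + 1 / 2⌋ = ⌊x⌋ + 1 := by
  have h1 := Int.floor_le x
  have h2 := Int.lt_floor_add_one x
  rcases le_or_gt (⌊x⌋ + 1 : ℝ) (x + 1 / 2) with h | h
  · right
    rw [Int.floor_eq_iff]; push_cast; constructor <;> linarith
  · left
    rw [Int.floor_eq_iff]; constructor <;> linarith

lemma aux_sin_eq (x : ℝ) (k : ℤ) : Real.sin (2 * Real.pi * x) = Real.sin (2 * Real.pi * (x - k)) := by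
  rw [← Real.sin_sub_int_mul_two_pi _ k]
  congr 1; ring

lemma aux_floor_neg {x : ℝ} (h : Real.sin (2 * Real.pi * x) < 0) : ⌊x + 1 / 2⌋ = ⌊x⌋ + 1 := by
  rcases aux_floor_half (x := x) with h1 | h1
  · exfalso
    rw [aux_sin_eq x ⌊x⌋] at h
    have h2 := Int.floor_le x
    have h3 := Int.lt_floor_add_one (x + 1 / 2)
    rw [h1] at h3
    have := Real.sin_nonneg_of_nonneg_of_le_pi (x := 2 * Real.pi * (x - ⌊x⌋))
      (by have := Real.pi_pos; apply mul_nonneg <;> linarith) (by nlinarith [Real.pi_pos])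
    linarith
  · exact h1

lemma aux_floor_pos {x : ℝ} (h : 0 < Real.sin (2 * Real.pi * x)) : ⌊x + 1 / 2⌋ = ⌊x⌋ := by
  rcases aux_floor_half (x := x) with h1 | h1
  · exact h1
  · exfalso
    rw [aux_sin_eq x (⌊x⌋ + 1 : ℤ)] at h
    push_cast at h
    have h2 := Int.lt_floor_add_one x
    have h3 := Int.floor_le (x + 1 / 2)
    rw [h1] at h3
    push_cast at h3
    have := Real.sin_nonpos_of_nonpos_of_neg_pi_le (x := 2 * Real.pi * (x - (⌊x⌋ + 1)))
      (by nlinarith [Real.pi_pos]) (by nlinarith [Real.pi_pos])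
    linarith

/-- A line in the plane which is invariant under a vertical translation meets all its vertical
translates by `2πi`. -/
lemma aux_winding {Γ : ℝ → ℂ} (hΓ : Continuous Γ) {n : ℝ} (hn : 0 < n)
    (hper : ∀ t, Γ (t + 1) = Γ t + 2 * Real.pi * n * Complex.I)
    (hne : ∀ s t, Γ s + 2 * Real.pi * Complex.I ≠ Γ t) : False := by
  have hpi := Real.pi_pos
  have hre : ∀ t, (Γ (t + 1)).re = (Γ t).re := fun t => by rw [hper]; simp
  have him : ∀ t, (Γ (t + 1)).im = (Γ t).im + 2 * Real.pi * n := fun t => by rw [hper]; simp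
  have hrep : Function.Periodic (fun t => (Γ t).re) 1 := hre
  have himp : Function.Periodic (fun t => (Γ t).im - 2 * Real.pi * n * t) 1 := by
    intro t
    simp only [him]; ring
  obtain ⟨t0, -, ht0⟩ := (isCompact_Icc (a := (0 : ℝ)) (b := 1)).exists_isMaxOn ⟨0, by simp⟩
    (f := fun t => (Γ t).re) (by fun_prop)
  have hmax : ∀ t, (Γ t).re ≤ (Γ t0).re := by
    intro t
    obtain ⟨y, hy, hyt⟩ := hrep.exists_mem_Ico₀ one_pos t
    have := ht0 (show y ∈ Icc (0 : ℝ) 1 from ⟨hy.1, hy.2.le⟩)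
    simp only [mem_ofPred_eq] at this
    rw [hyt]; exact this
  obtain ⟨C, hC⟩ : ∃ C, ∀ t, |(Γ t).im - 2 * Real.pi * n * t| ≤ C := by
    obtain ⟨C, hC⟩ := (isCompact_Icc (a := (0 : ℝ)) (b := 1)).exists_bound_of_continuousOn
      (f := fun t => (Γ t).im - 2 * Real.pi * n * t) (by fun_prop)
    refine ⟨C, fun t => ?_⟩
    obtain ⟨y, hy, hyt⟩ := himp.exists_mem_Ico₀ one_pos t
    rw [hyt]
    exact hC y ⟨hy.1, hy.2.le⟩
  have hC0 : 0 ≤ C := (abs_nonneg _).trans (hC 0)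
  obtain ⟨M, hM0, hM⟩ : ∃ M : ℝ, 0 < M ∧ 2 * C + 2 * Real.pi < 2 * Real.pi * n * M := by
    refine ⟨(2 * C + 2 * Real.pi + 1) / (2 * Real.pi * n), by positivity, ?_⟩
    rw [mul_div_cancel₀ _ (by positivity)]
    linarith
  let D : ℝ × ℝ → ℂ := fun x => Γ x.1 + 2 * Real.pi * Complex.I - Γ x.2
  obtain ⟨E, hE, hED⟩ := aux_log (g := D) (by fun_prop) (fun x h => hne x.1 x.2 (sub_eq_zero.1 h))
  let β : ℝ × ℝ → ℝ := fun x => (E x).im / (2 * Real.pi)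
  have hβ : Continuous β := by fun_prop
  have hEim : ∀ x, (E x).im = 2 * Real.pi * β x := fun x => by
    simp only [β]; field_simp
  have hDre : ∀ x, (D x).re = Real.exp (E x).re * Real.cos (2 * Real.pi * β x) := fun x => by
    rw [← hED, Complex.exp_re, hEim]
  have hDim : ∀ x, (D x).im = Real.exp (E x).re * Real.sin (2 * Real.pi * β x) := fun x => by
    rw [← hED, Complex.exp_im, hEim]
  have hDre' : ∀ x, (D x).re = (Γ x.1).re - (Γ x.2).re := fun x => by simp [D]
  have hDim' : ∀ x, (D x).im = (Γ x.1).im + 2 * Real.pi - (Γ x.2).im := fun x => by simp [D]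
  have hkre1 : ∀ x, (D x).re ≤ 0 → ∀ k : ℤ, β x ≠ k := by
    intro x hx k hk
    rw [hDre, hk, show (2 * Real.pi * (k : ℝ)) = k * (2 * Real.pi) by ring,
      Real.cos_int_mul_two_pi] at hx
    linarith [Real.exp_pos (E x).re]
  have hkre2 : ∀ x, 0 ≤ (D x).re → ∀ k : ℤ, β x + 1 / 2 ≠ k := by
    intro x hx k hk
    have hk' : β x = k - 1 / 2 := by linarith
    rw [hDre, hk', show (2 * Real.pi * ((k : ℝ) - 1 / 2)) = k * (2 * Real.pi) - Real.pi by ring,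
      Real.cos_int_mul_two_pi_sub_pi] at hx
    linarith [Real.exp_pos (E x).re]
  have hsinpos : ∀ x, 0 < (D x).im → 0 < Real.sin (2 * Real.pi * β x) := by
    intro x hx
    rw [hDim] at hx
    exact pos_of_mul_pos_right hx (Real.exp_pos _).le
  have hsinneg : ∀ x, (D x).im < 0 → Real.sin (2 * Real.pi * β x) < 0 := by
    intro x hx
    rw [hDim] at hx
    by_contra h
    push Not at h
    have := mul_nonneg (Real.exp_pos (E x).re).le h
    linarith
  have hkim : ∀ x, (D x).im ≠ 0 → ∀ k : ℤ, β x ≠ k := by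
    intro x hx k hk
    apply hx
    rw [hDim, hk, show (2 * Real.pi * (k : ℝ)) = ((2 * k : ℤ) : ℝ) * Real.pi by push_cast; ring,
      Real.sin_int_mul_pi, mul_zero]
  have hup : ∀ s t, s - t = M → 0 < (D (s, t)).im := by
    intro s t h
    rw [hDim']
    have h1 := abs_le.1 (hC s)
    have h2 := abs_le.1 (hC t)
    have : s = t + M := by linarith
    subst this
    simp only
    nlinarith [h1.1, h2.2]
  have hdown : ∀ s t, s - t = -M → (D (s, t)).im < 0 := by
    intro s t h
    rw [hDim']
    have h1 := abs_le.1 (hC s)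
    have h2 := abs_le.1 (hC t)
    have : t = s + M := by linarith
    subst this
    simp only
    nlinarith [h1.2, h2.1]
  have p1 := aux_floor (β := fun u => β (t0 + u, t0)) (a := -M) (b := M) (by linarith)
    (by fun_prop) (fun u _ => hkre1 _ (by rw [hDre']; linarith [hmax (t0 + u)]))
  have p2 := aux_floor (β := fun u => β (t0, t0 - u) + 1 / 2) (a := -M) (b := M) (by linarith)
    (by fun_prop) (fun u _ => hkre2 _ (by rw [hDre']; linarith [hmax (t0 - u)]))
  have p3 := aux_floor (β := fun u => β (t0 - M + u, t0 + u)) (a := 0) (b := M) (by linarith)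
    (by fun_prop) (fun u _ => hkim _ (hdown _ _ (by ring)).ne)
  have p4 := aux_floor (β := fun u => β (t0 + M - u, t0 - u)) (a := 0) (b := M) (by linarith)
    (by fun_prop) (fun u _ => hkim _ (hup _ _ (by ring)).ne')
  have q1 := aux_floor_neg (hsinneg (t0, t0 + M) (hdown _ _ (by ring)))
  have q2 := aux_floor_pos (hsinpos (t0, t0 - M) (hup _ _ (by ring)))
  simp only [sub_neg_eq_add, add_zero, sub_zero, sub_add_cancel, add_sub_cancel_right,
    ← sub_eq_add_neg] at p1 p2 p3 p4 q1 q2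
  omega

/-- If `p` is in a bounded complementary domain of `X`, then `x - p` has no continuous logarithm
on `X`. -/
lemma aux_nolog {X : Set ℂ} (hX : IsCompact X) {p : ℂ} (hp : p ∉ X)
    (hb : Bornology.IsBounded (connectedComponentIn Xᶜ p)) (l : X → ℂ) (hl : Continuous l)
    (hlx : ∀ x : X, Complex.exp (l x) = x - p) : False := by
  set U := connectedComponentIn Xᶜ p with hU
  have hUo : IsOpen U := hX.isClosed.isOpen_compl.connectedComponentIn
  have hpU : p ∈ U := mem_connectedComponentIn hp
  have hfr : frontier U ⊆ X := by
    intro z hz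
    by_contra hzX
    have hzo : IsOpen (connectedComponentIn Xᶜ z) := hX.isClosed.isOpen_compl.connectedComponentIn
    have hzm : z ∈ connectedComponentIn Xᶜ z := mem_connectedComponentIn hzX
    obtain ⟨y, hy1, hy2⟩ := mem_closure_iff.1 hz.1 _ hzo hzm
    have e1 := connectedComponentIn_eq hy1
    have e2 := connectedComponentIn_eq hy2
    apply hz.2
    rw [hUo.interior_eq, hU, e2, ← e1]
    exact hzm
  obtain ⟨L, hL⟩ := ContinuousMap.exists_restrict_eq hX.isClosed ⟨l, hl⟩
  have hLx : ∀ x ∈ X, Complex.exp (L x) = x - p := by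
    intro x hx
    have := congrArg (fun f => f ⟨x, hx⟩) hL
    simp only [ContinuousMap.restrict_apply, ContinuousMap.coe_mk] at this
    rw [this]
    exact hlx ⟨x, hx⟩
  classical
  let H : ℂ → ℂ := U.piecewise (fun z => Complex.exp (L z)) (fun z => z - p)
  have hH : Continuous H := by
    refine continuous_piecewise (fun z hz => hLx z (hfr hz)) ?_ ?_
    · have := L.continuous
      fun_prop
    · fun_prop
  have hH0 : ∀ z, H z ≠ 0 := by
    intro z
    by_cases hz : z ∈ U
    · simp [H, hz, Complex.exp_ne_zero]
    · simp only [H, hz, not_false_eq_true, piecewise_eq_of_notMem]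
      intro h
      rw [sub_eq_zero.1 h] at hz
      exact hz hpU
  obtain ⟨E, hE, hEH⟩ := aux_log hH hH0
  obtain ⟨R, hR0, hR⟩ : ∃ R : ℝ, 0 < R ∧ U ⊆ Metric.ball p R := by
    obtain ⟨R, hR⟩ := hb.subset_ball p
    exact ⟨max R 1, by positivity, hR.trans (Metric.ball_subset_ball (le_max_left _ _))⟩
  have hpi := Real.pi_pos
  let z : ℝ → ℂ := fun θ => p + R * Complex.exp (2 * Real.pi * θ * Complex.I)
  have hz : ∀ θ, Complex.exp (E (z θ)) = R * Complex.exp (2 * Real.pi * θ * Complex.I) := by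
    intro θ
    have hnot : z θ ∉ U := by
      intro h
      have := hR h
      simp only [z, Metric.mem_ball, dist_self_add_left, norm_mul, Complex.norm_real] at this
      rw [show (2 * Real.pi * θ * Complex.I : ℂ) = ((2 * Real.pi * θ : ℝ) : ℂ) * Complex.I by
        push_cast; ring, Complex.norm_exp_ofReal_mul_I, Real.norm_of_nonneg hR0.le] at this
      linarith
    rw [hEH]
    simp [H, hnot, z]
  let h : ℝ → ℝ := fun θ => (E (z θ)).im / (2 * Real.pi) - θ
  have hh : ∀ θ, ∃ k : ℤ, h θ = k := by
    intro θ
    have h1 := hz θ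
    rw [← Complex.exp_log (show (R : ℂ) ≠ 0 by exact_mod_cast hR0.ne'), ← Complex.exp_add,
      Complex.exp_eq_exp_iff_exists_int] at h1
    obtain ⟨k, hk⟩ := h1
    refine ⟨k, ?_⟩
    have h2 := congrArg Complex.im hk
    rw [← Complex.ofReal_log hR0.le] at h2
    simp at h2
    simp only [h]
    rw [h2]
    field_simp
    ring
  have hc : Continuous h := by
    have : Continuous z := by fun_prop
    fun_prop
  have := aux_floor (β := fun θ => h θ + 1 / 2) (a := 0) (b := 1) zero_le_one (by fun_prop) (by
    intro θ _ k hk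
    obtain ⟨j, hj⟩ := hh θ
    rw [hj] at hk
    have : ((2 * j + 1 : ℤ) : ℝ) = ((2 * k : ℤ) : ℝ) := by push_cast; linarith
    have := Int.cast_injective this
    omega)
  have hz01 : z 0 = z 1 := by simp [z, Complex.exp_two_pi_mul_I]
  have h10 : h 1 + 1 / 2 = (h 0 + 1 / 2) - 1 := by simp [h, hz01]; ring
  rw [h10, Int.floor_sub_one] at this
  omega

lemma aux_cover_lc {X : Set ℂ} (hlc : LocallyConnectedSpace X) (p : ℂ) :
    LocallyConnectedSpace {z : ℂ | p + Complex.exp z ∈ X} := by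
  rw [locallyConnectedSpace_iff_connected_subsets]
  intro z U hU
  let q : {z : ℂ | p + Complex.exp z ∈ X} → X := fun z => ⟨p + Complex.exp z, z.2⟩
  have hq : Continuous q := by
    apply Continuous.subtype_mk
    fun_prop
  let S : X → ℂ := fun w => z + Complex.log ((w - p) / Complex.exp z)
  have hexpS : ∀ w : X, (w : ℂ) - p ≠ 0 → p + Complex.exp (S w) = w := by
    intro w hw
    simp only [S]
    rw [Complex.exp_add, Complex.exp_log (by simp [hw])]
    field_simp
    ring
  have hSq : ∀ z' : {z : ℂ | p + Complex.exp z ∈ X}, |(z'.1 - z.1).im| < Real.pi → S (q z') = z' := by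
    intro z' hz'
    simp only [S, q]
    rw [add_sub_cancel_left, ← Complex.exp_sub, Complex.log_exp]
    · ring
    · linarith [(abs_lt.1 hz').1]
    · linarith [(abs_lt.1 hz').2]
  have hSz : S (q z) = z := hSq z (by simpa using Real.pi_pos)
  obtain ⟨O, hO, hOU⟩ := mem_nhds_subtype _ _ _ |>.1 hU
  have hne : ∀ᶠ w : X in 𝓝 (q z), ((w : ℂ) - p) / Complex.exp z ∈ Complex.slitPlane := by
    have hc : ContinuousAt (fun w : X => ((w : ℂ) - p) / Complex.exp z) (q z) := by
      fun_prop (disch := simp)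
    apply hc.eventually
    apply Complex.isOpen_slitPlane.mem_nhds
    simp [q]
  have hSc : ContinuousAt S (q z) := by
    simp only [S]
    apply ContinuousAt.add continuousAt_const
    apply ContinuousAt.clog
    · fun_prop (disch := simp)
    · exact hne.self_of_nhds
  have hSO : ∀ᶠ w : X in 𝓝 (q z), S w ∈ O := by
    apply hSc.eventually
    rw [hSz]; exact hO
  obtain ⟨V, hV, hVc, hVs⟩ := locallyConnectedSpace_iff_connected_subsets.1 hlc (q z) _ (hne.and hSO)
  have hVne : ∀ w ∈ V, (w : ℂ) - p ≠ 0 := by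
    intro w hw h0
    have := (hVs hw).1
    simp [h0] at this
  refine ⟨(↑) ⁻¹' (S '' V), ?_, ?_, ?_⟩
  · have h1 : q ⁻¹' V ∈ 𝓝 z := hq.continuousAt hV
    have h2 : ∀ᶠ z' : {z : ℂ | p + Complex.exp z ∈ X} in 𝓝 z, |(z'.1 - z.1).im| < Real.pi := by
      have hc : ContinuousAt (fun z' : {z : ℂ | p + Complex.exp z ∈ X} => |(z'.1 - z.1).im|) z := by
        fun_prop
      apply hc.eventually_lt continuousAt_const
      simpa using Real.pi_pos
    filter_upwards [h1, h2] with z' a b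
    exact ⟨q z', a, hSq z' b⟩
  · rw [← Topology.IsInducing.subtypeVal.isPreconnected_image, Subtype.image_preimage_coe,
      inter_eq_right.2]
    · apply hVc.image
      intro w hw
      apply ContinuousAt.continuousWithinAt
      simp only [S]
      apply ContinuousAt.add continuousAt_const
      apply ContinuousAt.clog
      · fun_prop (disch := simp)
      · exact (hVs hw).1
    · rintro _ ⟨w, hw, rfl⟩
      simp only [mem_ofPred_eq]
      rw [hexpS w (hVne w hw)]; exact w.2
  · rintro z' ⟨w, hw, hwz⟩
    apply hOU
    simp only [mem_preimage]
    rw [← hwz]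
    exact (hVs hw).2

lemma aux_comp {X : Set ℂ} (hX : IsCompact X) (hc : IsConnected X) (hlc : LocallyConnectedSpace X)
    {p : ℂ} (hp : p ∉ X) (hb : Bornology.IsBounded (connectedComponentIn Xᶜ p)) :
    ∃ z z' : {z : ℂ | p + Complex.exp z ∈ X}, ∃ k : ℤ, k ≠ 0 ∧
      (z' : ℂ) = z + k * (2 * Real.pi * Complex.I) ∧ z' ∈ connectedComponent z := by
  by_contra hcon
  push Not at hcon
  have hXt := aux_cover_lc hlc p
  let q : {z : ℂ | p + Complex.exp z ∈ X} → X := fun z => ⟨p + Complex.exp z, z.2⟩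
  have hq : Continuous q := by
    apply Continuous.subtype_mk
    fun_prop
  have hinj : ∀ z z', z' ∈ connectedComponent z → q z' = q z → z' = z := by
    intro z z' hz h
    have h1 : Complex.exp z' = Complex.exp z := by
      have := congrArg Subtype.val h
      simpa [q] using this
    obtain ⟨k, hk⟩ := Complex.exp_eq_exp_iff_exists_int.1 h1
    by_cases h0 : k = 0
    · apply Subtype.ext
      simpa [h0] using hk
    · exact absurd hz (hcon z z' k h0 hk)
  have hqo : IsOpenMap q := by
    have h1 : IsOpenMap (fun z : ℂ => p + Complex.exp z) :=
      (Homeomorph.addLeft p).isOpenMap.comp Complex.isOpenMap_exp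
    exact h1.restrictPreimage X
  obtain ⟨x0, hx0⟩ := hc.nonempty
  have hne : ∀ x ∈ X, x - p ≠ 0 := fun x hx h => hp (by rwa [← sub_eq_zero.1 h])
  have hsurj : Function.Surjective q := by
    rintro ⟨x, hx⟩
    have : p + Complex.exp (Complex.log (x - p)) = x := by
      rw [Complex.exp_log (hne x hx)]; ring
    exact ⟨⟨Complex.log (x - p), by simpa [this] using hx⟩, Subtype.ext this⟩
  obtain ⟨z0, hz0⟩ := hsurj ⟨x0, hx0⟩
  have hcl : IsOpen (q '' connectedComponent z0)ᶜ := by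
    rw [isOpen_iff_forall_mem_open]
    intro x hx
    obtain ⟨z, rfl⟩ := hsurj x
    refine ⟨q '' connectedComponent z, ?_, hqo _ isOpen_connectedComponent,
      mem_image_of_mem _ mem_connectedComponent⟩
    rintro _ ⟨a, ha, rfl⟩ ⟨b, hbb, hba⟩
    apply hx
    have h1 : Complex.exp b = Complex.exp a := by
      have := congrArg Subtype.val hba
      simpa [q] using this
    obtain ⟨k, hk⟩ := Complex.exp_eq_exp_iff_exists_int.1 h1
    have hTe : ∀ w : ℂ, Complex.exp (w + k * (2 * Real.pi * Complex.I)) = Complex.exp w := fun w =>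
      Complex.exp_eq_exp_iff_exists_int.2 ⟨k, rfl⟩
    let T : {z : ℂ | p + Complex.exp z ∈ X} → {z : ℂ | p + Complex.exp z ∈ X} := fun w =>
      ⟨w + k * (2 * Real.pi * Complex.I), by
        have := w.2
        simp only [mem_ofPred_eq] at this ⊢
        rwa [hTe]⟩
    have hT : Continuous T := by
      apply Continuous.subtype_mk
      fun_prop
    have hTa : T a = b := Subtype.ext hk.symm
    refine ⟨T z, ?_, Subtype.ext (by simp [q, T, hTe])⟩
    have h2 : T z ∈ connectedComponent (T a) := by
      apply hT.image_connectedComponent_subset a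
      apply mem_image_of_mem
      rw [← connectedComponent_eq ha]
      exact mem_connectedComponent
    rw [hTa] at h2
    rwa [connectedComponent_eq hbb]
  have hop : IsOpen (q '' connectedComponent z0) := hqo _ isOpen_connectedComponent
  have hpre : PreconnectedSpace X := isPreconnected_iff_preconnectedSpace.1 hc.isPreconnected
  have huniv : q '' connectedComponent z0 = univ :=
    IsClopen.eq_univ ⟨⟨hcl⟩, hop⟩ ⟨q z0, mem_image_of_mem _ mem_connectedComponent⟩
  let r : connectedComponent z0 → X := fun z => q z
  have hr : Continuous r := hq.comp continuous_subtype_val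
  have hro : IsOpenMap r := hqo.comp isOpen_connectedComponent.isOpenMap_subtype_val
  have hrb : Function.Bijective r := by
    constructor
    · intro a b hab
      apply Subtype.ext
      apply hinj _ _ _ hab
      rw [← connectedComponent_eq b.2]
      exact a.2
    · intro x
      obtain ⟨z, hz, h⟩ : x ∈ q '' connectedComponent z0 := by rw [huniv]; trivial
      exact ⟨⟨z, hz⟩, h⟩
  let e := (Equiv.ofBijective r hrb).toHomeomorphOfContinuousOpen hr hro
  refine aux_nolog hX hp hb (fun x => ((e.symm x : {z : ℂ | p + Complex.exp z ∈ X}) : ℂ)) ?_ ?_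
  · exact continuous_subtype_val.comp (continuous_subtype_val.comp e.symm.continuous)
  · intro x
    have h1 : e (e.symm x) = x := e.apply_symm_apply x
    have h2 : p + Complex.exp (e.symm x : {z : ℂ | p + Complex.exp z ∈ X}) = x := congrArg Subtype.val h1
    rw [← h2]; ring

lemma aux_preloop {X : Set ℂ} (hX : IsCompact X) (hc : IsConnected X)
    (hlc : LocallyConnectedSpace X)
    {p : ℂ} (hp : p ∉ X) (hb : Bornology.IsBounded (connectedComponentIn Xᶜ p)) :
    ∃ Γ : ℝ → ℂ, ∃ m : ℤ, Continuous Γ ∧ (∀ t, p + Complex.exp (Γ t) ∈ X) ∧ m ≠ 0 ∧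
      Γ 1 = Γ 0 + m * (2 * Real.pi * Complex.I) ∧
      ∀ s t, 0 ≤ s → s < t → t ≤ 1 → Complex.exp (Γ s) = Complex.exp (Γ t) → s = 0 ∧ t = 1 := by
  obtain ⟨z, z', k, hk, hzz, hcc⟩ := aux_comp hX hc hlc hp hb
  have hXt := aux_cover_lc hlc p
  have hcl : IsClosed {z : ℂ | p + Complex.exp z ∈ X} :=
    hX.isClosed.preimage (f := fun z => p + Complex.exp z) (by fun_prop)
  have hcs : CompleteSpace {z : ℂ | p + Complex.exp z ∈ X} := hcl.completeSpace_coe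
  have hcs2 : CompleteSpace (connectedComponent z) := isClosed_connectedComponent.completeSpace_coe
  have hl2 : LocallyConnectedSpace (connectedComponent z) :=
    isOpen_connectedComponent.locallyConnectedSpace
  have hp2 : PreconnectedSpace (connectedComponent z) :=
    isPreconnected_iff_preconnectedSpace.1 isPreconnected_connectedComponent
  have hpi : (2 * Real.pi * Complex.I : ℂ) ≠ 0 := Complex.two_pi_I_ne_zero
  have hne : (⟨z, mem_connectedComponent⟩ : connectedComponent z) ≠ ⟨z', hcc⟩ := by
    intro h
    have h1 : z = z' := congrArg Subtype.val h
    rw [← h1] at hzz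
    simp [hk] at hzz
  obtain ⟨B, hB, hBi, hB0, hB1⟩ := aux_arc _ _ hne
  let A : ℝ → ℂ := fun t => ((B t : {z : ℂ | p + Complex.exp z ∈ X}) : ℂ)
  have hA : Continuous A := continuous_subtype_val.comp (continuous_subtype_val.comp hB)
  have hAX : ∀ t, p + Complex.exp (A t) ∈ X := fun t => (B t).1.2
  have hAi : InjOn A (Icc 0 1) := by
    intro s hs t ht h
    exact hBi hs ht (Subtype.ext (Subtype.ext h))
  have hA1 : A 1 = A 0 + k * (2 * Real.pi * Complex.I) := by
    simp only [A, hB0, hB1, hzz]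
  have hbig : ∀ m : ℤ, m ≠ 0 → 2 * Real.pi ≤ ‖(m * (2 * Real.pi * Complex.I) : ℂ)‖ := by
    intro m hm
    have h1 : (1 : ℝ) ≤ |(m : ℝ)| := by exact_mod_cast Int.one_le_abs hm
    have h2 : ‖(m * (2 * Real.pi * Complex.I) : ℂ)‖ = |(m : ℝ)| * (2 * Real.pi) := by
      simp [abs_of_pos Real.pi_pos]
    rw [h2]
    nlinarith [Real.pi_pos]
  let K : Set (ℝ × ℝ) := (Icc 0 1 ×ˢ Icc 0 1) ∩ ({x | x.1 ≤ x.2} ∩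
    ({x | Complex.exp (A x.1) = Complex.exp (A x.2)} ∩ {x | 2 * Real.pi ≤ ‖A x.2 - A x.1‖}))
  have hK : IsCompact K := by
    apply (isCompact_Icc.prod isCompact_Icc).inter_right
    apply IsClosed.inter (isClosed_le (by fun_prop) (by fun_prop))
    apply IsClosed.inter (isClosed_eq (by fun_prop) (by fun_prop))
    exact isClosed_le (by fun_prop) (by fun_prop)
  have hKm : ∀ s t, 0 ≤ s → s < t → t ≤ 1 → Complex.exp (A s) = Complex.exp (A t) →
      (s, t) ∈ K := by
    intro s t hs hst ht he
    obtain ⟨m, hm⟩ := Complex.exp_eq_exp_iff_exists_int.1 he.symm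
    refine ⟨⟨⟨hs, by simp; linarith⟩, ⟨by simp; linarith, ht⟩⟩, hst.le, he, ?_⟩
    simp only [mem_ofPred_eq, hm, add_sub_cancel_left]
    apply hbig
    rintro rfl
    have := hAi (show t ∈ Icc (0 : ℝ) 1 from ⟨by linarith, ht⟩) ⟨hs, by linarith⟩ (by simpa using hm)
    linarith
  have hKn : K.Nonempty := by
    refine ⟨(0, 1), hKm 0 1 le_rfl one_pos le_rfl ?_⟩
    exact (Complex.exp_eq_exp_iff_exists_int.2 ⟨k, hA1⟩).symm
  obtain ⟨⟨s0, t0⟩, hst0, hmin⟩ := hK.exists_isMinOn hKn (f := fun x => x.2 - x.1) (by fun_prop)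
  obtain ⟨⟨hs0, ht0⟩, hle, hexp, hnorm⟩ := hst0
  simp only [mem_ofPred_eq] at hs0 ht0 hle hexp hnorm
  have hlt : s0 < t0 := by
    rcases hle.lt_or_eq with h | h
    · exact h
    · rw [h] at hnorm
      simp at hnorm
      linarith [Real.pi_pos]
  obtain ⟨m, hm⟩ := Complex.exp_eq_exp_iff_exists_int.1 hexp.symm
  have hd : 0 < t0 - s0 := by linarith
  refine ⟨fun u => A (s0 + u * (t0 - s0)), m, by fun_prop, fun t => hAX _, ?_, ?_, ?_⟩
  · rintro rfl
    rw [hm] at hnorm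
    simp at hnorm
    linarith [Real.pi_pos]
  · simpa using hm
  · intro s t hs hst ht he
    have h1 := hmin (hKm _ _ (by nlinarith [hs0.1]) (by nlinarith) (by nlinarith [ht0.2]) he)
    simp only [mem_ofPred_eq] at h1
    have h2 : 1 ≤ t - s := by
      by_contra hh
      push Not at hh
      nlinarith
    constructor <;> linarith

lemma aux_loop {X : Set ℂ} (hX : IsCompact X) (hc : IsConnected X)
    (hlc : LocallyConnectedSpace X)
    {p : ℂ} (hp : p ∉ X) (hb : Bornology.IsBounded (connectedComponentIn Xᶜ p)) :
    ∃ Γ : ℝ → ℂ, Continuous Γ ∧ (∀ t, p + Complex.exp (Γ t) ∈ X) ∧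
      Γ 1 = Γ 0 + 2 * Real.pi * Complex.I ∧
      ∀ s t, 0 ≤ s → s < t → t ≤ 1 → Complex.exp (Γ s) = Complex.exp (Γ t) → s = 0 ∧ t = 1 := by
  obtain ⟨Γ, m, hΓ, hΓX, hm, hΓ1, hinj⟩ : ∃ Γ : ℝ → ℂ, ∃ m : ℤ, Continuous Γ ∧
      (∀ t, p + Complex.exp (Γ t) ∈ X) ∧ 0 < m ∧
      Γ 1 = Γ 0 + m * (2 * Real.pi * Complex.I) ∧
      ∀ s t, 0 ≤ s → s < t → t ≤ 1 → Complex.exp (Γ s) = Complex.exp (Γ t) → s = 0 ∧ t = 1 := by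
    obtain ⟨Γ, m, hΓ, hΓX, hm, hΓ1, hinj⟩ := aux_preloop hX hc hlc hp hb
    rcases lt_or_gt_of_ne hm with h | h
    · refine ⟨fun t => Γ (1 - t), -m, by fun_prop, fun t => hΓX _, by omega, ?_, ?_⟩
      · simp [hΓ1]
      · intro s t hs hst ht he
        have := hinj (1 - t) (1 - s) (by linarith) (by linarith) (by linarith) he.symm
        constructor <;> linarith
    · exact ⟨Γ, m, hΓ, hΓX, h, hΓ1, hinj⟩
  by_cases hm1 : m = 1
  · exact ⟨Γ, hΓ, hΓX, by simpa [hm1] using hΓ1, hinj⟩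
  exfalso
  let h : ℝ → ℂ := fun t => Γ t - m * (2 * Real.pi * Complex.I) * t
  have hh : Continuous (h ∘ Int.fract) := by
    apply ContinuousOn.comp_fract''
    · simp only [h]; fun_prop
    · simp [h, hΓ1]
  let E : ℝ → ℂ := fun t => h (Int.fract t) + m * (2 * Real.pi * Complex.I) * t
  have hE : Continuous E := by
    have : Continuous fun t => (h ∘ Int.fract) t + m * (2 * Real.pi * Complex.I) * (t : ℂ) := hh.add (by fun_prop)
    exact this
  have hEE : ∀ t, E t = Γ (Int.fract t) + (m * ⌊t⌋ : ℤ) * (2 * Real.pi * Complex.I) := by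
    intro t
    have h1 : (t : ℂ) = Int.fract t + ⌊t⌋ := by
      have := (Int.fract_add_floor t).symm
      exact_mod_cast this
    simp only [E, h]
    rw [h1]
    push_cast
    ring_nf
  apply aux_winding hE (n := m) (by exact_mod_cast hm)
  · intro t
    simp only [E, Int.fract_add_one]
    push_cast
    ring
  · intro s t hst
    rw [hEE, hEE] at hst
    have h1 : Complex.exp (Γ (Int.fract s)) = Complex.exp (Γ (Int.fract t)) := by
      rw [Complex.exp_eq_exp_iff_exists_int]
      refine ⟨m * ⌊t⌋ - m * ⌊s⌋ - 1, ?_⟩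
      push_cast at hst ⊢
      linear_combination hst
    have h2 : Int.fract s = Int.fract t := by
      rcases lt_trichotomy (Int.fract s) (Int.fract t) with h | h | h
      · have := hinj _ _ (Int.fract_nonneg _) h (Int.fract_lt_one _).le h1
        linarith [this.2, Int.fract_lt_one t]
      · exact h
      · have := hinj _ _ (Int.fract_nonneg _) h (Int.fract_lt_one _).le h1.symm
        linarith [this.2, Int.fract_lt_one s]
    rw [h2] at hst
    have h3 : ((m * ⌊s⌋ + 1 - m * ⌊t⌋ : ℤ) : ℂ) * (2 * Real.pi * Complex.I) = 0 := by
      push_cast at hst ⊢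
      linear_combination hst
    rw [mul_eq_zero, or_iff_left Complex.two_pi_I_ne_zero] at h3
    have h4 : m * ⌊s⌋ + 1 - m * ⌊t⌋ = 0 := by exact_mod_cast h3
    have h5 : m ∣ 1 := ⟨⌊t⌋ - ⌊s⌋, by linarith⟩
    exact hm1 (Int.eq_one_of_dvd_one hm.le h5)

lemma aux_map {X : Set ℂ} (hX : IsCompact X) {p : ℂ} (hp : p ∉ X) {Γ : ℝ → ℂ} (hΓ : Continuous Γ)
    (hΓX : ∀ t, p + Complex.exp (Γ t) ∈ X)
    (hΓ1 : Γ 1 = Γ 0 + 2 * Real.pi * Complex.I)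
    (hinj : ∀ s t, 0 ≤ s → s < t → t ≤ 1 → Complex.exp (Γ s) = Complex.exp (Γ t) → s = 0 ∧ t = 1) :
    ∃ f : X → X, Continuous f ∧ ∀ x, ∀ n : ℕ, 1 ≤ n → f^[n] x ≠ x := by
  have : Fact ((0 : ℝ) < 1) := ⟨one_pos⟩
  have hrep : ∀ a : AddCircle (1 : ℝ), ∃ t ∈ Ico (0 : ℝ) 1, (t : AddCircle (1 : ℝ)) = a := by
    intro a
    exact ⟨AddCircle.equivIco 1 0 a, by simpa using (AddCircle.equivIco 1 0 a).2,
      AddCircle.coe_equivIco⟩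
  let g : ℝ → X := fun t => ⟨p + Complex.exp (Γ t), hΓX t⟩
  have hg : Continuous g := by
    apply Continuous.subtype_mk
    fun_prop
  let G : AddCircle (1 : ℝ) → X := AddCircle.liftIco 1 0 g
  have hG : Continuous G := by
    apply AddCircle.liftIco_zero_continuous _ hg.continuousOn
    simp [g, hΓ1, Complex.exp_add]
  have hGt : ∀ t ∈ Ico (0 : ℝ) 1, G t = g t := fun t ht => AddCircle.liftIco_zero_coe_apply ht
  have hGi : Function.Injective G := by
    intro a b hab
    obtain ⟨s, hs, rfl⟩ := hrep a
    obtain ⟨t, ht, rfl⟩ := hrep b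
    rw [hGt s hs, hGt t ht] at hab
    have h1 : Complex.exp (Γ s) = Complex.exp (Γ t) := by
      simpa [g] using congrArg Subtype.val hab
    rcases lt_trichotomy s t with h | h | h
    · have := hinj _ _ hs.1 h ht.2.le h1
      linarith [this.2, ht.2]
    · rw [h]
    · have := hinj _ _ ht.1 h hs.2.le h1.symm
      linarith [this.2, hs.2]
  have hGe : IsClosedEmbedding G := hG.isClosedEmbedding hGi
  let w : ℝ → ℝ := fun t => 2 * Real.pi * t - (Γ t).im
  let v : C(AddCircle (1 : ℝ), ℝ) := ⟨AddCircle.liftIco 1 0 w, by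
    apply AddCircle.liftIco_zero_continuous
    · simp [w, hΓ1]
    · simp only [w]; fun_prop⟩
  have hvt : ∀ t ∈ Ico (0 : ℝ) 1, v t = w t := fun t ht =>
    AddCircle.liftIco_zero_coe_apply (f := w) ht
  have : CompactSpace X := isCompact_iff_compactSpace.1 hX
  obtain ⟨u, hu⟩ := ContinuousMap.exists_extension hGe v
  have hne : ∀ x : X, (x : ℂ) - p ≠ 0 := fun x h => hp (by rw [← sub_eq_zero.1 h]; exact x.2)
  let c : X → Circle := fun x => ⟨(x - p) / ‖(x : ℂ) - p‖, by
    change _ ∈ Metric.sphere (0 : ℂ) 1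
    rw [mem_sphere_zero_iff_norm]
    have := norm_ne_zero_iff.2 (hne x)
    simp [this]⟩
  have hcv : ∀ x, ((c x : Circle) : ℂ) = (x - p) / ‖(x : ℂ) - p‖ := fun _ => rfl
  have hc : Continuous c := by
    apply Continuous.subtype_mk
    apply Continuous.div (by fun_prop) (by fun_prop)
    intro x
    simpa using hne x
  let H := AddCircle.homeomorphCircle (T := (1 : ℝ)) one_ne_zero
  let ψ : X → AddCircle (1 : ℝ) := fun x => H.symm (c x * Circle.exp (u x))
  have hψ : Continuous ψ := by
    apply H.symm.continuous.comp
    apply hc.mul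
    exact Circle.exp.continuous.comp u.continuous
  have hψG : ∀ a, ψ (G a) = a := by
    intro a
    simp only [ψ]
    rw [Homeomorph.symm_apply_eq]
    have h1 : u (G a) = v a := by rw [← hu]; rfl
    obtain ⟨t, ht, rfl⟩ := hrep a
    rw [h1, hvt t ht, hGt t ht]
    simp only [H, AddCircle.homeomorphCircle_apply, AddCircle.toCircle_apply_mk]
    apply Subtype.ext
    rw [Circle.coe_mul, Circle.coe_exp, Circle.coe_exp, hcv]
    simp only [g, w]
    rw [add_sub_cancel_left, Complex.norm_exp, Complex.ofReal_exp, ← Complex.exp_sub,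
      ← Complex.exp_add]
    congr 1
    apply Complex.ext <;> simp
  let f : X → X := fun x => G (ψ x + (Real.sqrt 2 : ℝ))
  have hf : Continuous f := hG.comp (hψ.add continuous_const)
  refine ⟨f, hf, ?_⟩
  have hfG : ∀ a (n : ℕ), f^[n] (G a) = G (a + ((n * Real.sqrt 2 : ℝ) : AddCircle (1 : ℝ))) := by
    intro a n
    induction n with
    | zero => simp
    | succ n ih =>
      rw [Function.iterate_succ_apply', ih]
      simp only [f, hψG]
      congr 1
      push_cast
      rw [add_assoc, ← AddCircle.coe_add]
      congr 2
      ring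
  intro x n hn hx
  obtain ⟨a, rfl⟩ : ∃ a, G a = x := by
    obtain ⟨k, rfl⟩ : ∃ k, n = k + 1 := ⟨n - 1, by omega⟩
    rw [Function.iterate_succ_apply'] at hx
    exact ⟨_, hx⟩
  rw [hfG] at hx
  have h1 := hGi hx
  rw [add_eq_left, AddCircle.coe_eq_zero_iff] at h1
  obtain ⟨k, hk⟩ := h1
  have h2 : Irrational (n * Real.sqrt 2) := irrational_sqrt_two.natCast_mul (by omega)
  exact h2 ⟨k, by simpa using hk⟩

lemma aux_outside (R : ℝ) (hR : 0 < R) : IsPreconnected {z : ℂ | R < ‖z‖} := by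
  have h1 : {z : ℂ | R < ‖z‖} = Complex.exp '' {z : ℂ | Real.log R < z.re} := by
    ext z
    simp only [mem_ofPred_eq, mem_image]
    constructor
    · intro h
      have hz : z ≠ 0 := norm_pos_iff.1 (hR.trans h)
      exact ⟨Complex.log z, by rw [Complex.log_re]; exact Real.log_lt_log hR h, Complex.exp_log hz⟩
    · rintro ⟨w, hw, rfl⟩
      rw [Complex.norm_exp, ← Real.log_lt_iff_lt_exp hR]
      exact hw
  rw [h1]
  exact (convex_halfSpace_re_gt _).isPreconnected.image _ Complex.continuous_exp.continuousOn

lemma aux_complex (X : Set ℂ) (hX : IsCompact X) (hc : IsConnected X)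
    (hlc : LocallyConnectedSpace X)
    (hppp : ∀ f : X → X, Continuous f → ∃ x : X, ∃ n : ℕ, 1 ≤ n ∧ f^[n] x = x) :
    IsConnected Xᶜ := by
  have hunb : ∀ p ∈ Xᶜ, ¬ Bornology.IsBounded (connectedComponentIn Xᶜ p) := by
    intro p hp hb
    obtain ⟨Γ, h1, h2, h3, h4⟩ := aux_loop hX hc hlc hp hb
    obtain ⟨f, hf, hfn⟩ := aux_map hX hp h1 h2 h3 h4
    obtain ⟨x, n, hn, hx⟩ := hppp f hf
    exact hfn x n hn hx
  obtain ⟨R, hR⟩ := hX.isBounded.subset_closedBall 0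
  let S := max R 1
  have hS : 0 < S := lt_max_of_lt_right one_pos
  have hO := aux_outside S hS
  have hOX : {z : ℂ | S < ‖z‖} ⊆ Xᶜ := by
    intro z hz hzX
    have := hR hzX
    simp only [mem_closedBall_zero_iff] at this
    simp only [mem_ofPred_eq] at hz
    linarith [le_max_left R 1]
  have hO0 : ((S + 1 : ℝ) : ℂ) ∈ {z : ℂ | S < ‖z‖} := by
    simp only [mem_ofPred_eq, Complex.norm_real, Real.norm_eq_abs]
    rw [abs_of_pos (by linarith)]
    linarith
  refine ⟨⟨_, hOX hO0⟩, ?_⟩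
  have hall : ∀ p ∈ Xᶜ, ((S + 1 : ℝ) : ℂ) ∈ connectedComponentIn Xᶜ p := by
    intro p hp
    by_contra hcon
    apply hunb p hp
    apply (Metric.isBounded_closedBall (x := (0 : ℂ)) (r := S)).subset
    intro z hz
    by_contra hz2
    have hz3 : z ∈ {z : ℂ | S < ‖z‖} := by simpa using hz2
    apply hcon
    rw [connectedComponentIn_eq hz]
    exact hO.subset_connectedComponentIn hz3 hOX hO0
  have heq : Xᶜ = connectedComponentIn Xᶜ ((S + 1 : ℝ) : ℂ) := by
    apply Subset.antisymm _ (connectedComponentIn_subset _ _)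
    intro p hp
    rw [← connectedComponentIn_eq (hall p hp)]
    exact mem_connectedComponentIn hp
  rw [heq]
  exact isPreconnected_connectedComponentIn

/-- A locally connected plane continuum with the periodic point property does not separate
the plane: its complement is connected. -/
theorem stmt_3 (X : Set (EuclideanSpace ℝ (Fin 2)))
    (hcomp : IsCompact X) (hconn : IsConnected X)
    (hlc : LocallyConnectedSpace ↥X)
    (hppp : HasPPP ↥X) : IsConnected Xᶜ := by
  let e : EuclideanSpace ℝ (Fin 2) ≃ₜ ℂ := Complex.orthonormalBasisOneI.repr.toHomeomorph.symm
  let h : X ≃ₜ (e '' X) := e.image X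
  have hl : LocallyConnectedSpace (e '' X) := h.symm.locallyConnectedSpace
  have key := aux_complex (e '' X) (hcomp.image e.continuous)
    (hconn.image e e.continuous.continuousOn) hl ?_
  · have h1 : Xᶜ = e.symm '' (e '' X)ᶜ := by
      rw [← image_compl_eq e.bijective, ← image_comp]
      simp
    rw [h1]
    exact key.image _ e.symm.continuous.continuousOn
  · intro f hf
    obtain ⟨x, n, hn, hx⟩ := hppp (h.symm ∘ f ∘ h)
      (h.symm.continuous.comp (hf.comp h.continuous))
    refine ⟨h x, n, hn, ?_⟩
    have hs : Function.Semiconj h (h.symm ∘ f ∘ h) f := by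
      intro y
      simp
    rw [← (hs.iterate_right n) x, hx]
end

section
/- If a locally connected continuum X contained in the Euclidean plane ℝ² does not separate the plane (i.e., ℝ² ∖ X is connected), then X has the fixed point property. -/
section Aux
open Set

theorem aux_ulc {X : Set ℂ} (hc : IsCompact X) (hlc : LocallyConnectedSpace X) {ε : ℝ} (hε : 0 < ε) :
    ∃ δ > 0, ∀ x ∈ X, ∀ y ∈ X, dist x y < δ →
      ∃ C ⊆ X, IsPreconnected C ∧ x ∈ C ∧ y ∈ C ∧ ∀ z ∈ C, dist z x < ε := by
  rw [locallyConnectedSpace_iff_subsets_isOpen_isConnected] at hlc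
  choose V hVs hVo hVm hVc using fun a : X => hlc a (Metric.ball a (ε/2)) (Metric.ball_mem_nhds _ (by positivity))
  have hcX : CompactSpace X := isCompact_iff_compactSpace.1 hc
  obtain ⟨δ, hδ, h⟩ := lebesgue_number_lemma_of_metric (isCompact_univ (X := X)) hVo
    (fun a _ => mem_iUnion.2 ⟨a, hVm a⟩)
  refine ⟨δ, hδ, fun x hx y hy hxy => ?_⟩
  obtain ⟨a, ha⟩ := h ⟨x, hx⟩ (mem_univ _)
  have hxa : (⟨x, hx⟩ : X) ∈ V a := ha (Metric.mem_ball_self hδ)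
  have hya : (⟨y, hy⟩ : X) ∈ V a := ha (by rw [Metric.mem_ball, dist_comm]; exact hxy)
  refine ⟨Subtype.val '' V a, by rintro _ ⟨w, _, rfl⟩; exact w.2,
    (hVc a).isPreconnected.image _ continuous_subtype_val.continuousOn,
    ⟨_, hxa, rfl⟩, ⟨_, hya, rfl⟩, ?_⟩
  rintro _ ⟨w, hw, rfl⟩
  have h1 : dist w a < ε/2 := hVs a hw
  have h2 : dist (⟨x, hx⟩ : X) a < ε/2 := hVs a hxa
  have := dist_triangle_right w (⟨x, hx⟩ : X) a
  have h3 : dist w (⟨x, hx⟩ : X) < ε := by linarith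
  exact h3

theorem aux_slit {x z0 z1 : ℂ} (h : x ∉ segment ℝ z0 z1) : (x - z1) / (x - z0) ∈ Complex.slitPlane := by
  have h0 : x - z0 ≠ 0 := fun h' => h (by rw [sub_eq_zero.1 h']; exact left_mem_segment _ _ _)
  by_contra hs
  rw [Complex.mem_slitPlane_iff] at hs
  push Not at hs
  obtain ⟨h1, h2⟩ := hs
  set w := (x - z1) / (x - z0) with hw
  have hwr : w = (w.re : ℂ) := Complex.ext (by simp) (by simp [h2])
  set r := w.re
  have he : x - z1 = (r : ℂ) * (x - z0) := by
    rw [← hwr, hw]; field_simp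
  have hr : (0:ℝ) < 1 - r := by linarith
  have hrc : (1 - (r:ℂ)) ≠ 0 := by exact_mod_cast hr.ne'
  apply h
  refine ⟨-r / (1 - r), 1 / (1 - r), div_nonneg (by linarith) hr.le, by positivity, by field_simp; ring, ?_⟩
  simp only [Complex.real_smul]
  push_cast
  field_simp
  linear_combination -he

theorem aux_move {X : Set ℂ} {z0 z1 : ℂ} (h : Disjoint (segment ℝ z0 z1) X) {x : ℂ} (hx : x ∈ X) :
    (x - z1) / (x - z0) ∈ Complex.slitPlane :=
  aux_slit fun h' => disjoint_left.1 h h' hx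

theorem aux_log_move {X : Set ℂ} {z0 z1 : ℂ} (h : Disjoint (segment ℝ z0 z1) X)
    (hl : ∃ l : ℂ → ℂ, ContinuousOn l X ∧ ∀ x ∈ X, Complex.exp (l x) = x - z0) :
    ∃ l : ℂ → ℂ, ContinuousOn l X ∧ ∀ x ∈ X, Complex.exp (l x) = x - z1 := by
  obtain ⟨l, hl, he⟩ := hl
  have h0 : ∀ x ∈ X, x - z0 ≠ 0 := fun x hx => by rw [← he x hx]; exact Complex.exp_ne_zero _
  refine ⟨fun x => l x + Complex.log ((x - z1) / (x - z0)), ?_, ?_⟩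
  · refine hl.add (ContinuousOn.clog ?_ fun x hx => aux_move h hx)
    exact (by fun_prop : Continuous fun x : ℂ => x - z1).continuousOn.div (by fun_prop) h0
  · intro x hx
    have hne := Complex.slitPlane_ne_zero (aux_move h hx)
    rw [Complex.exp_add, he x hx, Complex.exp_log hne]
    have := h0 x hx
    field_simp

theorem aux_log_s7 {X : Set ℂ} (hc : IsCompact X) (hn : IsPreconnected Xᶜ) {z : ℂ} (hz : z ∉ X) :
    ∃ l : ℂ → ℂ, ContinuousOn l X ∧ ∀ x ∈ X, Complex.exp (l x) = x - z := by
  set G : Set ℂ := {z | z ∉ X ∧ ∃ l : ℂ → ℂ, ContinuousOn l X ∧ ∀ x ∈ X, Complex.exp (l x) = x - z}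
  have key : ∀ z ∉ X, ∃ r > 0, ∀ w ∈ Metric.ball z r, w ∉ X ∧ Disjoint (segment ℝ z w) X ∧ Disjoint (segment ℝ w z) X := by
    intro z hz
    obtain ⟨r, hr, hb⟩ := Metric.isOpen_iff.1 hc.isClosed.isOpen_compl z hz
    refine ⟨r, hr, fun w hw => ⟨hb hw, ?_, ?_⟩⟩
    · exact disjoint_left.2 fun y hy => hb ((convex_ball z r).segment_subset (Metric.mem_ball_self hr) hw hy)
    · exact disjoint_left.2 fun y hy => hb ((convex_ball z r).segment_subset hw (Metric.mem_ball_self hr) hy)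
  have hGo : IsOpen G := by
    rw [Metric.isOpen_iff]
    rintro z ⟨hz, hl⟩
    obtain ⟨r, hr, h⟩ := key z hz
    exact ⟨r, hr, fun w hw => ⟨(h w hw).1, aux_log_move (h w hw).2.1 hl⟩⟩
  have hsub : Xᶜ ⊆ G := by
    refine hn.subset_of_closure_inter_subset hGo ?_ ?_
    · obtain ⟨R, hR0, hR⟩ := hc.isBounded.subset_ball_lt 0 0
      have hne : (R : ℂ) ≠ 0 := by exact_mod_cast hR0.ne'
      have hRX : (R : ℂ) ∉ X := fun h => by
        have := hR h
        simp [abs_of_pos hR0] at this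
      have hs : ∀ x ∈ X, 1 + (-x / R) ∈ Complex.slitPlane := fun x hx => by
        apply Complex.mem_slitPlane_of_norm_lt_one
        have := hR hx
        rw [mem_ball_zero_iff] at this
        rw [norm_div, norm_neg, Complex.norm_real, Real.norm_of_nonneg hR0.le, div_lt_one hR0]
        exact this
      refine ⟨R, hRX, hRX, fun x => Complex.log (1 + (-x / R)) + Complex.log (-R), ?_, ?_⟩
      · exact (ContinuousOn.clog (by fun_prop) hs).add continuousOn_const
      · intro x hx
        rw [Complex.exp_add, Complex.exp_log (Complex.slitPlane_ne_zero (hs x hx)), Complex.exp_log (by simpa using hne)]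
        field_simp
        ring
    · rintro w ⟨hw, hwX⟩
      obtain ⟨r, hr, h⟩ := key w hwX
      obtain ⟨v, hv, hd⟩ := Metric.mem_closure_iff.1 hw r hr
      have := h v (by rw [Metric.mem_ball, dist_comm]; exact hd)
      exact ⟨hwX, aux_log_move this.2.2 hv.2⟩
  exact (hsub hz).2

/-- a log of `x - z` on the product of `X` with a convex set disjoint from `X`. -/
theorem aux_log2 {X : Set ℂ} (hc : IsCompact X) (hn : IsPreconnected Xᶜ) {Q : Set ℂ} (hQ : Convex ℝ Q)
    {z0 : ℂ} (hz0 : z0 ∈ Q) (hd : Disjoint Q X) :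
    ∃ L : ℂ × ℂ → ℂ, ContinuousOn L (X ×ˢ Q) ∧ ∀ p ∈ X ×ˢ Q, Complex.exp (L p) = p.1 - p.2 := by
  obtain ⟨l, hl, he⟩ := aux_log_s7 hc hn (disjoint_left.1 hd hz0)
  have h0 : ∀ x ∈ X, x - z0 ≠ 0 := fun x hx => by rw [← he x hx]; exact Complex.exp_ne_zero _
  have hs : ∀ p ∈ X ×ˢ Q, (p.1 - p.2) / (p.1 - z0) ∈ Complex.slitPlane := fun p hp =>
    aux_slit fun h' => disjoint_left.1 hd (hQ.segment_subset hz0 hp.2 h') hp.1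
  refine ⟨fun p => l p.1 + Complex.log ((p.1 - p.2) / (p.1 - z0)), ?_, ?_⟩
  · refine (hl.comp continuousOn_fst fun p hp => hp.1).add (ContinuousOn.clog ?_ hs)
    exact (by fun_prop : Continuous fun p : ℂ × ℂ => p.1 - p.2).continuousOn.div (by fun_prop)
      fun p hp => h0 _ hp.1
  · intro p hp
    rw [Complex.exp_add, he _ hp.1, Complex.exp_log (Complex.slitPlane_ne_zero (hs p hp))]
    have := h0 _ hp.1
    field_simp

theorem aux_unique {S : Set (ℂ × ℂ)} (hS : IsPreconnected S) {L M : ℂ × ℂ → ℂ} (hL : ContinuousOn L S)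
    (hM : ContinuousOn M S) (h : ∀ p ∈ S, Complex.exp (L p) = Complex.exp (M p)) {a b : ℂ × ℂ}
    (ha : a ∈ S) (hb : b ∈ S) : L b - L a = M b - M a := by
  have hpi : (2 * (Real.pi : ℂ) * Complex.I) ≠ 0 := Complex.two_pi_I_ne_zero
  have hc : ContinuousOn (fun p => ((L p - M p) / (2 * (Real.pi : ℂ) * Complex.I)).re) S :=
    Complex.continuous_re.comp_continuousOn ((hL.sub hM).div_const _)
  have hT : IsDiscrete (range ((↑) : ℤ → ℝ)) :=
    Int.isClosedEmbedding_coe_real.isInducing.isDiscrete_range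
  have hm : ∀ p ∈ S, ∃ n : ℤ, L p - M p = n * (2 * (Real.pi : ℂ) * Complex.I) := fun p hp => by
    obtain ⟨n, hn⟩ := Complex.exp_eq_exp_iff_exists_int.1 (h p hp)
    exact ⟨n, by rw [hn]; ring⟩
  have hk := hS.constant_of_mapsTo hT hc (fun p hp => by
    obtain ⟨n, hn⟩ := hm p hp
    exact ⟨n, by simp [hn, hpi]⟩) ha hb
  obtain ⟨n, hn⟩ := hm a ha
  obtain ⟨m, hm⟩ := hm b hb
  simp only [hn, hm, mul_div_cancel_right₀ _ hpi, Complex.intCast_re] at hk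
  have : n = m := by exact_mod_cast hk
  subst this
  linear_combination hm - hn

/-- Increment of the logarithm of `x - z` along a connected set. -/
theorem aux_incr {S : Set (ℂ × ℂ)} (hS : IsPreconnected S) {a b : ℂ × ℂ}
    (ha : a ∈ S) (hb : b ∈ S) : ∃ d : ℂ, ∀ L : ℂ × ℂ → ℂ, ContinuousOn L S →
      (∀ p ∈ S, Complex.exp (L p) = p.1 - p.2) → L b - L a = d := by
  by_cases h : ∃ L : ℂ × ℂ → ℂ, ContinuousOn L S ∧ ∀ p ∈ S, Complex.exp (L p) = p.1 - p.2
  · obtain ⟨M, hM, hM'⟩ := h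
    exact ⟨M b - M a, fun L hL hL' => aux_unique hS hL hM (fun p hp => by rw [hL' p hp, hM' p hp]) ha hb⟩
  · exact ⟨0, fun L hL hL' => (h ⟨L, hL, hL'⟩).elim⟩

theorem aux_corner {u : ℂ} (h1 : 0 < u.re) (h2 : 0 < u.im) :
    Complex.log u - Complex.log (-Complex.I * u) = Real.pi / 2 * Complex.I := by
  have hu : u ≠ 0 := fun h => by simp [h] at h1
  have := (Complex.log_mul_eq_add_log_iff (x := -Complex.I) (y := u) (by simp) hu).2 (by
    have h3 := Complex.abs_arg_lt_pi_div_two_iff.2 (Or.inl h1)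
    have h4 := Complex.arg_nonneg_iff.2 h2.le
    rw [abs_lt] at h3
    have := Real.pi_pos
    rw [Complex.arg_neg_I]
    constructor <;> linarith)
  rw [this, Complex.log_neg_I]
  ring

theorem aux_grid (N : ℕ) (H V : ℕ → ℕ → ℂ)
    (h : ∀ i < N, ∀ j < N, H i j + V (i+1) j - H i (j+1) - V i j = 0) :
    (∑ i ∈ Finset.range N, H i 0) + (∑ j ∈ Finset.range N, V N j) - (∑ i ∈ Finset.range N, H i N)
      - (∑ j ∈ Finset.range N, V 0 j) = 0 := by
  have h1 : ∑ i ∈ Finset.range N, ∑ j ∈ Finset.range N, (H i (j+1) - H i j) =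
      ∑ i ∈ Finset.range N, ∑ j ∈ Finset.range N, (V (i+1) j - V i j) := by
    refine Finset.sum_congr rfl fun i hi => Finset.sum_congr rfl fun j hj => ?_
    linear_combination -h i (Finset.mem_range.1 hi) j (Finset.mem_range.1 hj)
  rw [Finset.sum_comm (f := fun i j => V (i+1) j - V i j)] at h1
  simp_rw [fun i => Finset.sum_range_sub (H i) N, fun j => Finset.sum_range_sub (fun i => V i j) N,
    Finset.sum_sub_distrib] at h1
  linear_combination -h1

theorem aux_core {X : Set ℂ} (hc : IsCompact X) (hconn : IsConnected X) (hlc : LocallyConnectedSpace X)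
    (hn : IsPreconnected Xᶜ) {f : ℂ → ℂ} (hf : ContinuousOn f X) (hfX : ∀ x ∈ X, f x ∈ X) :
    ∃ x ∈ X, f x = x := by
  by_contra hno
  push Not at hno
  obtain ⟨m, hm, hmX⟩ : ∃ m > 0, ∀ x ∈ X, m ≤ dist (f x) x := by
    obtain ⟨x, hx, hmin⟩ := hc.exists_isMinOn hconn.nonempty 
      (f := fun y => dist (f y) y) (continuous_dist.comp_continuousOn (hf.prodMk continuousOn_id))
    exact ⟨dist (f x) x, dist_pos.2 (hno x hx), fun y hy => hmin hy⟩
  obtain ⟨δ, hδ, hulc⟩ := aux_ulc hc hlc (show 0 < m / 4 by positivity)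
  obtain ⟨τ, hτ, huc⟩ := Metric.uniformContinuousOn_iff.1 (hc.uniformContinuousOn_of_continuous hf)
    (min (δ / 2) (m / 4)) (by positivity)
  obtain ⟨S, hS, hXS⟩ := hc.isBounded.subset_ball_lt 0 0
  obtain ⟨N, hN⟩ := exists_nat_gt (2 * S / min (τ / 8) (m / 8))
  have hmn : 0 < min (τ / 8) (m / 8) := by positivity
  have hN0 : (0 : ℝ) < N := lt_trans (by positivity) hN
  obtain ⟨s, hs⟩ : ∃ s, s = 2 * S / N := ⟨_, rfl⟩
  have hs0 : 0 < s := by rw [hs]; positivity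
  have hsN : N * s = 2 * S := by rw [hs]; field_simp
  have hsm : s < min (τ / 8) (m / 8) := by
    rw [hs, div_lt_iff₀ hN0]; rw [div_lt_iff₀ hmn] at hN; linarith
  have hsτ : s < τ / 8 := hsm.trans_le (min_le_left _ _)
  have hsm' : s < m / 8 := hsm.trans_le (min_le_right _ _)
  choose g hgX hg using fun z : ℂ => hc.exists_infDist_eq_dist hconn.nonempty z
  obtain ⟨φ, hφ⟩ : ∃ φ : ℂ → ℂ, ∀ z, φ z = f (g z) := ⟨_, fun _ => rfl⟩
  have hφX : ∀ z, φ z ∈ X := fun z => by rw [hφ]; exact hfX _ (hgX z)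
  have hC : ∀ x y : ℂ, ∃ C ⊆ X, IsPreconnected C ∧ (x ∈ X → y ∈ X → x ∈ C ∧ y ∈ C) ∧
      (x ∈ X → y ∈ X → dist x y < δ → ∀ z ∈ C, dist z x < m / 4) := by
    intro x y
    by_cases h : x ∈ X ∧ y ∈ X ∧ dist x y < δ
    · obtain ⟨C, h1, h2, h3, h4, h5⟩ := hulc x h.1 y h.2.1 h.2.2
      exact ⟨C, h1, h2, fun _ _ => ⟨h3, h4⟩, fun _ _ _ => h5⟩
    · exact ⟨X, Subset.rfl, hconn.isPreconnected, fun h1 h2 => ⟨h1, h2⟩,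
        fun h1 h2 h3 => (h ⟨h1, h2, h3⟩).elim⟩
  choose C hCX hCc hCm hCs using hC
  choose d hd using fun a b : ℂ => aux_incr
    ((hCc (φ a) (φ b)).prod (convex_segment (𝕜 := ℝ) a b).isPreconnected)
    (a := (φ a, a)) (b := (φ b, b))
    ⟨(hCm _ _ (hφX a) (hφX b)).1, left_mem_segment _ _ _⟩
    ⟨(hCm _ _ (hφX a) (hφX b)).2, right_mem_segment _ _ _⟩
  -- small convex sets
  have hsq : ∀ Q : Set ℂ, Convex ℝ Q → (∀ z ∈ Q, ∀ w ∈ Q, dist z w ≤ 2 * s) →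
      ∃ G : ℂ → ℂ, ∀ u ∈ Q, ∀ v ∈ Q, d u v = G v - G u := by
    intro Q hQ hQs
    by_cases hd' : Disjoint Q X
    · rcases Q.eq_empty_or_nonempty with rfl | ⟨z0, hz0⟩
      · exact ⟨0, by simp⟩
      obtain ⟨L, hL, hL'⟩ := aux_log2 hc hn hQ hz0 hd'
      refine ⟨fun u => L (φ u, u), fun u hu v hv => ?_⟩
      have hsub := Set.prod_mono (hCX (φ u) (φ v)) (hQ.segment_subset hu hv)
      exact (hd u v L (hL.mono hsub) fun p hp => hL' p (hsub hp)).symm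
    · obtain ⟨x0, hx0Q, hx0⟩ := not_disjoint_iff.1 hd'
      have hk : f x0 - x0 ≠ 0 := sub_ne_zero.2 (hno x0 hx0)
      have hnear : ∀ u ∈ Q, dist (φ u) (f x0) < min (δ / 2) (m / 4) := by
        intro u hu
        rw [hφ]
        apply huc _ (hgX u) _ hx0
        have h1 : dist u (g u) ≤ dist u x0 := by rw [← hg]; exact Metric.infDist_le_dist_of_mem hx0
        have h2 := hQs u hu x0 hx0Q
        have h3 := dist_triangle_left (g u) x0 u
        linarith
      obtain ⟨T, hT⟩ : ∃ T : Set (ℂ × ℂ), T = {p | ‖(p.1 - p.2) - (f x0 - x0)‖ < m} := ⟨_, rfl⟩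
      have hTs : ∀ p ∈ T, 1 + ((p.1 - p.2) - (f x0 - x0)) / (f x0 - x0) ∈ Complex.slitPlane := by
        intro p hp
        rw [hT] at hp
        apply Complex.mem_slitPlane_of_norm_lt_one
        rw [norm_div, div_lt_one (norm_pos_iff.2 hk)]
        refine lt_of_lt_of_le hp ?_
        rw [← dist_eq_norm]; exact hmX x0 hx0
      have hsub : ∀ u ∈ Q, ∀ v ∈ Q, C (φ u) (φ v) ×ˢ segment ℝ u v ⊆ T := by
        rintro u hu v hv ⟨x, z⟩ ⟨hx, hz⟩
        have h1 := hnear u hu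
        have h2 := hnear v hv
        have h3 : dist (φ u) (φ v) < δ := by
          have := dist_triangle_right (φ u) (φ v) (f x0)
          have := min_le_left (δ / 2) (m / 4)
          linarith
        have h4 := hCs _ _ (hφX u) (hφX v) h3 x hx
        have h5 := hQs z (hQ.segment_subset hu hv hz) x0 hx0Q
        have h6 := min_le_right (δ / 2) (m / 4)
        have h7 := dist_triangle x (φ u) (f x0)
        have h8 : ‖(x - z) - (f x0 - x0)‖ ≤ dist x (f x0) + dist z x0 := by
          rw [dist_eq_norm, dist_eq_norm]
          have : (x - z) - (f x0 - x0) = (x - f x0) - (z - x0) := by ring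
          rw [this]; exact norm_sub_le _ _
        rw [hT]
        show ‖(x - z) - (f x0 - x0)‖ < m
        linarith
      obtain ⟨L, hL⟩ : ∃ L : ℂ × ℂ → ℂ, L = fun p =>
        Complex.log (1 + ((p.1 - p.2) - (f x0 - x0)) / (f x0 - x0)) + Complex.log (f x0 - x0) := ⟨_, rfl⟩
      have hLc : ContinuousOn L T := by
        rw [hL]
        exact (ContinuousOn.clog (by fun_prop) hTs).add continuousOn_const
      have hLe : ∀ p ∈ T, Complex.exp (L p) = p.1 - p.2 := by
        intro p hp
        rw [hL]
        simp only
        rw [Complex.exp_add, Complex.exp_log (Complex.slitPlane_ne_zero (hTs p hp)), Complex.exp_log hk]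
        field_simp
        ring
      exact ⟨fun u => L (φ u, u), fun u hu v hv =>
        (hd u v L (hLc.mono (hsub u hu v hv)) fun p hp => hLe p (hsub u hu v hv hp)).symm⟩
  -- half planes
  have hside : ∀ c : ℂ, ‖c‖ = 1 → ∀ u v : ℂ, S ≤ (c * u).re → S ≤ (c * v).re →
      d u v = Complex.log (c * (v - φ v)) - Complex.log (c * (u - φ u)) := by
    intro c hc1 u v hu hv
    have hc0 : c ≠ 0 := fun h => by simp [h] at hc1
    have hconv : Convex ℝ {z : ℂ | S ≤ (c * z).re} := by
      intro a ha b hb α β hα hβ hαβ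
      simp only [mem_ofPred_eq] at ha hb ⊢
      have : (c * (α • a + β • b)).re = α * (c * a).re + β * (c * b).re := by
        simp; ring
      rw [this]
      have : S = α * S + β * S := by rw [← add_mul, hαβ, one_mul]
      nlinarith [mul_le_mul_of_nonneg_left ha hα, mul_le_mul_of_nonneg_left hb hβ]
    have hsl : ∀ p ∈ C (φ u) (φ v) ×ˢ segment ℝ u v, c * (p.2 - p.1) ∈ Complex.slitPlane := by
      rintro ⟨x, z⟩ ⟨hx, hz⟩
      have h1 : S ≤ (c * z).re := hconv.segment_subset hu hv hz
      have h2 : (c * x).re < S := by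
        refine (Complex.re_le_norm _).trans_lt ?_
        rw [norm_mul, hc1, one_mul]
        simpa using hXS (hCX _ _ hx)
      refine Or.inl ?_
      simp only [mul_sub, Complex.sub_re]
      linarith
    have := hd u v (fun p => Complex.log (c * (p.2 - p.1)) + Complex.log (-1 / c))
      ((ContinuousOn.clog (by fun_prop) hsl).add continuousOn_const) (by
        intro p hp
        rw [Complex.exp_add, Complex.exp_log (Complex.slitPlane_ne_zero (hsl p hp)),
          Complex.exp_log (by simp [hc0])]
        field_simp
        ring)
    rw [← this]
    ring
  -- the grid
  obtain ⟨p, hp⟩ : ∃ p : ℕ → ℕ → ℂ, ∀ i j, p i j = ⟨-S + i * s, -S + j * s⟩ := ⟨_, fun _ _ => rfl⟩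
  have hpre : ∀ i j, (p i j).re = -S + i * s := fun i j => by rw [hp]
  have hpim : ∀ i j, (p i j).im = -S + j * s := fun i j => by rw [hp]
  have hgrid := aux_grid N (fun i j => d (p i j) (p (i+1) j)) (fun i j => d (p i j) (p i (j+1))) (by
    intro i _ j _
    obtain ⟨G, hG⟩ := hsq (Icc (-S + i * s) (-S + (i + 1) * s) ×ℂ Icc (-S + j * s) (-S + (j + 1) * s))
      (by
        intro a ha b hb α β hα hβ hαβ
        rw [Complex.mem_reProdIm] at ha hb ⊢
        have h1 := convex_Icc (𝕜 := ℝ) _ _ ha.1 hb.1 hα hβ hαβ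
        have h2 := convex_Icc (𝕜 := ℝ) _ _ ha.2 hb.2 hα hβ hαβ
        simpa using And.intro h1 h2)
      (by
        rintro z ⟨hz1, hz2⟩ w ⟨hw1, hw2⟩
        rw [dist_eq_norm]
        refine (Complex.norm_le_abs_re_add_abs_im _).trans ?_
        simp only [mem_preimage, mem_Icc] at hz1 hz2 hw1 hw2
        have h1 : |(z - w).re| ≤ s := by rw [Complex.sub_re, abs_le]; constructor <;> linarith
        have h2 : |(z - w).im| ≤ s := by rw [Complex.sub_im, abs_le]; constructor <;> linarith
        linarith)
    have m1 : p i j ∈ (Icc (-S + i * s) (-S + (i + 1) * s) ×ℂ Icc (-S + j * s) (-S + (j + 1) * s)) := by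
      rw [Complex.mem_reProdIm, hpre, hpim]; refine ⟨⟨?_, ?_⟩, ⟨?_, ?_⟩⟩ <;> linarith
    have m2 : p (i+1) j ∈ (Icc (-S + i * s) (-S + (i + 1) * s) ×ℂ Icc (-S + j * s) (-S + (j + 1) * s)) := by
      rw [Complex.mem_reProdIm, hpre, hpim]; push_cast; refine ⟨⟨?_, ?_⟩, ⟨?_, ?_⟩⟩ <;> linarith
    have m3 : p i (j+1) ∈ (Icc (-S + i * s) (-S + (i + 1) * s) ×ℂ Icc (-S + j * s) (-S + (j + 1) * s)) := by
      rw [Complex.mem_reProdIm, hpre, hpim]; push_cast; refine ⟨⟨?_, ?_⟩, ⟨?_, ?_⟩⟩ <;> linarith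
    have m4 : p (i+1) (j+1) ∈ (Icc (-S + i * s) (-S + (i + 1) * s) ×ℂ Icc (-S + j * s) (-S + (j + 1) * s)) := by
      rw [Complex.mem_reProdIm, hpre, hpim]; push_cast; refine ⟨⟨?_, ?_⟩, ⟨?_, ?_⟩⟩ <;> linarith
    simp only [hG _ m1 _ m2, hG _ m2 _ m4, hG _ m3 _ m4, hG _ m1 _ m3]
    ring)
  obtain ⟨w, hw⟩ : ∃ w : ℕ → ℕ → ℂ, ∀ i j, w i j = p i j - φ (p i j) := ⟨_, fun _ _ => rfl⟩
  have e1 : ∑ i ∈ Finset.range N, d (p i 0) (p (i+1) 0) =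
      Complex.log (Complex.I * w N 0) - Complex.log (Complex.I * w 0 0) := by
    rw [← Finset.sum_range_sub (fun i => Complex.log (Complex.I * w i 0))]
    refine Finset.sum_congr rfl fun i _ => ?_
    rw [hside Complex.I (by simp) _ _ (by simp [hpim]) (by simp [hpim]), hw, hw]
  have e2 : ∑ j ∈ Finset.range N, d (p N j) (p N (j+1)) =
      Complex.log (w N N) - Complex.log (w N 0) := by
    rw [← Finset.sum_range_sub (fun j => Complex.log (w N j))]
    refine Finset.sum_congr rfl fun i _ => ?_
    rw [hside 1 (by simp) _ _ (by rw [one_mul, hpre]; linarith) (by rw [one_mul, hpre]; linarith), hw, hw,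
      one_mul, one_mul]
  have e3 : ∑ i ∈ Finset.range N, d (p i N) (p (i+1) N) =
      Complex.log (-Complex.I * w N N) - Complex.log (-Complex.I * w 0 N) := by
    rw [← Finset.sum_range_sub (fun i => Complex.log (-Complex.I * w i N))]
    refine Finset.sum_congr rfl fun i _ => ?_
    rw [hside (-Complex.I) (by simp) _ _ (by simp [hpim]; linarith) (by simp [hpim]; linarith), hw, hw]
  have e4 : ∑ j ∈ Finset.range N, d (p 0 j) (p 0 (j+1)) =
      Complex.log (- w 0 N) - Complex.log (- w 0 0) := by
    rw [← Finset.sum_range_sub (fun j => Complex.log (- w 0 j))]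
    refine Finset.sum_congr rfl fun i _ => ?_
    rw [hside (-1) (by simp) _ _ (by simp [hpre]) (by simp [hpre]), hw, hw,
      neg_one_mul, neg_one_mul]
  rw [e1, e2, e3, e4] at hgrid
  have hb : ∀ z, |(φ z).re| < S ∧ |(φ z).im| < S := fun z => by
    have : ‖φ z‖ < S := by simpa using hXS (hφX z)
    exact ⟨(Complex.abs_re_le_norm _).trans_lt this, (Complex.abs_im_le_norm _).trans_lt this⟩
  simp only [abs_lt] at hb
  have c1 := aux_corner (u := w N N)
    (by rw [hw, Complex.sub_re, hpre]; linarith [(hb (p N N)).1.2])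
    (by rw [hw, Complex.sub_im, hpim]; linarith [(hb (p N N)).2.2])
  have c2 := aux_corner (u := -Complex.I * w 0 N)
    (by simp [hw, hpim]; linarith [(hb (p 0 N)).2.2])
    (by simp [hw, hpre]; linarith [(hb (p 0 N)).1.1])
  have c3 := aux_corner (u := - w 0 0)
    (by simp [hw, hpre]; linarith [(hb (p 0 0)).1.1])
    (by simp [hw, hpim]; linarith [(hb (p 0 0)).2.1])
  have c4 := aux_corner (u := Complex.I * w N 0)
    (by simp [hw, hpim]; linarith [(hb (p N 0)).2.1])
    (by simp [hw, hpre]; linarith [(hb (p N 0)).1.2])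
  have r2 : -Complex.I * (-Complex.I * w 0 N) = - w 0 N := by linear_combination w 0 N * Complex.I_mul_I
  have r3 : -Complex.I * (- w 0 0) = Complex.I * w 0 0 := by ring
  have r4 : -Complex.I * (Complex.I * w N 0) = w N 0 := by linear_combination -w N 0 * Complex.I_mul_I
  rw [r2] at c2
  rw [r3] at c3
  rw [r4] at c4
  apply Complex.two_pi_I_ne_zero
  linear_combination hgrid - c1 - c2 - c3 - c4


end Aux

/-- A locally connected plane continuum which does not separate the plane has the fixed
point property. -/
theorem stmt_7 (X : Set (EuclideanSpace ℝ (Fin 2)))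
    (hcomp : IsCompact X) (hconn : IsConnected X)
    (hlc : LocallyConnectedSpace ↥X)
    (hnosep : IsConnected Xᶜ) : HasFPP ↥X := by
  intro f hf
  let e := Complex.orthonormalBasisOneI.repr.toHomeomorph
  let h : ↥(e ⁻¹' X) ≃ₜ ↥X := e.subtype (fun _ => Iff.rfl)
  have hc : IsCompact (e ⁻¹' X) := e.isCompact_preimage.2 hcomp
  have hco : IsConnected (e ⁻¹' X) := e.isConnected_preimage.2 hconn
  have hn : IsPreconnected (e ⁻¹' X)ᶜ := (e.isConnected_preimage.2 hnosep).isPreconnected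
  have hl : LocallyConnectedSpace ↥(e ⁻¹' X) := h.isOpenEmbedding.locallyConnectedSpace
  classical
  let F : ℂ → ℂ := fun z => if hz : z ∈ e ⁻¹' X then (h.symm (f (h ⟨z, hz⟩)) : ℂ) else 0
  have hFe : ∀ z : ↥(e ⁻¹' X), F z = h.symm (f (h z)) := fun z => by
    simp only [F, dif_pos z.2]
  have hF : ContinuousOn F (e ⁻¹' X) := by
    rw [continuousOn_iff_continuous_domRestrict]
    have : (e ⁻¹' X).domRestrict F = fun z => (h.symm (f (h z)) : ℂ) := funext hFe
    rw [this]
    exact continuous_subtype_val.comp (h.symm.continuous.comp (hf.comp h.continuous))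
  obtain ⟨x, hx, hfx⟩ := aux_core hc hco hl hn hF (fun x hx => by
    rw [hFe ⟨x, hx⟩]; exact Subtype.property _)
  refine ⟨h ⟨x, hx⟩, ?_⟩
  rw [hFe ⟨x, hx⟩] at hfx
  have : h.symm (f (h ⟨x, hx⟩)) = ⟨x, hx⟩ := Subtype.ext hfx
  exact (h.symm_apply_eq.1 this)
end

section
/- If a locally connected continuum X contained in the Euclidean plane ℝ² separates the plane between two points a and b (i.e., a and b lie in different connected components of ℝ² ∖ X), then X contains a simple closed curve S such that a and b lie in different connected components of ℝ² ∖ S. -/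
namespace PlaneSep
open Set Filter Topology

/-- Two continuous logarithms of the same function differ by a constant. -/
lemma log_unique {T : Type*} [TopologicalSpace T] [PreconnectedSpace T] {u v : T → ℂ}
    (hu : Continuous u) (hv : Continuous v) (h : ∀ t, Complex.exp (u t) = Complex.exp (v t))
    (s t : T) : u s - v s = u t - v t := by
  have key : ∀ w : ℂ, Complex.exp w = 1 → ‖w‖ < 1 → w = 0 := by
    intro w hw hn
    obtain ⟨n, rfl⟩ := Complex.exp_eq_one_iff.1 hw
    by_cases hn0 : n = 0
    · simp [hn0]
    · exfalso
      have h1 : (1:ℝ) ≤ |(n:ℝ)| := by exact_mod_cast Int.one_le_abs hn0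
      have h2 := Real.pi_gt_three
      simp only [norm_mul, Complex.norm_intCast, Complex.norm_I, Complex.norm_real,
        Complex.norm_ofNat, Real.norm_eq_abs, abs_of_pos Real.pi_pos, mul_one] at hn
      nlinarith
  set d : T → ℂ := fun t => u t - v t with hd
  have hdc : Continuous d := hu.sub hv
  have hde : ∀ t, Complex.exp (d t) = 1 := by
    intro t
    simp only [hd, Complex.exp_sub, h t]
    exact div_self (Complex.exp_ne_zero _)
  have hclop : IsClopen {x | d x = d t} := by
    refine ⟨isClosed_eq hdc continuous_const, ?_⟩
    have : {x | d x = d t} = {x | ‖d x - d t‖ < 1} := by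
      ext x
      constructor
      · intro hx
        simp only [mem_ofPred_eq] at hx ⊢
        simp [hx]
      · intro hx
        have := key (d x - d t) (by rw [Complex.exp_sub, hde, hde]; simp) hx
        exact sub_eq_zero.1 this
    rw [this]
    exact isOpen_lt (by fun_prop) continuous_const
  have := hclop.eq_univ ⟨t, rfl⟩
  have hs : s ∈ {x | d x = d t} := by rw [this]; trivial
  exact hs

lemma exp_ne_norm {w w' : ℂ} (h : Complex.exp w = Complex.exp w') (hne : w ≠ w') :
    1 ≤ ‖w - w'‖ := by
  have hw : Complex.exp (w - w') = 1 := by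
    rw [Complex.exp_sub, h]; exact div_self (Complex.exp_ne_zero _)
  obtain ⟨n, hn⟩ := Complex.exp_eq_one_iff.1 hw
  have hn0 : n ≠ 0 := by
    rintro rfl
    apply hne
    simpa [sub_eq_zero] using hn
  have h1 : (1:ℝ) ≤ |(n:ℝ)| := by exact_mod_cast Int.one_le_abs hn0
  have h2 := Real.pi_gt_three
  rw [hn]
  simp only [norm_mul, Complex.norm_intCast, Complex.norm_I, Complex.norm_real,
        Complex.norm_ofNat, Real.norm_eq_abs, abs_of_pos Real.pi_pos, mul_one]
  nlinarith

lemma mem_slit {z : ℂ} (h : ‖z - 1‖ < 1) : z ∈ Complex.slitPlane := by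
  have := Complex.mem_slitPlane_of_norm_lt_one h
  simpa using this

/-- Homotopic maps into the punctured plane have quotient with a logarithm. -/
lemma homotopy_log {T K : Type*} [TopologicalSpace T] [PreconnectedSpace T]
    [TopologicalSpace K] [CompactSpace K] (H : T × K → ℂ) (hH : Continuous H)
    (hne : ∀ p, H p ≠ 0) (s t : T) :
    ∃ L : K → ℂ, Continuous L ∧ ∀ k, Complex.exp (L k) = H (t, k) / H (s, k) := by
  have := (isPreconnected_univ (α := T)).induction₂
    (P := fun s t => ∃ L : K → ℂ, Continuous L ∧ ∀ k, Complex.exp (L k) = H (t, k) / H (s, k))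
    ?_ ?_ ?_ (mem_univ s) (mem_univ t)
  · exact this
  · intro s _
    rw [nhdsWithin_univ]
    have h1 : ∀ᶠ t in 𝓝 s, ∀ k ∈ (univ : Set K), ‖H (t, k) / H (s, k) - 1‖ < 1 := by
      apply isCompact_univ.eventually_forall_of_forall_eventually
      intro k _
      have hc : Continuous fun z : T × K => ‖H (z.1, z.2) / H (s, z.2) - 1‖ := by
        refine ((Continuous.div (by fun_prop) (by fun_prop) fun z => hne _).sub
          continuous_const).norm
      refine hc.continuousAt.eventually_lt continuousAt_const ?_
      simp [div_self (hne (s, k))]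
    filter_upwards [h1] with t ht
    refine ⟨fun k => Complex.log (H (t, k) / H (s, k)), ?_, ?_⟩
    · refine Continuous.clog ?_ fun k => mem_slit (ht k trivial)
      exact Continuous.div (by fun_prop) (by fun_prop) fun z => hne _
    · intro k
      exact Complex.exp_log (div_ne_zero (hne _) (hne _))
  · rintro x y z _ _ _ ⟨L, hL, hL'⟩ ⟨M, hM, hM'⟩
    refine ⟨fun k => L k + M k, hL.add hM, fun k => ?_⟩
    rw [Complex.exp_add, hL', hM']
    have := hne (x, k)
    have := hne (y, k)
    field_simp
  · rintro x y _ _ ⟨L, hL, hL'⟩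
    refine ⟨fun k => - L k, hL.neg, fun k => ?_⟩
    rw [Complex.exp_neg, hL', inv_div]

/-- If `a`, `b` are in the same component of the complement of compact `S` then
`(z-a)/(z-b)` has a logarithm on `S`. -/
lemma log_of_same_component {S : Set ℂ} (hS : IsCompact S) {a b : ℂ} (ha : a ∈ Sᶜ)
    (h : connectedComponentIn Sᶜ a = connectedComponentIn Sᶜ b) (hb : b ∈ Sᶜ) :
    ∃ L : S → ℂ, Continuous L ∧ ∀ k : S, Complex.exp (L k) = ((k:ℂ) - a) / (k - b) := by
  have := isCompact_iff_compactSpace.1 hS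
  set W := connectedComponentIn Sᶜ a with hW
  have : PreconnectedSpace W :=
    isPreconnected_iff_preconnectedSpace.1 isPreconnected_connectedComponentIn
  have haW : a ∈ W := mem_connectedComponentIn ha
  have hbW : b ∈ W := by rw [h]; exact mem_connectedComponentIn hb
  have := homotopy_log (T := W) (K := S) (fun p => (p.2 : ℂ) - p.1) (by fun_prop) ?_
    ⟨b, hbW⟩ ⟨a, haW⟩
  · exact this
  · rintro ⟨⟨p, hp⟩, ⟨q, hq⟩⟩ h0
    have : q = p := sub_eq_zero.1 h0
    subst this
    exact connectedComponentIn_subset _ _ hp hq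

/-- A nonvanishing continuous function on the plane cannot agree with `z - a` on a big circle. -/
lemma no_extension {a : ℂ} {R : ℝ} (hR : 0 < R) (φ : ℂ → ℂ) (hφ : Continuous φ)
    (hne : ∀ z, φ z ≠ 0) (h : ∀ z, ‖z - a‖ = R → φ z = z - a) : False := by
  have := isCompact_iff_compactSpace.1 (isCompact_closedBall (a) R)
  obtain ⟨L, hL, hL'⟩ := homotopy_log (T := ℝ) (K := Metric.closedBall a R)
    (fun p => φ (a + p.1 * ((p.2:ℂ) - a))) (by fun_prop) (fun p => hne _) 0 1
  have hmem : ∀ θ : ℝ, a + R * Complex.exp (θ * Complex.I) ∈ Metric.closedBall a R := by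
    intro θ
    simp [Complex.norm_exp_ofReal_mul_I, abs_of_pos hR]
  set u : ℝ → ℂ := fun θ => L ⟨_, hmem θ⟩ with hu
  have huc : Continuous u := hL.comp (by fun_prop)
  have hue : ∀ θ, Complex.exp (u θ) = R * Complex.exp (θ * Complex.I) / φ a := by
    intro θ
    simp only [hu, hL']
    simp only [Complex.ofReal_one, one_mul, add_sub_cancel, Complex.ofReal_zero, zero_mul,
      add_zero]
    rw [h _ (by simp [Complex.norm_exp_ofReal_mul_I, abs_of_pos hR])]
    simp
  have hc : (R : ℂ) / φ a ≠ 0 := div_ne_zero (by exact_mod_cast hR.ne') (hne _)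
  have := log_unique (u := u) (v := fun θ : ℝ => Complex.log (R / φ a) + θ * Complex.I) huc
    (by fun_prop) (fun θ => by
      rw [hue, Complex.exp_add, Complex.exp_log hc]; ring) 0 (2 * Real.pi)
  have hu2 : u 0 = u (2 * Real.pi) := by
    simp only [hu]
    congr 2
    simp [Complex.exp_two_pi_mul_I]
  rw [hu2] at this
  simp [Real.pi_ne_zero] at this

lemma isPreconnected_compl_closedBall (R : ℝ) (hR : 0 < R) :
    IsPreconnected {z : ℂ | R < ‖z‖} := by
  have : {z : ℂ | R < ‖z‖} = Complex.exp '' {w | Real.log R < w.re} := by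
    ext z
    constructor
    · intro hz
      have hz0 : z ≠ 0 := by
        rintro rfl
        simp at hz; linarith
      refine ⟨Complex.log z, ?_, Complex.exp_log hz0⟩
      simp only [mem_ofPred_eq, Complex.log_re]
      exact Real.log_lt_log hR hz
    · rintro ⟨w, hw, rfl⟩
      simp only [mem_ofPred_eq, Complex.norm_exp] at hw ⊢
      exact (Real.log_lt_iff_lt_exp hR).1 hw
  rw [this]
  exact (convex_halfSpace_re_gt _).isPreconnected.image _ Complex.continuous_exp.continuousOn

/-- If the component of `a` is bounded and differs from that of `b`, no logarithm. -/
lemma no_log_aux {X : Set ℂ} (hX : IsCompact X) {a b : ℂ} (ha : a ∈ Xᶜ) (hb : b ∈ Xᶜ)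
    (hsep : connectedComponentIn Xᶜ a ≠ connectedComponentIn Xᶜ b)
    {R : ℝ} (hbd : ∀ z ∈ connectedComponentIn Xᶜ a, ‖z‖ ≤ R)
    (L : X → ℂ) (hL : Continuous L)
    (hL' : ∀ k : X, Complex.exp (L k) = ((k:ℂ) - a) / (k - b)) : False := by
  classical
  set U := connectedComponentIn Xᶜ a with hU
  have hUo : IsOpen U := hX.isClosed.isOpen_compl.connectedComponentIn
  have haU : a ∈ U := mem_connectedComponentIn ha
  have hbU : b ∉ U := fun h => hsep (connectedComponentIn_eq h)
  have hfr : frontier U ⊆ X := by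
    intro z hz
    by_contra hzX
    have hz1 : z ∈ connectedComponentIn Xᶜ z := mem_connectedComponentIn hzX
    have hzo : IsOpen (connectedComponentIn Xᶜ z) :=
      hX.isClosed.isOpen_compl.connectedComponentIn
    obtain ⟨y, hy1, hy2⟩ := mem_closure_iff.1 hz.1 _ hzo hz1
    have e1 := connectedComponentIn_eq hy1
    have e2 := connectedComponentIn_eq hy2
    rw [e2.trans e1.symm |>.symm.symm] at hU
    have : z ∈ U := by rw [hU, ← e2.trans e1.symm, e2.trans e1.symm]; exact hz1
    rw [hUo.frontier_eq] at hz
    exact hz.2 this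
  obtain ⟨g, hg⟩ := ContinuousMap.exists_restrict_eq hX.isClosed (⟨L, hL⟩ : C(X, ℂ))
  have hgL : ∀ z (hz : z ∈ X), g z = L ⟨z, hz⟩ := fun z hz => by
    have := congrArg (fun f => f ⟨z, hz⟩) hg
    simpa using this
  have hR0 : 0 ≤ R := (norm_nonneg _).trans (hbd a haU)
  refine no_extension (a := a) (R := R + ‖a‖ + 1) (by positivity)
    (fun z => if z ∈ U then (z - b) * Complex.exp (g z) else z - a) ?_ ?_ ?_
  · refine Continuous.if ?_ (by fun_prop) (by fun_prop)
    intro z hz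
    have hzX := hfr hz
    rw [hgL z hzX, hL']
    have : z - b ≠ 0 := sub_ne_zero.2 fun h => hb (h ▸ hzX)
    simp only
    field_simp
  · intro z
    split_ifs with h
    · refine mul_ne_zero (sub_ne_zero.2 fun h' => hbU (h' ▸ h)) (Complex.exp_ne_zero _)
    · exact sub_ne_zero.2 fun h' => h (h' ▸ haU)
  · intro z hz
    have : z ∉ U := by
      intro h
      have h1 := hbd z h
      have h2 := norm_sub_le z a
      linarith
    simp [this]

/-- If `X` separates `a`, `b` then `(z-a)/(z-b)` has no logarithm on `X`. -/
lemma no_log_of_separates {X : Set ℂ} (hX : IsCompact X) {a b : ℂ} (ha : a ∈ Xᶜ) (hb : b ∈ Xᶜ)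
    (hsep : connectedComponentIn Xᶜ a ≠ connectedComponentIn Xᶜ b)
    (L : X → ℂ) (hL : Continuous L)
    (hL' : ∀ k : X, Complex.exp (L k) = ((k:ℂ) - a) / (k - b)) : False := by
  obtain ⟨R, hR0, hR⟩ := hX.isBounded.exists_pos_norm_le
  have hsub : {z : ℂ | R < ‖z‖} ⊆ Xᶜ := fun z hz hzX => absurd (hR z hzX) (not_le.2 hz)
  have hpre := isPreconnected_compl_closedBall R hR0
  by_cases h1 : ∀ z ∈ connectedComponentIn Xᶜ a, ‖z‖ ≤ R
  · exact no_log_aux hX ha hb hsep h1 L hL hL'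
  by_cases h2 : ∀ z ∈ connectedComponentIn Xᶜ b, ‖z‖ ≤ R
  · refine no_log_aux hX hb ha hsep.symm h2 (fun k => - L k) hL.neg ?_
    intro k
    rw [Complex.exp_neg, hL', inv_div]
  push Not at h1 h2
  obtain ⟨z, hz, hzR⟩ := h1
  obtain ⟨w, hw, hwR⟩ := h2
  apply hsep
  rw [connectedComponentIn_eq hz, connectedComponentIn_eq hw]
  exact connectedComponentIn_eq (hpre.subset_connectedComponentIn hzR hsub hwR)

end PlaneSep
namespace PlaneSep
open Set Filter Topology

/-- A compact locally connected metric space is uniformly locally connected. -/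
lemma ulc {X : Type*} [MetricSpace X] [CompactSpace X] [LocallyConnectedSpace X]
    {ε : ℝ} (hε : 0 < ε) :
    ∃ δ > 0, ∀ x y : X, dist x y < δ → ∃ C : Set X, IsPreconnected C ∧ x ∈ C ∧ y ∈ C ∧
      ∀ z ∈ C, dist x z < ε := by
  obtain ⟨δ, hδ, h⟩ := lebesgue_number_lemma_of_metric (isCompact_univ (X := X))
    (c := fun x : X => connectedComponentIn (Metric.ball x (ε / 2)) x)
    (fun x => Metric.isOpen_ball.connectedComponentIn)
    (fun x _ => mem_iUnion.2 ⟨x, mem_connectedComponentIn (Metric.mem_ball_self (by positivity))⟩)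
  refine ⟨δ, hδ, fun x y hxy => ?_⟩
  obtain ⟨i, hi⟩ := h x trivial
  refine ⟨_, isPreconnected_connectedComponentIn, hi (Metric.mem_ball_self hδ),
    hi (by rwa [Metric.mem_ball, dist_comm]), fun z hz => ?_⟩
  have h1 := connectedComponentIn_subset _ _ (hi (Metric.mem_ball_self hδ))
  have h2 := connectedComponentIn_subset _ _ hz
  rw [Metric.mem_ball] at h1 h2
  have := dist_triangle_right x z i
  linarith

/-- In a preconnected set, any two points are joined by fine chains. -/
lemma chain {X : Type*} [MetricSpace X] {C : Set X} (hC : IsPreconnected C) {δ : ℝ} (hδ : 0 < δ)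
    {x y : X} (hx : x ∈ C) (hy : y ∈ C) :
    ∃ (N : ℕ) (g : ℕ → X), g 0 = x ∧ (∀ k ≥ N, g k = y) ∧ (∀ k, g k ∈ C) ∧
      ∀ k, dist (g k) (g (k + 1)) < δ := by
  refine hC.induction₂'
    (P := fun x y => ∃ (N : ℕ) (g : ℕ → X), g 0 = x ∧ (∀ k ≥ N, g k = y) ∧ (∀ k, g k ∈ C) ∧
      ∀ k, dist (g k) (g (k + 1)) < δ) ?_ ?_ hx hy
  · have key : ∀ u ∈ C, ∀ v ∈ C, dist u v < δ →
        ∃ (N : ℕ) (g : ℕ → X), g 0 = u ∧ (∀ k ≥ N, g k = v) ∧ (∀ k, g k ∈ C) ∧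
          ∀ k, dist (g k) (g (k + 1)) < δ := by
      intro u hu v hv huv
      refine ⟨1, fun k => if k = 0 then u else v, by simp, ?_, ?_, ?_⟩
      · intro k hk
        have : k ≠ 0 := by omega
        simp [this]
      · intro k
        dsimp only
        split_ifs <;> assumption
      · intro k
        by_cases hk : k = 0
        · simp [hk, huv]
        · simp [hk, hδ]
    intro u hu
    have h1 : Metric.ball u δ ∈ 𝓝[C] u := nhdsWithin_le_nhds (Metric.ball_mem_nhds u hδ)
    filter_upwards [h1, self_mem_nhdsWithin] with v hv hvC
    rw [Metric.mem_ball] at hv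
    exact ⟨key u hu v hvC (by rwa [dist_comm]), key v hvC u hu hv⟩
  · rintro u v w hu hv hw ⟨N, g, g0, gN, gC, gd⟩ ⟨M, f, f0, fM, fC, fd⟩
    refine ⟨N + M, fun k => if k ≤ N then g k else f (k - N), by simp [g0], ?_, ?_, ?_⟩
    · intro k hk
      dsimp only
      split_ifs with h
      · have hk' : k = N := by omega
        have hM : M = 0 := by omega
        rw [gN k hk'.ge, ← f0]
        exact fM 0 hM.le
      · exact fM _ (by omega)
    · intro k
      dsimp only
      split_ifs
      · exact gC _
      · exact fC _
    · intro k
      rcases lt_trichotomy k N with h | h | h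
      · have h1 : k ≤ N := h.le
        have h2 : k + 1 ≤ N := h
        simp only [h1, h2, if_true]
        exact gd k
      · subst h
        have h3 : ¬ (k + 1 ≤ k) := by omega
        simp only [le_refl, h3, if_true, if_false]
        have h4 : k + 1 - k = 0 + 1 := by omega
        rw [h4, gN k le_rfl, ← f0]
        exact fd 0
      · have h1 : ¬ k ≤ N := by omega
        have h2 : ¬ (k + 1 ≤ N) := by omega
        simp only [h1, h2, if_false]
        have h4 : k + 1 - N = (k - N) + 1 := by omega
        rw [h4]
        exact fd _

lemma chain' {X : Type*} [MetricSpace X] {C : Set X} (hC : IsPreconnected C) {δ : ℝ} (hδ : 0 < δ)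
    {x y : X} (hx : x ∈ C) (hy : y ∈ C) :
    ∃ (N : ℕ) (g : ℕ → X), g 0 = x ∧ (∀ k ≥ N, g k = y) ∧ (∀ k, g k ∈ C) ∧
      (∀ k, dist (g k) (g (k + 1)) < δ) ∧ (x = y → ∀ k, g k = x) := by
  by_cases h : x = y
  · subst h
    exact ⟨0, fun _ => x, rfl, fun _ _ => rfl, fun _ => hx, fun _ => by simpa using hδ,
      fun _ _ => rfl⟩
  · obtain ⟨N, g, h1, h2, h3, h4⟩ := chain hC hδ hx hy
    exact ⟨N, g, h1, h2, h3, h4, fun h' => absurd h' h⟩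

/-- Refinement of a chain. -/
lemma refine_chain {X : Type*} [MetricSpace X] {ε δ δ' : ℝ} (hδ' : 0 < δ')
    (hulc : ∀ x y : X, dist x y < δ → ∃ C : Set X, IsPreconnected C ∧ x ∈ C ∧ y ∈ C ∧
      ∀ z ∈ C, dist x z < ε) {x y : X} (M : ℕ) (f : ℕ → X) (hM : 1 ≤ M) (f0 : f 0 = x)
    (fM : ∀ k ≥ M, f k = y) (fd : ∀ k, dist (f k) (f (k + 1)) < δ) :
    ∃ (N : ℕ) (f' : ℕ → X), 1 ≤ N ∧ f' 0 = x ∧ (∀ k ≥ M * N, f' k = y) ∧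
      (∀ k, dist (f' k) (f' (k + 1)) < δ') ∧ ∀ k, dist (f (k / N)) (f' k) < ε := by
  have : ∀ i, ∃ (N : ℕ) (g : ℕ → X), g 0 = f i ∧ (∀ k ≥ N, g k = f (i + 1)) ∧
      (∀ k, dist (f i) (g k) < ε) ∧
      (∀ k, dist (g k) (g (k + 1)) < δ') ∧ (f i = f (i + 1) → ∀ k, g k = f i) := by
    intro i
    obtain ⟨C, hC, h1, h2, h3⟩ := hulc _ _ (fd i)
    obtain ⟨N, g, g1, g2, g3, g4, g5⟩ := chain' hC hδ' h1 h2
    exact ⟨N, g, g1, g2, fun k => h3 _ (g3 k), g4, g5⟩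
  choose n g g0 gn gε gd gc using this
  set N := 1 + (Finset.range M).sup n with hN
  have hN0 : 0 < N := by omega
  have gN : ∀ i, g i N = f (i + 1) := by
    intro i
    by_cases hi : i < M
    · apply gn
      have := Finset.le_sup (f := n) (Finset.mem_range.2 hi)
      omega
    · have e1 := fM i (by omega)
      have e2 := fM (i + 1) (by omega)
      rw [gc i (by rw [e1, e2]), e1, e2]
  refine ⟨N, fun k => g (k / N) (k % N), by omega, by simp [g0, f0], ?_, ?_, ?_⟩
  · intro k hk
    have hi : M ≤ k / N := (Nat.le_div_iff_mul_le hN0).2 hk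
    have e1 := fM (k / N) (by omega)
    have e2 := fM (k / N + 1) (by omega)
    dsimp only
    rw [gc _ (by rw [e1, e2]), e1]
  · intro k
    dsimp only
    have hk := Nat.div_add_mod k N
    have hlt := Nat.mod_lt k hN0
    by_cases h : k % N + 1 < N
    · have e1 : (k + 1) / N = k / N := by
        rw [Nat.div_eq_iff hN0]
        constructor
        · have := mul_comm N (k / N)
          omega
        · have := mul_comm N (k / N)
          omega
      have e2 : (k + 1) % N = k % N + 1 := by
        have := Nat.div_add_mod (k + 1) N
        rw [e1] at this
        omega
      rw [e1, e2]
      exact gd _ _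
    · have h' : k % N + 1 = N := by omega
      have e0 : k + 1 = N * (k / N + 1) := by
        rw [mul_add, mul_one]; omega
      have e1 : (k + 1) / N = k / N + 1 := by
        rw [e0]; exact Nat.mul_div_cancel_left _ hN0
      have e2 : (k + 1) % N = 0 := by
        rw [e0]; exact Nat.mul_mod_right _ _
      have h5 := gd (k / N) (k % N)
      rw [h', gN] at h5
      rw [e1, e2, g0]
      exact h5
  · intro k
    exact gε _ _

/-- Path existence. -/
lemma exists_path_small {X : Type*} [MetricSpace X] [CompactSpace X] [LocallyConnectedSpace X]
    {ε : ℝ} (hε : 0 < ε) :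
    ∃ δ > 0, ∀ x y : X, dist x y < δ → JoinedIn (Metric.ball x ε) x y := by
  set C : ℝ := ε / 2 with hCdef
  have hC : 0 < C := by positivity
  have hstep : ∀ n : ℕ, ∃ δ > 0, δ ≤ C / 2 / 2 ^ n ∧ ∀ x y : X, dist x y < δ →
      ∃ D : Set X, IsPreconnected D ∧ x ∈ D ∧ y ∈ D ∧ ∀ z ∈ D, dist x z < C / 2 / 2 ^ n := by
    intro n
    obtain ⟨δ, hδ, h⟩ := ulc (X := X) (ε := C / 2 / 2 ^ n) (by positivity)
    exact ⟨min δ (C / 2 / 2 ^ n), lt_min hδ (by positivity), min_le_right _ _,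
      fun x y hxy => h x y (hxy.trans_le (min_le_left _ _))⟩
  choose δ hδ hδε hulc using hstep
  refine ⟨δ 0, hδ 0, fun x y hxy => ?_⟩
  -- data at level n
  let P : ℕ → (ℕ × (ℕ → X)) → Prop := fun n p => 1 ≤ p.1 ∧ p.2 0 = x ∧ (∀ k ≥ p.1, p.2 k = y) ∧
    ∀ k, dist (p.2 k) (p.2 (k + 1)) < δ n
  have hnext : ∀ n p, P n p → ∃ p', P (n + 1) p' ∧ ∃ N : ℕ, 1 ≤ N ∧ p'.1 = p.1 * N ∧
      ∀ k, dist (p.2 (k / N)) (p'.2 k) < C / 2 / 2 ^ n := by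
    rintro n ⟨M, f⟩ ⟨h1, h2, h3, h4⟩
    obtain ⟨N, f', a1, a2, a3, a4, a5⟩ := refine_chain (hδ (n + 1)) (hulc n) M f h1 h2 h3 h4
    exact ⟨⟨M * N, f'⟩, ⟨Nat.mul_pos h1 a1, a2, a3, a4⟩, N, a1, rfl, a5⟩
  let p0 : ℕ × (ℕ → X) := (1, fun k => if k = 0 then x else y)
  have hp0 : P 0 p0 := by
    refine ⟨le_rfl, by simp [p0], ?_, ?_⟩
    · intro k hk
      have : k ≠ 0 := by
        have : 1 ≤ k := hk
        omega
      simp [p0, this]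
    · intro k
      by_cases hk : k = 0
      · simp [p0, hk, hxy]
      · simp [p0, hk, hδ 0]
  choose! nx hnx1 nN hnx2 hnx3 hnx4 using hnext
  let s : (n : ℕ) → ℕ × (ℕ → X) := fun n => Nat.rec p0 (fun n p => nx n p) n
  have hs : ∀ n, P n (s n) := by
    intro n
    induction n with
    | zero => exact hp0
    | succ n ih => exact hnx1 n _ ih
  let G : ℝ → ℕ → X := fun t n => (s n).2 ⌊t * (s n).1⌋₊
  have hG : ∀ t n, dist (G t n) (G t (n + 1)) ≤ C / 2 / 2 ^ n := by
    intro t n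
    have e1 : (s (n + 1)) = nx n (s n) := rfl
    have e3 := hnx2 n _ (hs n)
    have e2 := hnx3 n _ (hs n)
    have e4 := hnx4 n _ (hs n) ⌊t * (s (n + 1)).1⌋₊
    refine le_of_lt ?_
    have : ⌊t * (s (n + 1)).1⌋₊ / (nN n (s n)) = ⌊t * (s n).1⌋₊ := by
      rw [← Nat.floor_div_natCast, e1, e2]
      congr 1
      push_cast
      have : (nN n (s n) : ℝ) ≠ 0 := by
        have : nN n (s n) ≠ 0 := by omega
        exact_mod_cast this
      field_simp
    rw [this] at e4
    exact e4
  have hlim : ∀ t, ∃ z, Tendsto (G t) atTop (𝓝 z) := fun t =>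
    cauchySeq_tendsto_of_complete (cauchySeq_of_le_geometric_two (hG t))
  choose g hg using hlim
  have hgd : ∀ t n, dist (G t n) (g t) ≤ C / 2 ^ n := fun t n =>
    dist_le_of_le_geometric_two_of_tendsto (hG t) (hg t) n
  have hcont : Continuous g := by
    rw [Metric.continuous_iff]
    intro t η hη
    have : ∃ n : ℕ, 3 * C * (1 / 2) ^ n < η := by
      obtain ⟨n, hn⟩ := exists_pow_lt_of_lt_one (show 0 < η / (3 * C) by positivity)
        (show (1 / 2 : ℝ) < 1 by norm_num)
      refine ⟨n, ?_⟩
      rw [lt_div_iff₀ (by positivity)] at hn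
      linarith
    obtain ⟨n, hn⟩ := this
    have hn' : 3 * (C / 2 ^ n) < η := by
      have : 3 * (C / 2 ^ n) = 3 * C * (1 / 2) ^ n := by
        rw [one_div, inv_pow]; ring
      rw [this]; exact hn
    have hM : (0 : ℝ) < (s n).1 := by
      have : 0 < (s n).1 := (hs n).1
      exact_mod_cast this
    refine ⟨1 / (s n).1, by positivity, fun r hr => ?_⟩
    have key : ∀ u v : ℝ, u ≤ v → v - u < 1 / (s n).1 → dist (G u n) (G v n) ≤ C / 2 ^ n := by
      intro u v huv h
      have h1 : ⌊u * (s n).1⌋₊ ≤ ⌊v * (s n).1⌋₊ := Nat.floor_mono (by gcongr)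
      have h2 : ⌊v * (s n).1⌋₊ ≤ ⌊u * (s n).1⌋₊ + 1 := by
        rw [lt_div_iff₀ hM] at h
        have h5 : v * (s n).1 < u * (s n).1 + 1 := by linarith
        by_cases hneg : 0 ≤ u * (s n).1
        · rw [← Nat.floor_add_one hneg]
          exact Nat.floor_mono h5.le
        · have : ⌊v * (s n).1⌋₊ ≤ ⌊(1:ℝ)⌋₊ := Nat.floor_mono (by linarith)
          simp at this
          omega
      have hle : δ n ≤ C / 2 ^ n := by
        refine (hδε n).trans ?_
        gcongr
        linarith
      rcases (show ⌊v * (s n).1⌋₊ = ⌊u * (s n).1⌋₊ ∨ ⌊v * (s n).1⌋₊ = ⌊u * (s n).1⌋₊ + 1 by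
        omega) with h3 | h3
      · simp only [G, h3, dist_self]
        positivity
      · simp only [G, h3]
        exact ((hs n).2.2.2 _).le.trans hle
    have hGG : dist (G r n) (G t n) ≤ C / 2 ^ n := by
      rw [Real.dist_eq, abs_lt] at hr
      rcases le_total r t with h | h
      · exact key r t h (by linarith)
      · rw [dist_comm]
        exact key t r h (by linarith)
    have h1 := hgd r n
    have h2 := hgd t n
    have h3 := dist_triangle4 (g r) (G r n) (G t n) (g t)
    rw [dist_comm (g r) (G r n)] at h3
    linarith
  have hg0 : g 0 = x := by
    refine tendsto_nhds_unique (hg 0) ?_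
    have : G 0 = fun _ => x := by
      funext n
      simp only [G, zero_mul, Nat.floor_zero]
      exact (hs n).2.1
    rw [this]
    exact tendsto_const_nhds
  have hg1 : g 1 = y := by
    refine tendsto_nhds_unique (hg 1) ?_
    have : G 1 = fun _ => y := by
      funext n
      simp only [G, one_mul, Nat.floor_natCast]
      exact (hs n).2.2.1 _ le_rfl
    rw [this]
    exact tendsto_const_nhds
  have hxy' : dist x y < C := by
    have := hδε 0
    simp only [pow_zero, div_one] at this
    linarith
  refine ⟨⟨⟨fun t => g t, by fun_prop⟩, by simp [hg0], by simp [hg1]⟩, fun t => ?_⟩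
  have h0 := hgd t 0
  have h2 : dist (G t 0) x < C := by
    have : G t 0 = x ∨ G t 0 = y := by
      simp only [G]
      show p0.2 _ = x ∨ p0.2 _ = y
      simp only [p0]
      split_ifs <;> simp
    rcases this with h | h
    · rw [h]; simpa using hC
    · rw [h, dist_comm]; exact hxy'
  show dist (g t) x < ε
  have h3 := dist_triangle_left (g t) x (G t 0)
  simp only [pow_zero, div_one] at h0
  linarith

end PlaneSep
namespace PlaneSep
open Set Filter Topology

/-- Closed sets of parameters whose gaps may be collapsed. -/
def gapSets {Y : Type*} (γ : ℝ → Y) : Set (Set ℝ) :=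
  {K | IsClosed K ∧ K ⊆ Icc 0 1 ∧ (0:ℝ) ∈ K ∧ (1:ℝ) ∈ K ∧
    ∀ u ∈ K, ∀ v ∈ K, u < v → Ioo u v ∩ K = ∅ → γ u = γ v}

lemma gap_exists {K : Set ℝ} (hK : IsClosed K) {u v m : ℝ} (hu : u ∈ K) (hv : v ∈ K)
    (hum : u ≤ m) (hmv : m ≤ v) (hm : m ∉ K) :
    ∃ u' ∈ K, ∃ v' ∈ K, u ≤ u' ∧ u' < m ∧ m < v' ∧ v' ≤ v ∧ Ioo u' v' ∩ K = ∅ := by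
  have c1 : IsCompact (K ∩ Icc u m) := isCompact_Icc.inter_left hK
  have c2 : IsCompact (K ∩ Icc m v) := isCompact_Icc.inter_left hK
  obtain ⟨u', ⟨hu'K, hu'⟩, hu'm⟩ := c1.exists_isGreatest ⟨u, hu, le_rfl, hum⟩
  obtain ⟨v', ⟨hv'K, hv'⟩, hv'm⟩ := c2.exists_isLeast ⟨v, hv, hmv, le_rfl⟩
  refine ⟨u', hu'K, v', hv'K, hu'.1, lt_of_le_of_ne hu'.2 fun h => hm (h ▸ hu'K),
    lt_of_le_of_ne hv'.1 fun h => hm (h ▸ hv'K), hv'.2, ?_⟩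
  rw [eq_empty_iff_forall_notMem]
  rintro w ⟨⟨h1, h2⟩, hw⟩
  rcases le_total w m with h | h
  · exact absurd (hu'm ⟨hw, hu'.1.trans h1.le, h⟩) (not_le.2 h1)
  · exact absurd (hv'm ⟨hw, h, h2.le.trans hv'.2⟩) (not_le.2 h2)

lemma exists_minimal_gapSet {Y : Type*} [TopologicalSpace Y] [T2Space Y] {γ : ℝ → Y}
    (hγ : Continuous γ) :
    ∃ K, Minimal (fun K => K ∈ gapSets γ) K := by
  refine (zorn_superset_nonempty (gapSets γ) ?_ (Icc 0 1) ?_).imp fun m hm => hm.2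
  · intro c hc hchain hne
    obtain ⟨K0, hK0⟩ := hne
    refine ⟨⋂₀ c, ⟨isClosed_sInter fun K hK => (hc hK).1,
      (sInter_subset_of_mem hK0).trans (hc hK0).2.1,
      fun K hK => (hc hK).2.2.1, fun K hK => (hc hK).2.2.2.1, ?_⟩,
      fun s hs => sInter_subset_of_mem hs⟩
    intro u hu v hv huv hgap
    by_contra hne
    have hopen : IsOpen {p : ℝ × ℝ | γ p.1 ≠ γ p.2} :=
      isOpen_ne_fun (by fun_prop) (by fun_prop)
    obtain ⟨η, hη, hball⟩ := Metric.isOpen_iff.1 hopen (u, v) hne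
    set η' := min (η / 2) ((v - u) / 3) with hη'
    have hη'0 : 0 < η' := lt_min (by positivity) (by linarith)
    have hη'1 : η' ≤ η / 2 := min_le_left _ _
    have hη'2 : η' ≤ (v - u) / 3 := min_le_right _ _
    have : Nonempty c := ⟨⟨K0, hK0⟩⟩
    obtain ⟨⟨K, hK⟩, hKe⟩ := (isCompact_Icc (a := u + η') (b := v - η')).elim_directed_family_closed
      (fun K : c => (K : Set ℝ)) (fun K => (hc K.2).1) (by
        rw [← sInter_eq_iInter, eq_empty_iff_forall_notMem]
        rintro w ⟨⟨h1, h2⟩, hw⟩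
        rw [eq_empty_iff_forall_notMem] at hgap
        exact hgap w ⟨⟨by linarith, by linarith⟩, hw⟩) (by
        intro A B
        rcases hchain.total A.2 B.2 with h | h
        · exact ⟨A, Subset.rfl, h⟩
        · exact ⟨B, h, Subset.rfl⟩)
    rw [eq_empty_iff_forall_notMem] at hKe
    have hm : (u + v) / 2 ∉ K := fun h => hKe _ ⟨⟨by linarith, by linarith⟩, h⟩
    obtain ⟨u', hu', v', hv', h1, h2, h3, h4, h5⟩ := gap_exists (hc hK).1 (hu K hK) (hv K hK)
      (by linarith) (by linarith) hm
    have e := (hc hK).2.2.2.2 u' hu' v' hv' (by linarith) h5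
    have hu'' : u' < u + η' := by
      by_contra h
      exact hKe u' ⟨⟨by linarith, by linarith⟩, hu'⟩
    have hv'' : v - η' < v' := by
      by_contra h
      exact hKe v' ⟨⟨by linarith, by linarith⟩, hv'⟩
    refine hball (a := (u', v')) ?_ e
    rw [Metric.mem_ball, Prod.dist_eq, max_lt_iff, Real.dist_eq, Real.dist_eq, abs_lt, abs_lt]
    refine ⟨⟨?_, ?_⟩, ⟨?_, ?_⟩⟩ <;> dsimp only <;> linarith
  · refine ⟨isClosed_Icc, Subset.rfl, by simp, by simp, ?_⟩
    intro u hu v hv huv h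
    exfalso
    rw [eq_empty_iff_forall_notMem] at h
    exact h ((u + v) / 2) ⟨⟨by linarith, by linarith⟩, by linarith [hu.1, hv.1],
      by linarith [hu.2, hv.2]⟩

lemma minimal_gapSet {Y : Type*} {γ : ℝ → Y} {K : Set ℝ}
    (hK : Minimal (fun K => K ∈ gapSets γ) K) {u v : ℝ} (hu : u ∈ K) (hv : v ∈ K) (_ : u < v)
    (h : γ u = γ v) : Ioo u v ∩ K = ∅ := by
  obtain ⟨⟨k1, k2, k3, k4, k5⟩, hmin⟩ := hK
  have h0 := k2 hu
  have h1 := k2 hv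
  have hmem : K \ Ioo u v ∈ gapSets γ := by
    refine ⟨k1.sdiff isOpen_Ioo, sdiff_subset.trans k2, ⟨k3, fun h => absurd h.1 (not_lt.2 h0.1)⟩,
      ⟨k4, fun h => absurd h.2 (not_lt.2 h1.2)⟩, ?_⟩
    rintro u' ⟨hu'K, hu'⟩ v' ⟨hv'K, hv'⟩ huv' hgap
    rw [eq_empty_iff_forall_notMem] at hgap
    simp only [mem_Ioo, not_and_or, not_lt] at hu' hv'
    by_cases hA : v ≤ u' ∨ v' ≤ u
    · refine k5 u' hu'K v' hv'K huv' ?_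
      rw [eq_empty_iff_forall_notMem]
      rintro w ⟨⟨w1, w2⟩, hw⟩
      refine hgap w ⟨⟨w1, w2⟩, hw, fun hw' => ?_⟩
      rcases hA with hA | hA
      · linarith [hw'.2]
      · linarith [hw'.1]
    · push Not at hA
      have hu'2 : u' ≤ u := by
        rcases hu' with h | h
        · exact h
        · linarith [hA.1]
      have hv'2 : v ≤ v' := by
        rcases hv' with h | h
        · linarith [hA.2]
        · exact h
      have e1 : u' = u := by
        by_contra hne
        exact hgap u ⟨⟨lt_of_le_of_ne hu'2 hne, by linarith⟩, hu, fun h => lt_irrefl _ h.1⟩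
      have e2 : v' = v := by
        by_contra hne
        exact hgap v ⟨⟨by linarith, lt_of_le_of_ne hv'2 (Ne.symm hne)⟩, hv,
          fun h => lt_irrefl _ h.2⟩
      rw [e1, e2, h]
  have := hmin hmem sdiff_subset
  rw [eq_empty_iff_forall_notMem]
  rintro w ⟨hw, hwK⟩
  exact (this hwK).2 hw

/-- Every path can be replaced by a path with order-convex fibres. -/
lemma exists_monotone_path {Y : Type*} [MetricSpace Y] {γ : ℝ → Y} (hγ : Continuous γ) :
    ∃ σ : ℝ → Y, Continuous σ ∧ σ 0 = γ 0 ∧ σ 1 = γ 1 ∧ (∀ t, ∃ s ∈ Icc (0:ℝ) 1, σ t = γ s) ∧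
      ∀ u ∈ Icc (0:ℝ) 1, ∀ v ∈ Icc (0:ℝ) 1, σ u = σ v → ∀ w ∈ Icc u v, σ w = σ u := by
  obtain ⟨K, hK⟩ := exists_minimal_gapSet hγ
  have hinj := fun {u v : ℝ} => minimal_gapSet (u := u) (v := v) hK
  obtain ⟨k1, k2, k3, k4, k5⟩ := hK.1
  have hr : ∀ t : ℝ, ∃ r, t ∈ Icc (0:ℝ) 1 → IsGreatest (K ∩ Icc 0 t) r := by
    intro t
    by_cases ht : t ∈ Icc (0:ℝ) 1
    · obtain ⟨r, hr⟩ := (isCompact_Icc.inter_left k1 : IsCompact (K ∩ Icc 0 t)).exists_isGreatest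
        ⟨0, k3, le_rfl, ht.1⟩
      exact ⟨r, fun _ => hr⟩
    · exact ⟨0, fun h => absurd h ht⟩
  choose r hr using hr
  have hrK : ∀ t ∈ Icc (0:ℝ) 1, t ∈ K → r t = t := fun t ht htK =>
    le_antisymm (hr t ht).1.2.2 ((hr t ht).2 ⟨htK, ht.1, le_rfl⟩)
  have hmono : ∀ s ∈ Icc (0:ℝ) 1, ∀ t ∈ Icc (0:ℝ) 1, s ≤ t → r s ≤ r t := fun s hs t ht hst =>
    (hr t ht).2 ⟨(hr s hs).1.1, (hr s hs).1.2.1, (hr s hs).1.2.2.trans hst⟩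
  -- near points have near images
  have hnear : ∀ s ∈ Icc (0:ℝ) 1, ∀ t ∈ Icc (0:ℝ) 1, s ≤ t →
      γ (r s) = γ (r t) ∨ ∃ p ∈ Icc s t, ∃ q ∈ Icc s t, γ (r s) = γ p ∧ γ (r t) = γ q := by
    intro s hs t ht hst
    by_cases hE : ∃ w ∈ K, w ∈ Icc s t
    · obtain ⟨w, hwK, hw⟩ := hE
      have hq : r t ∈ Icc s t := ⟨hw.1.trans ((hr t ht).2 ⟨hwK, hs.1.trans hw.1, hw.2⟩),
        (hr t ht).1.2.2⟩
      by_cases hsK : s ∈ K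
      · exact Or.inr ⟨s, ⟨le_rfl, hst⟩, r t, hq, by rw [hrK s hs hsK], rfl⟩
      · obtain ⟨u', hu', v', hv', h1, h2, h3, h4, h5⟩ := gap_exists k1 k3 hwK hs.1 hw.1 hsK
        have e : γ u' = γ v' := k5 u' hu' v' hv' (by linarith) h5
        have e' : r s = u' := by
          refine le_antisymm ?_ ((hr s hs).2 ⟨hu', h1, h2.le⟩)
          by_contra hlt
          push Not at hlt
          rw [eq_empty_iff_forall_notMem] at h5
          exact h5 (r s) ⟨⟨hlt, lt_of_le_of_lt (hr s hs).1.2.2 h3⟩, (hr s hs).1.1⟩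
        exact Or.inr ⟨v', ⟨h3.le, h4.trans hw.2⟩, r t, hq, by rw [e', e], rfl⟩
    · push Not at hE
      have e : r t = r s := by
        refine le_antisymm ?_ (hmono s hs t ht hst)
        refine (hr s hs).2 ⟨(hr t ht).1.1, (hr t ht).1.2.1, ?_⟩
        by_contra h
        exact hE _ (hr t ht).1.1 ⟨by linarith, (hr t ht).1.2.2⟩
      exact Or.inl (by rw [e])
  have hcont : ContinuousOn (fun t => γ (r t)) (Icc 0 1) := by
    have huc := isCompact_Icc.uniformContinuousOn_of_continuous (hγ.continuousOn (s := Icc 0 1))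
    rw [Metric.uniformContinuousOn_iff] at huc
    rw [Metric.continuousOn_iff]
    intro t ht ε hε
    obtain ⟨δ, hδ, h⟩ := huc ε hε
    refine ⟨δ, hδ, fun s hs hst => ?_⟩
    have key : ∀ a ∈ Icc (0:ℝ) 1, ∀ b ∈ Icc (0:ℝ) 1, a ≤ b → b - a < δ →
        dist (γ (r a)) (γ (r b)) < ε := by
      intro a ha b hb hab hd
      rcases hnear a ha b hb hab with h1 | ⟨p, hp, q, hq, e1, e2⟩
      · rw [h1, dist_self]; exact hε
      · rw [e1, e2]
        refine h p ⟨ha.1.trans hp.1, hp.2.trans hb.2⟩ q ⟨ha.1.trans hq.1, hq.2.trans hb.2⟩ ?_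
        rw [Real.dist_eq, abs_lt]
        constructor <;> linarith [hp.1, hp.2, hq.1, hq.2]
    rw [Real.dist_eq, abs_lt] at hst
    rcases le_total s t with h1 | h1
    · exact key s hs t ht h1 (by linarith)
    · rw [dist_comm]
      exact key t ht s hs h1 (by linarith)
  have hc : ∀ t : ℝ, max 0 (min 1 t) ∈ Icc (0:ℝ) 1 := fun t =>
    ⟨le_max_left _ _, max_le zero_le_one (min_le_left _ _)⟩
  have hc' : ∀ t ∈ Icc (0:ℝ) 1, max 0 (min 1 t) = t := fun t ht => by
    rw [min_eq_right ht.2, max_eq_right ht.1]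
  have z0 : (0:ℝ) ∈ Icc (0:ℝ) 1 := by simp
  have z1 : (1:ℝ) ∈ Icc (0:ℝ) 1 := by simp
  refine ⟨fun t => γ (r (max 0 (min 1 t))), hcont.comp_continuous (by fun_prop) hc, ?_, ?_, ?_, ?_⟩
  · dsimp only
    rw [hc' 0 z0, hrK 0 z0 k3]
  · dsimp only
    rw [hc' 1 z1, hrK 1 z1 k4]
  · intro t
    exact ⟨_, k2 (hr _ (hc t)).1.1, rfl⟩
  · intro u hu v hv huv w hw
    have hwI : w ∈ Icc (0:ℝ) 1 := ⟨hu.1.trans hw.1, hw.2.trans hv.2⟩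
    dsimp only at huv ⊢
    rw [hc' u hu, hc' v hv] at huv
    rw [hc' u hu, hc' w hwI]
    have m1 := hmono u hu w hwI hw.1
    have m2 := hmono w hwI v hv hw.2
    rcases eq_or_lt_of_le m1 with e1 | l1
    · rw [e1]
    rcases eq_or_lt_of_le m2 with e2 | l2
    · rw [e2, huv]
    have hemp := hinj (hr u hu).1.1 (hr v hv).1.1 (l1.trans l2) huv
    rw [eq_empty_iff_forall_notMem] at hemp
    exact absurd ⟨⟨l1, l2⟩, (hr w hwI).1.1⟩ (hemp (r w))

/-- Every path between distinct points contains an arc. -/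
lemma exists_arc {Y : Type*} [MetricSpace Y] [TopologicalSpace.SeparableSpace Y] {γ : ℝ → Y}
    (hγ : Continuous γ) (hne : γ 0 ≠ γ 1) :
    ∃ (A B : ℝ) (β : ℝ → Y), A < B ∧ ContinuousOn β (Icc A B) ∧ InjOn β (Icc A B) ∧
      β A = γ 0 ∧ β B = γ 1 ∧ ∀ t ∈ Icc A B, ∃ s ∈ Icc (0:ℝ) 1, β t = γ s := by
  obtain ⟨σ, hσ, hσ0, hσ1, hσγ, hσc⟩ := exists_monotone_path hγ
  have : Nonempty Y := ⟨γ 0⟩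
  set q := TopologicalSpace.denseSeq Y with hq
  -- distance from `q n` to the initial piece `σ '' [0,t]`
  let F : ℕ → ℝ → ℝ := fun n t => sInf ((fun s => min 1 (dist (q n) (σ (t * s)))) '' Icc 0 1)
  have hFc : ∀ n, Continuous (F n) := by
    intro n
    apply IsCompact.continuous_sInf (K := Icc (0:ℝ) 1)
      (f := fun t s => min 1 (dist (q n) (σ (t * s)))) isCompact_Icc
    simp only [Function.HasUncurry.uncurry, id]
    fun_prop
  have hleast : ∀ n t, IsLeast ((fun s => min 1 (dist (q n) (σ (t * s)))) '' Icc 0 1) (F n t) := by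
    intro n t
    exact (isCompact_Icc.image (by fun_prop)).isLeast_sInf ((nonempty_Icc.2 zero_le_one).image _)
  have hattain : ∀ n, ∀ t ∈ Icc (0:ℝ) 1, ∃ s ∈ Icc 0 t, F n t = min 1 (dist (q n) (σ s)) := by
    intro n t ht
    obtain ⟨s, hs, h⟩ := (hleast n t).1
    exact ⟨t * s, ⟨mul_nonneg ht.1 hs.1, mul_le_of_le_one_right ht.1 hs.2⟩, h.symm⟩
  have hle : ∀ n, ∀ t ∈ Icc (0:ℝ) 1, ∀ s ∈ Icc 0 t, F n t ≤ min 1 (dist (q n) (σ s)) := by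
    intro n t ht s hs
    refine (hleast n t).2 ⟨s / t, ⟨div_nonneg hs.1 ht.1, div_le_one_of_le₀ hs.2 ht.1⟩, ?_⟩
    by_cases h0 : t = 0
    · subst h0
      have : s = 0 := le_antisymm hs.2 hs.1
      subst this
      simp
    · dsimp only
      rw [mul_div_cancel₀ _ h0]
  have hF01 : ∀ n t, ‖F n t‖ ≤ 1 := by
    intro n t
    obtain ⟨s, hs, h⟩ := (hleast n t).1
    rw [← h, Real.norm_eq_abs, abs_of_nonneg (le_min zero_le_one dist_nonneg)]
    exact min_le_left _ _
  have hanti : ∀ n, ∀ s ∈ Icc (0:ℝ) 1, ∀ t ∈ Icc (0:ℝ) 1, s ≤ t → F n t ≤ F n s := by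
    intro n s hs t ht hst
    obtain ⟨p, hp, h⟩ := hattain n s hs
    rw [h]
    exact hle n t ht p ⟨hp.1, hp.2.trans hst⟩
  let h : ℝ → ℝ := fun t => ∑' n : ℕ, -((1 / 2) ^ n * F n t)
  have hbound : ∀ n t, ‖-((1 / 2 : ℝ) ^ n * F n t)‖ ≤ (1 / 2) ^ n := by
    intro n t
    rw [norm_neg, norm_mul, norm_pow, norm_div, norm_one, Real.norm_ofNat]
    exact mul_le_of_le_one_right (by positivity) (hF01 n t)
  have hgeo : Summable fun n : ℕ => (1 / 2 : ℝ) ^ n := summable_geometric_two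
  have hsum : ∀ t, Summable fun n : ℕ => -((1 / 2 : ℝ) ^ n * F n t) := fun t =>
    hgeo.of_norm_bounded (fun n => hbound n t)
  have hhc : Continuous h := continuous_tsum (fun n => by have := hFc n; fun_prop) hgeo hbound
  have hstrict : ∀ s ∈ Icc (0:ℝ) 1, ∀ t ∈ Icc (0:ℝ) 1, s < t → σ s ≠ σ t → h s < h t := by
    intro s hs t ht hst hne
    have hnotin : ∀ p ∈ Icc 0 s, σ p ≠ σ t := by
      intro p hp e
      have hpI : p ∈ Icc (0:ℝ) 1 := ⟨hp.1, hp.2.trans hs.2⟩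
      exact hne ((hσc p hpI t ht e s ⟨hp.2, hst.le⟩).trans e)
    have hcl : IsClosed (σ '' Icc 0 s) := (isCompact_Icc.image hσ).isClosed
    have hopen := hcl.isOpen_compl
    have hmem : σ t ∈ (σ '' Icc 0 s)ᶜ := by
      rintro ⟨p, hp, e⟩
      exact hnotin p hp e
    obtain ⟨ε, hε, hball⟩ := Metric.isOpen_iff.1 hopen _ hmem
    set ε' := min ε 1 with hε'
    have hε'0 : 0 < ε' := lt_min hε one_pos
    obtain ⟨n, hn⟩ := (TopologicalSpace.denseRange_denseSeq Y).exists_dist_lt (σ t)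
      (show 0 < ε' / 2 by positivity)
    have hFt : F n t < ε' / 2 := by
      refine (hle n t ht t ⟨ht.1, le_rfl⟩).trans_lt ((min_le_right _ _).trans_lt ?_)
      rw [dist_comm]
      exact hn
    have hFs : ε' / 2 ≤ F n s := by
      obtain ⟨p, hp, e⟩ := hattain n s hs
      rw [e]
      refine le_min (by linarith [min_le_right ε 1]) ?_
      by_contra hlt
      push Not at hlt
      have hd := dist_triangle_left (σ p) (σ t) (q n)
      rw [dist_comm (σ t)] at hn
      have : σ p ∈ Metric.ball (σ t) ε := by
        rw [Metric.mem_ball]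
        have := min_le_left ε 1
        linarith
      exact hball this ⟨p, hp, rfl⟩
    refine Summable.tsum_lt_tsum (i := n) ?_ ?_ (hsum s) (hsum t)
    · intro m
      have := hanti m s hs t ht hst.le
      have h2 : (0:ℝ) < (1 / 2) ^ m := by positivity
      dsimp only
      nlinarith
    · have h2 : (0:ℝ) < (1 / 2) ^ n := by positivity
      nlinarith
  have hconst : ∀ s ∈ Icc (0:ℝ) 1, ∀ t ∈ Icc (0:ℝ) 1, s ≤ t → σ s = σ t → h s = h t := by
    intro s hs t ht hst e
    have : ∀ n, F n s = F n t := by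
      intro n
      refine le_antisymm ?_ (hanti n s hs t ht hst)
      obtain ⟨p, hp, e'⟩ := hattain n t ht
      rw [e']
      rcases le_total p s with hps | hps
      · exact hle n s hs p ⟨hp.1, hps⟩
      · rw [hσc s hs t ht e p ⟨hps, hp.2⟩]
        exact hle n s hs s ⟨hs.1, le_rfl⟩
    simp only [h, this]
  have hiff : ∀ s ∈ Icc (0:ℝ) 1, ∀ t ∈ Icc (0:ℝ) 1, (h s = h t ↔ σ s = σ t) := by
    have key : ∀ s ∈ Icc (0:ℝ) 1, ∀ t ∈ Icc (0:ℝ) 1, s ≤ t → (h s = h t ↔ σ s = σ t) := by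
      intro s hs t ht hst
      refine ⟨fun e => ?_, hconst s hs t ht hst⟩
      by_contra hne
      have hlt : s < t := lt_of_le_of_ne hst fun h' => hne (by rw [h'])
      exact (hstrict s hs t ht hlt hne).ne e
    intro s hs t ht
    rcases le_total s t with hst | hst
    · exact key s hs t ht hst
    · rw [eq_comm, key t ht s hs hst, eq_comm]
  have hmono : ∀ s ∈ Icc (0:ℝ) 1, ∀ t ∈ Icc (0:ℝ) 1, s ≤ t → h s ≤ h t := by
    intro s hs t ht hst
    by_cases e : σ s = σ t
    · exact (hconst s hs t ht hst e).le
    · exact (hstrict s hs t ht (lt_of_le_of_ne hst fun h' => e (by rw [h'])) e).le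
  have z0 : (0:ℝ) ∈ Icc (0:ℝ) 1 := by simp
  have z1 : (1:ℝ) ∈ Icc (0:ℝ) 1 := by simp
  have hAB : h 0 < h 1 := hstrict 0 z0 1 z1 one_pos (by rw [hσ0, hσ1]; exact hne)
  have hsurj : ∀ v, ∃ t, v ∈ Icc (h 0) (h 1) → t ∈ Icc (0:ℝ) 1 ∧ h t = v := by
    intro v
    by_cases hv : v ∈ Icc (h 0) (h 1)
    · obtain ⟨t, ht, e⟩ := intermediate_value_Icc zero_le_one hhc.continuousOn hv
      exact ⟨t, fun _ => ⟨ht, e⟩⟩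
    · exact ⟨0, fun h' => absurd h' hv⟩
  choose g hg using hsurj
  have hβ : ∀ t ∈ Icc (0:ℝ) 1, σ (g (h t)) = σ t := by
    intro t ht
    have hm : h t ∈ Icc (h 0) (h 1) := ⟨hmono 0 z0 t ht ht.1, hmono t ht 1 z1 ht.2⟩
    obtain ⟨a1, a2⟩ := hg _ hm
    exact (hiff _ a1 t ht).1 a2
  refine ⟨h 0, h 1, fun v => σ (g v), hAB, ?_, ?_, ?_, ?_, ?_⟩
  · rw [continuousOn_iff_isClosed]
    intro C hC
    refine ⟨h '' (σ ⁻¹' C ∩ Icc 0 1), ?_, ?_⟩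
    · exact ((isCompact_Icc.inter_left (hC.preimage hσ)).image hhc).isClosed
    · ext v
      constructor
      · rintro ⟨h1, h2⟩
        obtain ⟨a1, a2⟩ := hg v h2
        exact ⟨⟨g v, ⟨h1, a1⟩, a2⟩, h2⟩
      · rintro ⟨⟨t, ⟨h1, h2⟩, rfl⟩, h3⟩
        refine ⟨?_, h3⟩
        show σ (g (h t)) ∈ C
        rw [hβ t h2]
        exact h1
  · intro u hu v hv e
    obtain ⟨a1, a2⟩ := hg u hu
    obtain ⟨b1, b2⟩ := hg v hv
    rw [← a2, ← b2]
    exact (hiff _ a1 _ b1).2 e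
  · exact (hβ 0 z0).trans hσ0
  · exact (hβ 1 z1).trans hσ1
  · intro t _
    exact hσγ _

end PlaneSep
namespace PlaneSep
open Set Filter Topology

/-- If there is no logarithm, some path in the graph cover has distinct endpoints over the
same point. -/
lemma exists_lifted_loop {X : Type*} [MetricSpace X] [CompactSpace X] [ConnectedSpace X]
    [LocallyConnectedSpace X] (f : X → ℂ) (hf : Continuous f) (hne : ∀ x, f x ≠ 0)
    (hlog : ¬ ∃ L : X → ℂ, Continuous L ∧ ∀ x, Complex.exp (L x) = f x) :
    ∃ (x : X) (w w' : ℂ), w ≠ w' ∧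
      JoinedIn {p : X × ℂ | Complex.exp p.2 = f p.1} (x, w) (x, w') := by
  set E : Set (X × ℂ) := {p : X × ℂ | Complex.exp p.2 = f p.1} with hE
  by_contra hcon
  push Not at hcon
  have huniq : ∀ (x : X) (w w' : ℂ), JoinedIn E (x, w) (x, w') → w = w' := by
    intro x w w' h
    by_contra hw
    exact hcon x w w' hw h
  -- local sections
  have hloc : ∀ x : X, ∃ ℓ : X → ℂ, ContinuousAt ℓ x ∧ ℓ x = 0 ∧ ∀ᶠ y in 𝓝 x,
      Complex.exp (ℓ y) = f y / f x ∧
      ∀ w, Complex.exp w = f x → JoinedIn E (x, w) (y, w + ℓ y) := by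
    intro x
    have h1 : ∀ᶠ y in 𝓝 x, ‖f y / f x - 1‖ < 1 := by
      have : Continuous fun y => ‖f y / f x - 1‖ := by fun_prop
      refine this.continuousAt.eventually_lt continuousAt_const ?_
      simp [div_self (hne x)]
    obtain ⟨ε, hε, hball⟩ := Metric.eventually_nhds_iff_ball.1 h1
    obtain ⟨δ, hδ, hpath⟩ := exists_path_small (X := X) hε
    have hℓ : ContinuousOn (fun y => Complex.log (f y / f x)) (Metric.ball x ε) := by
      apply ContinuousOn.clog
      · fun_prop
      · intro y hy
        exact mem_slit (hball y hy)
    have hexp : ∀ y, Complex.exp (Complex.log (f y / f x)) = f y / f x := fun y =>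
      Complex.exp_log (div_ne_zero (hne _) (hne _))
    refine ⟨fun y => Complex.log (f y / f x), hℓ.continuousAt (Metric.ball_mem_nhds x hε),
      by simp [div_self (hne x)], ?_⟩
    filter_upwards [Metric.ball_mem_nhds x hδ] with y hy
    refine ⟨hexp y, fun w hw => ?_⟩
    have hj := hpath x y (by rw [dist_comm]; exact hy)
    have hj2 := hj.map_continuousOn (f := fun y => (y, w + Complex.log (f y / f x)))
      (continuousOn_id.prodMk (continuousOn_const.add hℓ))
    have hj3 : JoinedIn E (x, w + Complex.log (f x / f x)) (y, w + Complex.log (f y / f x)) := by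
      refine hj2.mono ?_
      rintro _ ⟨z, hz, rfl⟩
      show Complex.exp (w + Complex.log (f z / f x)) = f z
      rw [Complex.exp_add, hexp, hw]
      have := hne x
      field_simp
    simpa [div_self (hne x)] using hj3
  obtain ⟨x0⟩ := (inferInstance : Nonempty X)
  set w0 := Complex.log (f x0) with hw0
  have hE0 : ((x0, w0) : X × ℂ) ∈ E := Complex.exp_log (hne x0)
  have hall : {x : X | ∃ w, JoinedIn E (x0, w0) (x, w)} = univ := by
    refine IsClopen.eq_univ ⟨?_, ?_⟩ ⟨x0, w0, JoinedIn.refl hE0⟩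
    · rw [← isOpen_compl_iff, isOpen_iff_mem_nhds]
      intro x hx
      obtain ⟨ℓ, -, -, h⟩ := hloc x
      filter_upwards [h] with y hy
      rintro ⟨w, hw⟩
      apply hx
      have hwE : Complex.exp w = f y := hw.target_mem
      refine ⟨w - ℓ y, hw.trans ?_⟩
      have := hy.2 (w - ℓ y) (by
        rw [Complex.exp_sub, hwE, hy.1]
        have := hne x
        have := hne y
        field_simp)
      simpa using this.symm
    · rw [isOpen_iff_mem_nhds]
      rintro x ⟨w, hw⟩
      obtain ⟨ℓ, -, -, h⟩ := hloc x
      filter_upwards [h] with y hy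
      exact ⟨_, hw.trans (hy.2 w hw.target_mem)⟩
  have hall' : ∀ x, ∃ w, JoinedIn E (x0, w0) (x, w) := fun x => by
    have : x ∈ {x : X | ∃ w, JoinedIn E (x0, w0) (x, w)} := by rw [hall]; trivial
    exact this
  choose L hL using hall'
  refine hlog ⟨L, ?_, fun x => (hL x).target_mem⟩
  rw [continuous_iff_continuousAt]
  intro x
  obtain ⟨ℓ, hc, h0, h⟩ := hloc x
  have heq : ∀ᶠ y in 𝓝 x, L x + ℓ y = L y := by
    filter_upwards [h] with y hy
    exact huniq y _ _ ((hy.2 (L x) (hL x).target_mem).symm.trans ((hL x).symm.trans (hL y)))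
  refine ContinuousAt.congr ?_ heq
  exact continuousAt_const.add hc

lemma sphere_homeo :
    Nonempty (Circle ≃ₜ ↥(Metric.sphere (0 : EuclideanSpace ℝ (Fin 2)) 1)) := by
  let e : ℂ ≃ₗᵢ[ℝ] EuclideanSpace ℝ (Fin 2) := Complex.orthonormalBasisOneI.repr
  refine ⟨⟨⟨fun z => ⟨e z, by
    rw [mem_sphere_zero_iff_norm, e.norm_map]; exact Circle.norm_coe z⟩, fun z => ⟨e.symm z, ?_⟩, ?_, ?_⟩, ?_, ?_⟩⟩
  · have := z.2
    rw [mem_sphere_zero_iff_norm] at this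
    show e.symm z ∈ Metric.sphere (0:ℂ) 1
    simp [this]
  · intro z
    ext
    simp
  · intro z
    apply Subtype.ext
    simp
  · exact Continuous.subtype_mk (e.continuous.comp continuous_subtype_val) _
  · exact Continuous.subtype_mk (e.symm.continuous.comp continuous_subtype_val) _

lemma simpleClosedCurve_of_loop {X : Type*} [TopologicalSpace X] [T2Space X] {p : ℝ → X}
    {s t : ℝ} (hst : s < t) (hp : ContinuousOn p (Icc s t)) (hpe : p s = p t)
    (hinj : ∀ u ∈ Icc s t, ∀ v ∈ Icc s t, u < v → p u = p v → u = s ∧ v = t) :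
    IsSimpleClosedCurve (p '' Icc s t) := by
  have : Fact (0 < t - s) := ⟨by linarith⟩
  have hs : s + (t - s) = t := by ring
  set F : AddCircle (t - s) → X := AddCircle.liftIco (t - s) s p with hF
  have hFc : Continuous F := AddCircle.liftIco_continuous (by rw [hs, hpe]) (by rwa [hs])
  have hco : ∀ x ∈ Ico s t, F (x : AddCircle (t - s)) = p x := fun x hx =>
    AddCircle.liftIco_coe_apply (by rwa [hs])
  have hrep : ∀ y : AddCircle (t - s), ∃ x ∈ Ico s t, (x : AddCircle (t - s)) = y := by
    intro y
    have := AddCircle.coe_image_Ico_eq (t - s) s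
    have hy : y ∈ ((↑) : ℝ → AddCircle (t - s)) '' Ico s (s + (t - s)) := by rw [this]; trivial
    rwa [hs] at hy
  have hFi : Function.Injective F := by
    intro y y' e
    obtain ⟨x, hx, rfl⟩ := hrep y
    obtain ⟨x', hx', rfl⟩ := hrep y'
    rw [hco x hx, hco x' hx'] at e
    rcases lt_trichotomy x x' with h | h | h
    · have := (hinj x ⟨hx.1, hx.2.le⟩ x' ⟨hx'.1, hx'.2.le⟩ h e).2
      exact absurd this hx'.2.ne
    · rw [h]
    · have := (hinj x' ⟨hx'.1, hx'.2.le⟩ x ⟨hx.1, hx.2.le⟩ h e.symm).2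
      exact absurd this hx.2.ne
  have hr : range F = p '' Icc s t := by
    ext z
    constructor
    · rintro ⟨y, rfl⟩
      obtain ⟨x, hx, rfl⟩ := hrep y
      exact ⟨x, ⟨hx.1, hx.2.le⟩, (hco x hx).symm⟩
    · rintro ⟨x, hx, rfl⟩
      rcases eq_or_lt_of_le hx.2 with h | h
      · exact ⟨(s : AddCircle (t - s)), by rw [hco s ⟨le_rfl, hst⟩, hpe, h]⟩
      · exact ⟨(x : AddCircle (t - s)), hco x ⟨hx.1, h⟩⟩
  obtain ⟨e⟩ := sphere_homeo
  have hemb := (hFc.isClosedEmbedding hFi).isEmbedding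
  rw [← hr]
  exact ⟨hemb.toHomeomorph.symm.trans
    ((AddCircle.homeomorphCircle (by linarith : t - s ≠ 0)).trans e)⟩

/-- The core result. -/
lemma exists_scc {X : Type*} [MetricSpace X] [CompactSpace X] [ConnectedSpace X]
    [LocallyConnectedSpace X] (f : X → ℂ) (hf : Continuous f) (hne : ∀ x, f x ≠ 0)
    (hlog : ¬ ∃ L : X → ℂ, Continuous L ∧ ∀ x, Complex.exp (L x) = f x) :
    ∃ S : Set X, IsSimpleClosedCurve S ∧
      ¬ ∃ L : S → ℂ, Continuous L ∧ ∀ x : S, Complex.exp (L x) = f x := by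
  obtain ⟨x, w, w', hw, hj⟩ := exists_lifted_loop f hf hne hlog
  obtain ⟨γ, hγ⟩ := hj
  have hwx : γ.extend 0 ≠ γ.extend 1 := by
    rw [γ.extend_zero, γ.extend_one]
    intro h
    exact hw (Prod.ext_iff.1 h).2
  obtain ⟨A, B, β, hAB, hβc, hβi, hβA, hβB, hβγ⟩ := exists_arc γ.continuous_extend hwx
  rw [γ.extend_zero] at hβA
  rw [γ.extend_one] at hβB
  have hβE : ∀ t ∈ Icc A B, Complex.exp (β t).2 = f (β t).1 := by
    intro t ht
    obtain ⟨s, hs, e⟩ := hβγ t ht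
    rw [e, γ.extend_apply hs]
    exact hγ _
  have hcp : ContinuousOn (fun t => (β t).1) (Icc A B) := continuous_fst.comp_continuousOn hβc
  have hcw : ContinuousOn (fun t => (β t).2) (Icc A B) := continuous_snd.comp_continuousOn hβc
  -- pairs
  let Q : Set (Icc A B × Icc A B) := {z | (z.1 : ℝ) ≤ z.2 ∧ (β z.1).1 = (β z.2).1 ∧
    1 ≤ ‖(β z.1).2 - (β z.2).2‖}
  have hcp' : Continuous fun t : Icc A B => (β t).1 := continuousOn_iff_continuous_domRestrict.1 hcp
  have hcw' : Continuous fun t : Icc A B => (β t).2 := continuousOn_iff_continuous_domRestrict.1 hcw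
  have hQc : IsCompact Q := by
    apply IsClosed.isCompact
    have c1 : Continuous fun z : Icc A B × Icc A B => (β z.1).1 := hcp'.comp continuous_fst
    have c2 : Continuous fun z : Icc A B × Icc A B => (β z.2).1 := hcp'.comp continuous_snd
    have c3 : Continuous fun z : Icc A B × Icc A B => (β z.1).2 := hcw'.comp continuous_fst
    have c4 : Continuous fun z : Icc A B × Icc A B => (β z.2).2 := hcw'.comp continuous_snd
    have c5 : Continuous fun z : Icc A B × Icc A B => (z.1 : ℝ) := by fun_prop
    have c6 : Continuous fun z : Icc A B × Icc A B => (z.2 : ℝ) := by fun_prop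
    exact (isClosed_le c5 c6).inter
      ((isClosed_eq c1 c2).inter (isClosed_le continuous_const (c3.sub c4).norm))
  have mA : A ∈ Icc A B := ⟨le_rfl, hAB.le⟩
  have mB : B ∈ Icc A B := ⟨hAB.le, le_rfl⟩
  have hQne : Q.Nonempty := by
    refine ⟨(⟨A, mA⟩, ⟨B, mB⟩), hAB.le, by simp [hβA, hβB], ?_⟩
    refine exp_ne_norm ?_ ?_
    · rw [hβE A mA, hβE B mB, hβA, hβB]
    · simp only [hβA, hβB]; exact hw
  obtain ⟨⟨⟨s, hs⟩, ⟨t, ht⟩⟩, ⟨hst, hpe, hwne⟩, hmin⟩ := hQc.exists_isMinOn hQne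
    (f := fun z => (z.2 : ℝ) - z.1) (by fun_prop)
  simp only at hst hpe hwne
  have hwne' : (β s).2 ≠ (β t).2 := by
    intro h
    rw [h] at hwne
    simp at hwne
    linarith
  have hst' : s < t := lt_of_le_of_ne hst fun h => hwne' (by rw [h])
  have hsub : Icc s t ⊆ Icc A B := Icc_subset_Icc hs.1 ht.2
  refine ⟨(fun t => (β t).1) '' Icc s t, simpleClosedCurve_of_loop hst' (hcp.mono hsub) hpe ?_, ?_⟩
  · intro u hu v hv huv e
    have hmem : ((⟨u, hsub hu⟩, ⟨v, hsub hv⟩) : Icc A B × Icc A B) ∈ Q := by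
      refine ⟨huv.le, e, exp_ne_norm ?_ ?_⟩
      · rw [hβE u (hsub hu), hβE v (hsub hv), e]
      · intro e2
        exact huv.ne (hβi (hsub hu) (hsub hv) (Prod.ext e e2))
    have := hmin hmem
    simp only [mem_ofPred_eq] at this
    constructor <;> linarith [hu.1, hu.2, hv.1, hv.2]
  · rintro ⟨L, hL, hL'⟩
    have : PreconnectedSpace (Icc s t) :=
      isPreconnected_iff_preconnectedSpace.1 isPreconnected_Icc
    have hm : ∀ u : Icc s t, (β u).1 ∈ (fun t => (β t).1) '' Icc s t := fun u => ⟨u, u.2, rfl⟩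
    have hcs : Continuous fun u : Icc s t => (β u).1 :=
      continuousOn_iff_continuous_domRestrict.1 (hcp.mono hsub)
    have hcs2 : Continuous fun u : Icc s t => (β u).2 :=
      continuousOn_iff_continuous_domRestrict.1 (hcw.mono hsub)
    have := log_unique (T := Icc s t) (u := fun u => L ⟨(β u).1, hm u⟩) (v := fun u => (β u).2)
      (hL.comp (hcs.subtype_mk _)) hcs2 (fun u => by
        rw [hL', hβE u (hsub u.2)]) ⟨s, le_rfl, hst⟩ ⟨t, hst, le_rfl⟩
    simp only [hpe] at this
    exact hwne' (sub_right_injective this)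

/-- The theorem for subsets of the complex plane. -/
lemma main_complex (X : Set ℂ) (hcomp : IsCompact X) (hconn : IsConnected X)
    (hlc : LocallyConnectedSpace ↥X) (a b : ℂ) (ha : a ∈ Xᶜ) (hb : b ∈ Xᶜ)
    (hsep : connectedComponentIn Xᶜ a ≠ connectedComponentIn Xᶜ b) :
    ∃ S : Set ℂ, S ⊆ X ∧ IsSimpleClosedCurve S ∧
      connectedComponentIn Sᶜ a ≠ connectedComponentIn Sᶜ b := by
  have : CompactSpace X := isCompact_iff_compactSpace.1 hcomp
  have : ConnectedSpace X := isConnected_iff_connectedSpace.1 hconn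
  have hza : ∀ x : X, (x : ℂ) - a ≠ 0 := fun x => sub_ne_zero.2 fun h => ha (h ▸ x.2)
  have hzb : ∀ x : X, (x : ℂ) - b ≠ 0 := fun x => sub_ne_zero.2 fun h => hb (h ▸ x.2)
  obtain ⟨S, ⟨hS⟩, hS'⟩ := exists_scc (X := X) (fun x => ((x : ℂ) - a) / (x - b))
    (Continuous.div (by fun_prop) (by fun_prop) hzb) (fun x => div_ne_zero (hza x) (hzb x)) (by
      rintro ⟨L, hL, hL'⟩
      exact no_log_of_separates hcomp ha hb hsep L hL hL')
  have hsub : Subtype.val '' S ⊆ X := by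
    rintro _ ⟨x, -, rfl⟩
    exact x.2
  have e : S ≃ₜ (Subtype.val '' S : Set ℂ) :=
    (Topology.IsEmbedding.subtypeVal (p := fun x => x ∈ X)).homeomorphImage S
  have hScomp : IsCompact (Subtype.val '' S : Set ℂ) := by
    have : CompactSpace S := hS.symm.compactSpace
    exact (isCompact_iff_compactSpace.2 this).image continuous_subtype_val
  refine ⟨Subtype.val '' S, hsub, ⟨e.symm.trans hS⟩, fun h => ?_⟩
  obtain ⟨L, hL, hL'⟩ := log_of_same_component hScomp (fun h => ha (hsub h)) h
    (fun h => hb (hsub h))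
  refine hS' ⟨fun x => L ⟨x, ⟨x, x.2, rfl⟩⟩, hL.comp (by fun_prop), fun x => ?_⟩
  rw [hL']

end PlaneSep

/-- If a locally connected plane continuum separates the plane between two points, then it
contains a simple closed curve separating the plane between those points. -/
theorem stmt_8 (X : Set (EuclideanSpace ℝ (Fin 2)))
    (hcomp : IsCompact X) (hconn : IsConnected X)
    (hlc : LocallyConnectedSpace ↥X)
    (a b : EuclideanSpace ℝ (Fin 2)) (ha : a ∈ Xᶜ) (hb : b ∈ Xᶜ)
    (hsep : connectedComponentIn Xᶜ a ≠ connectedComponentIn Xᶜ b) :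
    ∃ S : Set (EuclideanSpace ℝ (Fin 2)), S ⊆ X ∧ IsSimpleClosedCurve S ∧
      connectedComponentIn Sᶜ a ≠ connectedComponentIn Sᶜ b := by
  let e : EuclideanSpace ℝ (Fin 2) ≃ₜ ℂ := Complex.orthonormalBasisOneI.repr.symm.toHomeomorph
  have hlc' : LocallyConnectedSpace ↥(e '' X) :=
    (e.image X).symm.isOpenEmbedding.locallyConnectedSpace
  have hcc : ∀ (S : Set (EuclideanSpace ℝ (Fin 2))) (z), z ∈ Sᶜ →
      e '' connectedComponentIn Sᶜ z = connectedComponentIn (e '' S)ᶜ (e z) := by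
    intro S z hz
    rw [e.image_connectedComponentIn hz, Set.image_compl_eq e.bijective]
  have hmem : ∀ z, z ∈ Xᶜ → e z ∈ (e '' X)ᶜ := by
    rintro z hz ⟨y, hy, h⟩
    exact hz (e.injective h ▸ hy)
  obtain ⟨S, hSX, ⟨hS⟩, hsepS⟩ := PlaneSep.main_complex (e '' X) (hcomp.image e.continuous)
    (hconn.image e e.continuous.continuousOn) hlc' (e a) (e b) (hmem a ha) (hmem b hb) (by
      rw [← hcc X a ha, ← hcc X b hb]
      exact fun h => hsep (e.injective.image_injective h))
  have hS2 : e '' (e.symm '' S) = S := by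
    rw [Set.image_image]; simp
  refine ⟨e.symm '' S, ?_, ⟨(e.symm.image S).symm.trans hS⟩, fun h => hsepS ?_⟩
  · rintro _ ⟨y, hy, rfl⟩
    obtain ⟨x, hx, rfl⟩ := hSX hy
    simpa using hx
  · have hm : ∀ z, z ∈ Xᶜ → z ∈ (e.symm '' S)ᶜ := by
      rintro z hz ⟨y, hy, rfl⟩
      obtain ⟨x, hx, rfl⟩ := hSX hy
      exact hz (by simpa using hx)
    have h1 := hcc _ a (hm a ha)
    have h2 := hcc _ b (hm b hb)
    rw [hS2] at h1 h2
    rw [← h1, ← h2, h]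
end
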